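/- arXiv:1108.1247 — 4 statements merged into one kernel-verified Lean document; each statement's English description precedes it below -/
import Mathlib

section
/- Let k and t be positive integers with k ≥ 3. There exists n₀ = n₀(k,t) such that for all integers n ≥ n₀, the maximum number of edges in a k-uniform hypergraph on n vertices containing no k-uniform loose path of length 2t+1 equals C(n−1,k−1) + C(n−2,k−1) + … + C(n−t,k−1); moreover, a family F ⊆ binom([n],k) with no loose path of length 2t+1 attains this maximum size if and only if there exists a set S ⊆ [n] with |S| = t such that F consists of exactly all k-subsets of [n] that intersect S. -/
open Finset

/-- The family `F` of k-sets contains a k-uniform loose path of length ℓ: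
distinct members `P 0, …, P (ℓ-1)` where `P i` and `P j` (i < j) intersect
iff j = i + 1. -/
def ContainsLoosePath (k ℓ : ℕ) {n : ℕ} (F : Finset (Finset (Fin n))) : Prop :=
  ∃ P : Fin ℓ → Finset (Fin n), Function.Injective P ∧
    (∀ i, P i ∈ F) ∧ (∀ i, (P i).card = k) ∧
    (∀ i j : Fin ℓ, i < j → ((P i ∩ P j).Nonempty ↔ (i : ℕ) + 1 = (j : ℕ)))

def HasPath {n : ℕ} (F : Finset (Finset (Fin n))) (ℓ : ℕ) : Prop :=
  ∃ P : ℕ → Finset (Fin n), (∀ i, i < ℓ → P i ∈ F) ∧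
    ∀ i j, i < j → j < ℓ → ((P i ∩ P j).Nonempty ↔ i + 1 = j)

lemma HasPath.mono {n ℓ : ℕ} {F G : Finset (Finset (Fin n))} (h : F ⊆ G)
    (hp : HasPath F ℓ) : HasPath G ℓ := by
  obtain ⟨P, h1, h2⟩ := hp
  exact ⟨P, fun i hi => h (h1 i hi), h2⟩

lemma HasPath.contains {n ℓ k : ℕ} {F : Finset (Finset (Fin n))}
    (hF : ∀ A ∈ F, A.card = k) (hk : 1 ≤ k) (hl : 3 ≤ ℓ)
    (hp : HasPath F ℓ) : ContainsLoosePath k ℓ F := by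
  obtain ⟨P, h1, h2⟩ := hp
  have key : ∀ i j, i < j → j < ℓ → P i ≠ P j := by
    intro i j hij hj he
    have hne : (P i).Nonempty := by
      rw [← card_pos, hF _ (h1 i (by omega))]; omega
    have h3 : i + 1 = j := (h2 i j hij hj).1 (by rw [← he, inter_self]; exact hne)
    by_cases hj1 : j + 1 < ℓ
    · have h4 := (h2 j (j+1) (by omega) hj1).2 rfl
      rw [← he] at h4
      have := (h2 i (j+1) (by omega) hj1).1 h4
      omega
    · have h4 := (h2 (i-1) i (by omega) (by omega)).2 (by omega)
      rw [he] at h4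
      have := (h2 (i-1) j (by omega) (by omega)).1 h4
      omega
  refine ⟨fun i => P i, ?_, fun i => h1 i i.2, fun i => hF _ (h1 i i.2), ?_⟩
  · intro i j hij
    by_contra hne
    rcases lt_or_gt_of_ne hne with h | h
    · exact key i j h j.2 hij
    · exact key j i h i.2 hij.symm
  · intro i j hij
    exact h2 i j hij j.2

/-- greedy construction -/
lemma greedy {n ℓ k : ℕ} {F : Finset (Finset (Fin n))} (hF : ∀ A ∈ F, A.card = k)
    (Good : Finset (Fin n) → Fin n → Prop)
    (h0 : ∃ A ∈ F, ∃ v ∈ A, Good ∅ v)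
    (step : ∀ W' W v, W' ⊆ W → W.card ≤ ℓ * k → v ∉ W' → Good W' v →
      ∃ A ∈ F, v ∈ A ∧ Disjoint A W' ∧ ∃ v' ∈ A, v' ∉ W ∧ Good W v') :
    HasPath F ℓ := by
  have main : ∀ i, i < ℓ → ∃ P : ℕ → Finset (Fin n), (∀ j, j ≤ i → P j ∈ F) ∧
      (∀ j m, j < m → m ≤ i → ((P j ∩ P m).Nonempty ↔ j + 1 = m)) ∧
      ∃ v ∈ P i, v ∉ (range i).biUnion P ∧ Good ((range i).biUnion P) v := by
    intro i
    induction i with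
    | zero =>
      intro _
      obtain ⟨A, hA, v, hv, hg⟩ := h0
      refine ⟨fun _ => A, fun _ _ => hA, ?_, v, hv, by simp, by simpa using hg⟩
      intro j m h1 h2; omega
    | succ i ih =>
      intro hi
      obtain ⟨P, h1, h2, v, hv, hvn, hg⟩ := ih (by omega)
      have hW : ((range (i+1)).biUnion P).card ≤ ℓ * k := by
        calc ((range (i+1)).biUnion P).card ≤ ∑ j ∈ range (i+1), (P j).card := card_biUnion_le
          _ = ∑ j ∈ range (i+1), k := by
            apply sum_congr rfl
            intro j hj
            rw [mem_range] at hj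
            exact hF _ (h1 j (by omega))
          _ = (i+1) * k := by simp
          _ ≤ ℓ * k := by gcongr
      obtain ⟨A, hA, hvA, hd, v', hv', hv'n, hg'⟩ := step ((range i).biUnion P)
        ((range (i+1)).biUnion P) v
        (biUnion_subset_biUnion_of_subset_left _ (by simp [range_subset_range])) hW hvn hg
      have hb : ∀ m, m ≤ i + 1 →
          (range m).biUnion (Function.update P (i+1) A) = (range m).biUnion P := by
        intro m hm
        apply biUnion_congr rfl
        intro j hj
        rw [mem_range] at hj
        rw [Function.update_of_ne (by omega)]
      refine ⟨Function.update P (i+1) A, ?_, ?_, v', ?_, ?_, ?_⟩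
      · intro j hj
        by_cases h : j = i + 1
        · subst h; simpa using hA
        · rw [Function.update_of_ne h]; exact h1 j (by omega)
      · intro j m hjm hm
        by_cases h : m = i + 1
        · subst h
          rw [Function.update_self, Function.update_of_ne (by omega)]
          by_cases h' : j = i
          · subst h'
            simp only [iff_true]
            exact ⟨v, mem_inter.2 ⟨hv, hvA⟩⟩
          · constructor
            · rintro ⟨y, hy⟩
              rw [mem_inter] at hy
              exact absurd (mem_biUnion.2 ⟨j, mem_range.2 (by omega), hy.1⟩)
                (disjoint_left.1 hd hy.2)
            · intro; omega
        · rw [Function.update_of_ne h, Function.update_of_ne (by omega)]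
          exact h2 j m hjm (by omega)
      · simpa using hv'
      · rw [hb _ le_rfl]; exact hv'n
      · rw [hb _ le_rfl]; exact hg'
  rcases Nat.eq_zero_or_pos ℓ with h | h
  · subst h
    exact ⟨fun _ => ∅, by simp, by simp⟩
  · obtain ⟨P, h1, h2, -⟩ := main (ℓ - 1) (by omega)
    exact ⟨P, fun i hi => h1 i (by omega), fun i j hij hj => h2 i j hij (by omega)⟩

/-- full families contain long paths -/
lemma full_path {n ℓ k : ℕ} {G : Finset (Finset (Fin n))} (hG : ∀ A ∈ G, A.card = k)
    (hk : 2 ≤ k) (hne : G.Nonempty)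
    (full : ∀ A ∈ G, ∀ y ∈ A,
      ℓ * k < (univ.filter (fun x => x ∉ A.erase y ∧ insert x (A.erase y) ∈ G)).card) :
    HasPath G ℓ := by
  have move : ∀ (W : Finset (Fin n)) (v : Fin n), W.card ≤ ℓ * k →
      ∀ m, ∀ A ∈ G, v ∈ A → ((A ∩ W).erase v).card = m →
      ∃ A' ∈ G, v ∈ A' ∧ (A' ∩ W).erase v = ∅ := by
    intro W v hW m
    induction m with
    | zero =>
      intro A hA hv h
      exact ⟨A, hA, hv, card_eq_zero.1 h⟩
    | succ m ih =>
      intro A hA hv h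
      obtain ⟨y, hy⟩ : ((A ∩ W).erase v).Nonempty := by rw [← card_pos]; omega
      have hy' := hy
      rw [mem_erase, mem_inter] at hy'
      obtain ⟨hyv, hyA, hyW⟩ := hy'
      obtain ⟨x, hx, hxW⟩ := exists_mem_notMem_of_card_lt_card (lt_of_le_of_lt hW (full A hA y hyA))
      rw [mem_filter] at hx
      apply ih _ hx.2.2
      · simp [hv, hyv.symm]
      · have : (insert x (A.erase y) ∩ W).erase v = ((A ∩ W).erase v).erase y := by
          ext z
          simp only [mem_erase, mem_inter, mem_insert]
          constructor
          · rintro ⟨h1, h2 | h2, h3⟩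
            · subst h2; exact absurd h3 hxW
            · exact ⟨h2.1, h1, h2.2, h3⟩
          · rintro ⟨h1, h2, h3, h4⟩
            exact ⟨h2, Or.inr ⟨h1, h3⟩, h4⟩
        rw [this, card_erase_of_mem hy, h]; rfl
  apply greedy hG (fun _ v => ∃ A ∈ G, v ∈ A)
  · obtain ⟨A, hA⟩ := hne
    obtain ⟨v, hv⟩ : A.Nonempty := by rw [← card_pos, hG A hA]; omega
    exact ⟨A, hA, v, hv, A, hA, hv⟩
  · rintro W' W v hWW hW hv ⟨A, hA, hvA⟩
    obtain ⟨A', hA', hvA', he⟩ := move W v hW _ A hA hvA rfl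
    refine ⟨A', hA', hvA', ?_, ?_⟩
    · rw [disjoint_left]
      intro z hz hz'
      have : z ∈ (A' ∩ W).erase v := by
        rw [mem_erase, mem_inter]
        refine ⟨?_, hz, hWW hz'⟩
        rintro rfl; exact hv hz'
      rw [he] at this; simp at this
    · obtain ⟨v', hv', hne⟩ := exists_mem_ne (by rw [hG A' hA']; omega : 1 < A'.card) v
      refine ⟨v', hv', ?_, A', hA', hv'⟩
      intro hw
      have : v' ∈ (A' ∩ W).erase v := by
        rw [mem_erase, mem_inter]; exact ⟨hne, hv', hw⟩
      rw [he] at this; simp at this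

lemma decomp {n ℓ a : ℕ} (ha : 1 ≤ a) : ∀ (m : ℕ) (F : Finset (Finset (Fin n))), F.card = m →
    (∀ A ∈ F, A.card = a + 1) → ¬ HasPath F ℓ →
    ∃ L : Finset (Fin n) → Finset (Fin n), (∀ T, (L T).card ≤ ℓ * (a + 1)) ∧
      (∀ T x, x ∈ L T → T.card = a ∧ x ∉ T ∧ insert x T ∈ F) ∧
      F.card ≤ ∑ T ∈ powersetCard a univ, (L T).card := by
  intro m
  induction m using Nat.strong_induction_on with
  | _ m ih =>
  intro F hm hF hp
  rcases F.eq_empty_or_nonempty with h | hne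
  · subst h
    exact ⟨fun _ => ∅, by simp, by simp, by simp⟩
  · have : ¬ ∀ A ∈ F, ∀ y ∈ A,
      ℓ * (a+1) < (univ.filter (fun x => x ∉ A.erase y ∧ insert x (A.erase y) ∈ F)).card :=
      fun hf => hp (full_path hF (by omega) hne hf)
    push Not at this
    obtain ⟨A, hA, y, hy, hle⟩ := this
    set T := A.erase y with hT
    set E := univ.filter (fun x => x ∉ T ∧ insert x T ∈ F) with hE
    have hTc : T.card = a := by rw [hT, card_erase_of_mem hy, hF A hA]; rfl
    set F' := F \ E.image (fun x => insert x T) with hF'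
    have hsub : F' ⊆ F := sdiff_subset
    have hyE : y ∈ E := by
      rw [hE, mem_filter]
      refine ⟨mem_univ _, by simp [hT], ?_⟩
      rw [hT, insert_erase hy]; exact hA
    have hAF' : A ∉ F' := by
      rw [hF', mem_sdiff]
      rintro ⟨_, h⟩
      apply h
      rw [mem_image]
      exact ⟨y, hyE, by rw [hT, insert_erase hy]⟩
    have hlt : F'.card < m := by
      rw [← hm]
      exact card_lt_card ⟨hsub, fun h => hAF' (h hA)⟩
    obtain ⟨L, h1, h2, h3⟩ := ih _ hlt F' rfl (fun A hA => hF A (hsub hA))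
      (fun h => hp (h.mono hsub))
    have hLT : L T = ∅ := by
      rw [eq_empty_iff_forall_notMem]
      intro x hx
      obtain ⟨_, hxT, hxF⟩ := h2 T x hx
      rw [hF', mem_sdiff] at hxF
      apply hxF.2
      rw [mem_image]
      exact ⟨x, by rw [hE, mem_filter]; exact ⟨mem_univ _, hxT, hxF.1⟩, rfl⟩
    refine ⟨Function.update L T E, ?_, ?_, ?_⟩
    · intro T'
      by_cases h : T' = T
      · subst h; rw [Function.update_self]; exact hle
      · rw [Function.update_of_ne h]; exact h1 T'
    · intro T' x hx
      by_cases h : T' = T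
      · rw [h, Function.update_self, hE, mem_filter] at hx
        rw [h]
        exact ⟨hTc, hx.2⟩
      · rw [Function.update_of_ne h] at hx
        obtain ⟨h4, h5, h6⟩ := h2 T' x hx
        exact ⟨h4, h5, hsub h6⟩
    · have hTm : T ∈ powersetCard a (univ : Finset (Fin n)) := by simp [mem_powersetCard, hTc]
      rw [← add_sum_erase _ _ hTm] at h3 ⊢
      rw [Function.update_self]
      have h4 : ∑ x ∈ (powersetCard a univ).erase T, (Function.update L T E x).card =
          ∑ x ∈ (powersetCard a univ).erase T, (L x).card := by
        apply sum_congr rfl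
        intro x hx
        rw [Function.update_of_ne (ne_of_mem_erase hx)]
      rw [h4]
      rw [hLT, card_empty, zero_add] at h3
      have h5 : F.card ≤ F'.card + (E.image (fun x => insert x T)).card := by
        rw [hF']
        have := le_card_sdiff (E.image (fun x => insert x T)) F
        omega
      have h6 : (E.image (fun x => insert x T)).card ≤ E.card := card_image_le
      omega

lemma cnt {n a : ℕ} (R : Finset (Finset (Fin n))) (hR : ∀ T ∈ R, T.card = a)
    (Z : Finset (Fin n)) : (R.filter (fun T => Z ⊆ T)).card ≤ n ^ (a - Z.card) := by
  calc (R.filter (fun T => Z ⊆ T)).card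
      ≤ (powersetCard (a - Z.card) (univ : Finset (Fin n))).card := by
        apply card_le_card_of_injOn (fun T => T \ Z)
        · intro T hT
          rw [mem_coe, mem_filter] at hT
          rw [mem_coe, mem_powersetCard]
          refine ⟨subset_univ _, ?_⟩
          rw [card_sdiff_of_subset hT.2, hR T hT.1]
        · intro T hT T' hT' h
          rw [mem_coe, mem_filter] at hT hT'
          have h : T \ Z = T' \ Z := h
          rw [← sdiff_union_of_subset hT.2, ← sdiff_union_of_subset hT'.2, h]
    _ ≤ n ^ (a - Z.card) := by
        rw [card_powersetCard, card_univ, Fintype.card_fin]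
        exact Nat.choose_le_pow _ _

lemma cnt_hit {n b : ℕ} (R : Finset (Finset (Fin n))) (hR : ∀ T ∈ R, T.card = b + 1)
    (W : Finset (Fin n)) : (R.filter (fun T => ¬ Disjoint T W)).card ≤ W.card * n ^ b := by
  have : R.filter (fun T => ¬ Disjoint T W) ⊆ W.biUnion (fun w => R.filter (fun T => {w} ⊆ T)) := by
    intro T hT
    rw [mem_filter, not_disjoint_iff] at hT
    obtain ⟨hT, w, h1, h2⟩ := hT
    rw [mem_biUnion]
    exact ⟨w, h2, by simp [hT, h1]⟩
  refine (card_le_card this).trans (card_biUnion_le_card_mul _ _ _ ?_)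
  intro w _
  simpa using cnt R hR {w}

lemma cnt_hit2 {n b : ℕ} (R : Finset (Finset (Fin n))) (hR : ∀ T ∈ R, T.card = b + 2)
    (v : Fin n) (W : Finset (Fin n)) (hv : v ∉ W) :
    (R.filter (fun T => v ∈ T ∧ ¬ Disjoint T W)).card ≤ W.card * n ^ b := by
  have : R.filter (fun T => v ∈ T ∧ ¬ Disjoint T W) ⊆
      W.biUnion (fun w => R.filter (fun T => {v, w} ⊆ T)) := by
    intro T hT
    rw [mem_filter, not_disjoint_iff] at hT
    obtain ⟨hT, h0, w, h1, h2⟩ := hT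
    rw [mem_biUnion]
    refine ⟨w, h2, ?_⟩
    rw [mem_filter, insert_subset_iff, singleton_subset_iff]
    exact ⟨hT, h0, h1⟩
  refine (card_le_card this).trans (card_biUnion_le_card_mul _ _ _ ?_)
  intro w hw
  have h := cnt R hR {v, w}
  rw [card_pair (by rintro rfl; exact hv hw)] at h
  simpa using h

lemma clean {n : ℕ} (R : Finset (Finset (Fin n))) (α β : ℕ) (h : β * n < α * R.card) :
    ∃ R' ⊆ R, R'.Nonempty ∧ ∀ v ∈ R'.biUnion id, β ≤ α * (R'.filter (fun T => v ∈ T)).card := by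
  obtain ⟨R', hR', hmax⟩ := exists_max_image R.powerset
    (fun Q => (α : ℤ) * Q.card - β * (Q.biUnion id).card) ⟨R, by simp⟩
  rw [mem_powerset] at hR'
  have h1 := hmax R (by simp)
  have h2 : (R.biUnion id).card ≤ n := by simpa using card_le_univ (R.biUnion id)
  have h3 : (0 : ℤ) < (α : ℤ) * R.card - β * (R.biUnion id).card := by
    have : β * (R.biUnion id).card ≤ β * n := by gcongr
    have : β * (R.biUnion id).card < α * R.card := by omega
    have : ((β * (R.biUnion id).card : ℕ) : ℤ) < (α * R.card : ℕ) := by exact_mod_cast this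
    push_cast at this
    linarith
  refine ⟨R', hR', ?_, ?_⟩
  · rw [nonempty_iff_ne_empty]
    rintro rfl
    simp at h1
    linarith
  · intro v hv
    have h4 := hmax (R'.filter (fun T => v ∉ T)) (by
      rw [mem_powerset]; exact (filter_subset _ _).trans hR')
    have h5 : ((R'.filter (fun T => v ∉ T)).biUnion id).card + 1 ≤ (R'.biUnion id).card := by
      rw [← card_erase_add_one hv]
      gcongr
      intro z hz
      rw [mem_biUnion] at hz
      obtain ⟨T, hT, hz⟩ := hz
      rw [mem_filter] at hT
      rw [mem_erase, mem_biUnion]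
      refine ⟨?_, T, hT.1, hz⟩
      rintro rfl; exact hT.2 hz
    have h6 := card_filter_add_card_filter_not (s := R') (fun T => v ∈ T)
    have h7 : (((R'.filter (fun T => v ∉ T)).biUnion id).card : ℤ) + 1 ≤ (R'.biUnion id).card := by
      exact_mod_cast h5
    have h8 : ((R'.filter (fun T => v ∈ T)).card : ℤ) + (R'.filter (fun T => v ∉ T)).card
      = R'.card := by exact_mod_cast h6
    have h9 : (β:ℤ) * ((((R'.filter (fun T => v ∉ T)).biUnion id).card : ℤ) + 1)
      ≤ β * (R'.biUnion id).card := by gcongr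
    have : (β : ℤ) ≤ α * (R'.filter (fun T => v ∈ T)).card := by
      rw [← h8] at h4
      nlinarith
    exact_mod_cast this

lemma claimR {n b ℓ N : ℕ} {F : Finset (Finset (Fin n))}
    (hF : ∀ A ∈ F, A.card = b + 3) (hN : 1 ≤ N) (hl : 1 ≤ ℓ)
    (q H E : ℕ) (hq : q = ℓ * (b + 3)) (hH : H = 8 * N * q) (hE : E = 8 * N * q * H * (b + 2))
    (hn : 8 * N * q ≤ n)
    (R : Finset (Finset (Fin n))) (hR : ∀ T ∈ R, T.card = b + 2)
    (c : Finset (Fin n) → Fin n) (hc : ∀ T ∈ R, c T ∉ T ∧ insert (c T) T ∈ F)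
    (hRN : n ^ (b + 2) ≤ N * R.card)
    (hcl : ∀ x, E * (R.filter (fun T => c T = x)).card ≤ n ^ (b + 2)) :
    HasPath F ℓ := by
  have hq0 : 1 ≤ q := by rw [hq]; nlinarith
  have hNq : 1 ≤ N * q := Nat.mul_pos hN hq0
  have hn0 : 1 ≤ n := by nlinarith
  obtain ⟨R', hR', hne, hdeg⟩ := clean R (2 * N) (n ^ (b+1)) (by
    have : 0 < n ^ (b+2) := by positivity
    calc n ^ (b+1) * n = n ^ (b+2) := by ring
      _ < 2 * N * R.card := by nlinarith)
  let dg : Fin n → Fin n → ℕ := fun v x => (R.filter (fun T => v ∈ T ∧ c T = x)).card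
  let hv : Fin n → Finset (Fin n) := fun x => univ.filter (fun v => n ^ (b+1) ≤ H * dg v x)
  have hheavy : ∀ x, E * (hv x).card ≤ H * (b+2) * n := by
    intro x
    have h1 : ∑ v, dg v x = (R.filter (fun T => c T = x)).card * (b+2) := by
      have : ∀ v, dg v x = ∑ T ∈ R.filter (fun T => c T = x), if v ∈ T then 1 else 0 := by
        intro v
        simp only [dg]
        rw [← card_filter, filter_filter]
        congr 1
        ext T; simp [and_comm]
      simp_rw [this]
      rw [sum_comm]
      rw [← smul_eq_mul, ← sum_const]
      apply sum_congr rfl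
      intro T hT
      rw [mem_filter] at hT
      rw [← card_filter]
      simp [hR T hT.1]
    have h2 : (hv x).card * n ^ (b+1) ≤ H * ∑ v, dg v x := by
      calc (hv x).card * n ^ (b+1) = ∑ v ∈ hv x, n ^ (b+1) := by simp
        _ ≤ ∑ v ∈ hv x, H * dg v x := by
          apply sum_le_sum
          intro v h
          simp only [hv, mem_filter] at h
          exact h.2
        _ = H * ∑ v ∈ hv x, dg v x := by rw [mul_sum]
        _ ≤ H * ∑ v, dg v x := by
          gcongr
          exact subset_univ _
    have h3 := hcl x
    have h4 : (E * (hv x).card) * n ^ (b+1) ≤ (H * (b+2) * n) * n ^ (b+1) := by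
      calc (E * (hv x).card) * n ^ (b+1) = E * ((hv x).card * n ^ (b+1)) := by ring
        _ ≤ E * (H * ∑ v, dg v x) := by gcongr
        _ = (E * (R.filter (fun T => c T = x)).card) * (H * (b+2)) := by rw [h1]; ring
        _ ≤ n ^ (b+2) * (H * (b+2)) := by gcongr
        _ = _ := by ring
    exact Nat.le_of_mul_le_mul_right h4 (by positivity)
  apply greedy hF (fun W v => v ∈ R'.biUnion id ∧ ∀ w ∈ W, v ∉ hv w)
  · obtain ⟨T, hT⟩ := hne
    obtain ⟨v, hvT⟩ : T.Nonempty := by rw [← card_pos, hR T (hR' hT)]; omega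
    refine ⟨insert (c T) T, (hc T (hR' hT)).2, v, by simp [hvT], ?_, by simp⟩
    rw [mem_biUnion]; exact ⟨T, hT, hvT⟩
  · rintro W' W v hWW hW hvW ⟨hvR, hlight⟩
    rw [← hq] at hW
    set Q := (W ∪ W.biUnion hv).erase v with hQ
    have hQc : E * Q.card ≤ E * q + q * (H * (b+2) * n) := by
      have h1 : Q.card ≤ W.card + ∑ w ∈ W, (hv w).card :=
        (card_le_card (erase_subset _ _)).trans ((card_union_le _ _).trans
          (by gcongr; exact card_biUnion_le))
      calc E * Q.card ≤ E * (W.card + ∑ w ∈ W, (hv w).card) := by gcongr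
        _ = E * W.card + ∑ w ∈ W, E * (hv w).card := by rw [mul_add, mul_sum]
        _ ≤ E * W.card + ∑ w ∈ W, H * (b+2) * n := by
          exact Nat.add_le_add_left (sum_le_sum fun w _ => hheavy w) _
        _ = E * W.card + W.card * (H * (b+2) * n) := by simp
        _ ≤ _ := by gcongr
    have hex : ∃ T ∈ R', v ∈ T ∧ Disjoint T Q ∧ c T ∉ W' := by
      by_contra hcon
      push Not at hcon
      have h1 : R'.filter (fun T => v ∈ T) ⊆ R.filter (fun T => v ∈ T ∧ ¬ Disjoint T Q) ∪
          W'.biUnion (fun w => R.filter (fun T => v ∈ T ∧ c T = w)) := by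
        intro T hT
        rw [mem_filter] at hT
        rw [mem_union, mem_filter, mem_biUnion]
        by_cases h : Disjoint T Q
        · right
          exact ⟨c T, hcon T hT.1 hT.2 h, by simp [hR' hT.1, hT.2]⟩
        · left; exact ⟨hR' hT.1, hT.2, h⟩
      have h2 : (R'.filter (fun T => v ∈ T)).card ≤ Q.card * n ^ b + ∑ w ∈ W', dg v w := by
        refine (card_le_card h1).trans ((card_union_le _ _).trans ?_)
        gcongr
        · exact cnt_hit2 R hR v Q (by simp [hQ])
        · exact card_biUnion_le
      have h3 : H * ∑ w ∈ W', dg v w ≤ q * n ^ (b+1) := by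
        rw [mul_sum]
        calc ∑ w ∈ W', H * dg v w ≤ ∑ w ∈ W', n ^ (b+1) := by
              apply sum_le_sum
              intro w hw
              have := hlight w hw
              simp only [hv, mem_filter, mem_univ, true_and, not_le] at this
              exact this.le
          _ = W'.card * n ^ (b+1) := by simp
          _ ≤ q * n ^ (b+1) := by
            gcongr
            exact (card_le_card hWW).trans hW
      have h4 := hdeg v hvR
      generalize (R'.filter (fun T => v ∈ T)).card = D at *
      generalize ∑ w ∈ W', dg v w = Sg at *
      generalize Q.card = C at *
      have hH0 : 0 < H := by rw [hH]; positivity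
      -- 8 N Sg ≤ n^(b+1)
      have h5 : 8 * N * Sg ≤ n ^ (b+1) := by
        have : q * (8 * N * Sg) ≤ q * n ^ (b+1) := by
          calc q * (8 * N * Sg) = H * Sg := by rw [hH]; ring
            _ ≤ _ := h3
        exact Nat.le_of_mul_le_mul_left this hq0
      have h6 : 8 * N * C ≤ 2 * n := by
        have hX : 0 < q * (H * (b+2)) := by positivity
        have : (q * (H * (b+2))) * (8 * N * C) ≤ (q * (H * (b+2))) * (2 * n) := by
          calc (q * (H * (b+2))) * (8 * N * C) = E * C := by rw [hE]; ring
            _ ≤ E * q + q * (H * (b+2) * n) := hQc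
            _ = (q * (H * (b+2))) * (8 * N * q + n) := by rw [hE]; ring
            _ ≤ _ := by gcongr; omega
        exact Nat.le_of_mul_le_mul_left this hX
      have h7 : 8 * N * C * n ^ b ≤ 2 * n ^ (b+1) := by
        calc 8 * N * C * n ^ b ≤ 2 * n * n ^ b := by gcongr
          _ = _ := by ring
      have h8 : 0 < n ^ (b+1) := by positivity
      have h9 : 4 * n ^ (b+1) ≤ 8 * N * C * n ^ b + 8 * N * Sg := by
        calc 4 * n ^ (b+1) ≤ 4 * (2 * N * D) := by gcongr
          _ ≤ 4 * (2 * N * (C * n ^ b + Sg)) := by gcongr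
          _ = _ := by ring
      omega
    obtain ⟨T, hT, hvT, hTQ, hcT⟩ := hex
    have hT' := hR' hT
    refine ⟨insert (c T) T, (hc T hT').2, by simp [hvT], ?_, ?_⟩
    · rw [disjoint_left]
      intro z hz hz'
      rw [mem_insert] at hz
      rcases hz with rfl | hz
      · exact hcT hz'
      · refine disjoint_left.1 hTQ hz ?_
        rw [hQ, mem_erase, mem_union]
        refine ⟨?_, Or.inl (hWW hz')⟩
        rintro rfl; exact hvW hz'
    · obtain ⟨v', hv', hne'⟩ := exists_mem_ne (by rw [hR T hT']; omega : 1 < T.card) v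
      have hnQ := disjoint_left.1 hTQ hv'
      rw [hQ, mem_erase, mem_union, mem_biUnion] at hnQ
      push Not at hnQ
      have h3 := hnQ hne'
      refine ⟨v', by simp [hv'], h3.1, ?_, h3.2⟩
      rw [mem_biUnion]; exact ⟨T, hT, hv'⟩

lemma matching {n a : ℕ} (TT : Finset (Finset (Fin n))) (hT : ∀ T ∈ TT, T.card = a + 1)
    (W : Finset (Fin n)) : ∀ m, (W.card + m * (a + 1)) * n ^ a < TT.card →
    ∃ T : ℕ → Finset (Fin n), (∀ i, i < m → T i ∈ TT ∧ Disjoint (T i) W) ∧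
      ∀ i j, i < j → j < m → Disjoint (T i) (T j) := by
  intro m
  induction m with
  | zero => intro _; exact ⟨fun _ => ∅, by simp, by simp⟩
  | succ m ih =>
    intro h
    obtain ⟨T, h1, h2⟩ := ih (lt_of_le_of_lt (by gcongr; omega) h)
    set W' := W ∪ (range m).biUnion T with hW'
    have hc : W'.card ≤ W.card + m * (a+1) := by
      refine (card_union_le _ _).trans ?_
      gcongr
      calc ((range m).biUnion T).card ≤ (range m).card * (a+1) := by
            apply card_biUnion_le_card_mul
            intro i hi
            exact (hT _ (h1 i (mem_range.1 hi)).1).le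
        _ = m * (a+1) := by simp
    have h3 : (TT.filter (fun T => ¬ Disjoint T W')).card < TT.card := by
      refine lt_of_le_of_lt (cnt_hit TT hT W') (lt_of_le_of_lt ?_ h)
      gcongr
      refine hc.trans ?_
      gcongr; omega
    obtain ⟨A, hA, hAn⟩ := exists_mem_notMem_of_card_lt_card h3
    have hAd : Disjoint A W' := by
      by_contra hd; exact hAn (mem_filter.2 ⟨hA, hd⟩)
    rw [hW', disjoint_union_right, disjoint_biUnion_right] at hAd
    refine ⟨Function.update T m A, ?_, ?_⟩
    · intro i hi
      by_cases h : i = m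
      · subst h; simpa using ⟨hA, hAd.1⟩
      · rw [Function.update_of_ne h]; exact h1 i (by omega)
    · intro i j hij hj
      rw [Function.update_of_ne (by omega : i ≠ m)]
      by_cases h : j = m
      · subst h
        rw [Function.update_self]
        exact (hAd.2 i (mem_range.2 hij)).symm
      · rw [Function.update_of_ne h]; exact h2 i j hij (by omega)

lemma enum {n t : ℕ} (S : Finset (Fin n)) (hS : S.card = t) (x0 : Fin n) (hx : x0 ∈ S) :
    ∃ x : ℕ → Fin n, x 0 = x0 ∧ (∀ i, i < t → x i ∈ S) ∧
      ∀ i j, i < t → j < t → x i = x j → i = j := by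
  set l := x0 :: (S.erase x0).toList with hl
  have hlen : l.length = t := by
    rw [hl, List.length_cons, length_toList, card_erase_add_one hx, hS]
  have hnd : l.Nodup := by
    rw [hl, List.nodup_cons]
    exact ⟨by simp, nodup_toList _⟩
  refine ⟨fun i => l.getD i x0, by simp [hl], ?_, ?_⟩
  · intro i hi
    have h1 : i < l.length := by omega
    simp only [List.getD_eq_getElem _ _ h1]
    have h2 : l[i] ∈ l := List.getElem_mem h1
    have h3 : ∀ y ∈ l, y ∈ S := by
      intro y hy
      rw [hl, List.mem_cons] at hy
      rcases hy with rfl | hy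
      · exact hx
      · rw [mem_toList] at hy; exact mem_of_mem_erase hy
    exact h3 _ h2
  · intro i j hi hj h
    have h1 : i < l.length := by omega
    have h2 : j < l.length := by omega
    simp only [List.getD_eq_getElem _ _ h1, List.getD_eq_getElem _ _ h2] at h
    exact (hnd.getElem_inj_iff).1 h

lemma pathS {n t : ℕ} {F : Finset (Finset (Fin n))} (S : Finset (Fin n))
    (x : ℕ → Fin n) (hxS : ∀ i, i < t → x i ∈ S) (hxi : ∀ i j, i < t → j < t → x i = x j → i = j)
    (T : ℕ → Finset (Fin n)) (hTS : ∀ i, i ≤ t → Disjoint (T i) S)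
    (hTd : ∀ i j, i < j → j ≤ t → Disjoint (T i) (T j))
    (hTn : ∀ i, i ≤ t → (T i).Nonempty)
    (A : Finset (Fin n)) (hA : A ∈ F) (hAS : Disjoint A S)
    (hAT : ∀ i, 1 ≤ i → i ≤ t → Disjoint A (T i)) (hA0 : ¬ Disjoint A (T 0))
    (h0 : insert (x 0) (T 0) ∈ F)
    (h1 : ∀ i j, 1 ≤ i → i ≤ t → j < t → insert (x j) (T i) ∈ F) :
    HasPath F (2 * t + 1) := by
  refine ⟨fun m => if m = 0 then A else insert (x ((m-1)/2)) (T (m/2)), ?_, ?_⟩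
  · intro m hm
    by_cases h : m = 0
    · simpa [h] using hA
    · simp only [h, if_false]
      by_cases h' : m = 1
      · subst h'; simpa using h0
      · exact h1 _ _ (by omega) (by omega) (by omega)
  · intro i j hij hj
    have hj0 : j ≠ 0 := by omega
    simp only [hj0, if_false]
    by_cases hi : i = 0
    · simp only [hi, if_true]
      constructor
      · rintro ⟨z, hz⟩
        rw [mem_inter, mem_insert] at hz
        rcases hz with ⟨hz, rfl | h⟩
        · exact absurd (hxS _ (by omega)) (disjoint_left.1 hAS hz)
        · by_contra hne
          exact disjoint_left.1 (hAT (j/2) (by omega) (by omega)) hz h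
      · intro h
        have hj1 : j = 1 := by omega
        subst hj1
        rw [not_disjoint_iff] at hA0
        obtain ⟨z, hz, hz'⟩ := hA0
        exact ⟨z, mem_inter.2 ⟨hz, mem_insert_of_mem (by simpa using hz')⟩⟩
    · simp only [hi, if_false]
      constructor
      · rintro ⟨z, hz⟩
        rw [mem_inter, mem_insert, mem_insert] at hz
        rcases hz with ⟨rfl | hz, h | h⟩
        · have := hxi _ _ (by omega) (by omega) h
          omega
        · exact absurd (hxS _ (by omega)) (disjoint_left.1 (hTS _ (by omega)) h)
        · subst h
          exact absurd (hxS _ (by omega)) (disjoint_left.1 (hTS _ (by omega)) hz)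
        · by_contra hne
          exact disjoint_left.1 (hTd (i/2) (j/2) (by omega) (by omega)) hz h
      · intro h
        by_cases hp : i / 2 = j / 2
        · obtain ⟨z, hz⟩ := hTn (i/2) (by omega)
          refine ⟨z, mem_inter.2 ⟨mem_insert_of_mem hz, mem_insert_of_mem ?_⟩⟩
          rw [← hp]; exact hz
        · have : (i-1)/2 = (j-1)/2 := by omega
          refine ⟨x ((i-1)/2), mem_inter.2 ⟨mem_insert_self _ _, ?_⟩⟩
          rw [this]; exact mem_insert_self _ _

lemma lemB {n t b : ℕ} {F : Finset (Finset (Fin n))}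
    (hF : ∀ A ∈ F, A.card = b + 3)
    (S : Finset (Fin n)) (hS : S.card = t)
    (TT : Finset (Finset (Fin n))) (hTT : ∀ T ∈ TT, T.card = b + 2 ∧ Disjoint T S ∧
      ∀ x ∈ S, insert x T ∈ F)
    (hbig : (2 * (b + 3) + t * (b + 2)) * n ^ (b + 1) < TT.card)
    (A : Finset (Fin n)) (hA : A ∈ F) (hAS : Disjoint A S)
    (T0 : Finset (Fin n)) (hT0 : T0.card = b + 2) (hT0S : Disjoint T0 S)
    (x0 : Fin n) (hx0 : x0 ∈ S) (hxT : insert x0 T0 ∈ F) (hAT : ¬ Disjoint A T0) :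
    HasPath F (2 * t + 1) := by
  obtain ⟨x, hx00, hxS, hxi⟩ := enum S hS x0 hx0
  obtain ⟨T, hT1, hT2⟩ := matching TT (fun T hT => (hTT T hT).1) (A ∪ T0) t (by
    refine lt_of_le_of_lt ?_ hbig
    gcongr
    · refine (card_union_le _ _).trans ?_
      rw [hF A hA, hT0]; omega
    )
  refine pathS S x hxS hxi (fun i => if i = 0 then T0 else T (i-1)) ?_ ?_ ?_ A hA hAS ?_ ?_ ?_ ?_
  · intro i hi
    by_cases h : i = 0
    · simpa [h] using hT0S
    · simp only [h, if_false]; exact (hTT _ (hT1 (i-1) (by omega)).1).2.1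
  · intro i j hij hj
    have hj0 : j ≠ 0 := by omega
    simp only [hj0, if_false]
    by_cases h : i = 0
    · simp only [h, if_true]
      have := (hT1 (j-1) (by omega)).2
      rw [disjoint_union_right] at this
      exact this.2.symm
    · simp only [h, if_false]
      exact hT2 _ _ (by omega) (by omega)
  · intro i hi
    rw [← card_pos]
    by_cases h : i = 0
    · simp only [h, if_true]; omega
    · simp only [h, if_false]; rw [(hTT _ (hT1 (i-1) (by omega)).1).1]; omega
  · intro i h1 hi
    have hi0 : i ≠ 0 := by omega
    simp only [hi0, if_false]
    have := (hT1 (i-1) (by omega)).2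
    rw [disjoint_union_right] at this
    exact this.1.symm
  · simpa using hAT
  · simpa [hx00] using hxT
  · intro i j h1 hi hj
    have hi0 : i ≠ 0 := by omega
    simp only [hi0, if_false]
    exact (hTT _ (hT1 (i-1) (by omega)).1).2.2 _ (hxS j hj)

/-- structure lemma -/
lemma lemA (b t N : ℕ) (ht : 1 ≤ t) (hN : 1 ≤ N) : ∃ K n₀ : ℕ, ∀ n, n₀ ≤ n →
    ∀ F : Finset (Finset (Fin n)), (∀ A ∈ F, A.card = b + 3) → ¬ HasPath F (2 * t + 1) →
    ∀ L : Finset (Fin n) → Finset (Fin n), (∀ T, (L T).card ≤ (2 * t + 1) * (b + 3)) →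
      (∀ T x, x ∈ L T → T.card = b + 2 ∧ x ∉ T ∧ insert x T ∈ F) →
    ∃ X : Finset (Fin n), X.card ≤ K ∧
      N * ((powersetCard (b + 2) univ).filter (fun T => ¬ (L T ⊆ X ∧ (L T).card ≤ t))).card
        ≤ n ^ (b + 2) := by
  set q := (2 * t + 1) * (b + 3) with hq
  set H := 8 * (2 * N) * q with hH
  set E := 8 * (2 * N) * q * H * (b + 2) with hE
  set r := 2 * (b + 3) + t * (b + 2) with hr
  refine ⟨E * q, 8 * (2 * N) * q + 2 * N * (2 ^ (E * q) * r) + 1, ?_⟩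
  intro n hn F hF hp L hL1 hL2
  set PS := powersetCard (b+2) (univ : Finset (Fin n)) with hPS
  have hPSc : ∀ T ∈ PS, T.card = b + 2 := fun T hT => (mem_powersetCard.1 hT).2
  have hPSn : PS.card ≤ n ^ (b+2) := by
    rw [hPS, card_powersetCard, card_univ, Fintype.card_fin]; exact Nat.choose_le_pow _ _
  have hn0 : 0 < n := by omega
  set X := (univ : Finset (Fin n)).filter
    (fun x => n ^ (b+2) < E * (PS.filter (fun T => x ∈ L T)).card) with hX
  have hXc : X.card ≤ E * q := by
    have h1 : X.card * n ^ (b+2) ≤ (E * q) * n ^ (b+2) := by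
      calc X.card * n ^ (b+2) = ∑ x ∈ X, n ^ (b+2) := by simp
        _ ≤ ∑ x ∈ X, E * (PS.filter (fun T => x ∈ L T)).card := by
          apply sum_le_sum
          intro x hx
          exact ((mem_filter.1 hx).2).le
        _ ≤ ∑ x, E * (PS.filter (fun T => x ∈ L T)).card :=
          sum_le_sum_of_subset (subset_univ _)
        _ = E * ∑ x, (PS.filter (fun T => x ∈ L T)).card := by rw [mul_sum]
        _ = E * ∑ T ∈ PS, (L T).card := by
          congr 1
          simp_rw [card_filter]
          rw [sum_comm]
          apply sum_congr rfl
          intro T _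
          rw [← card_filter]; simp
        _ ≤ E * ∑ T ∈ PS, q := by
          gcongr
          exact hL1 _
        _ = E * (PS.card * q) := by simp
        _ ≤ E * (n ^ (b+2) * q) := by gcongr
        _ = _ := by ring
    exact Nat.le_of_mul_le_mul_right h1 (by positivity)
  refine ⟨X, hXc, ?_⟩
  -- part 1
  have part1 : 2 * N * (PS.filter (fun T => ¬ L T ⊆ X)).card ≤ n ^ (b+2) := by
    by_contra hcon
    push Not at hcon
    have hch : ∀ T, ∃ x, ¬ L T ⊆ X → x ∈ L T ∧ x ∉ X := by
      intro T
      by_cases h : L T ⊆ X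
      · exact ⟨⟨0, hn0⟩, fun h' => absurd h h'⟩
      · obtain ⟨x, hx⟩ := not_subset.1 h
        exact ⟨x, fun _ => hx⟩
    choose c hc using hch
    apply hp
    apply claimR (N := 2 * N) hF (by omega) (by omega) q H E hq hH hE (by omega)
      (PS.filter (fun T => ¬ L T ⊆ X)) (fun T hT => hPSc T (mem_filter.1 hT).1) c
    · intro T hT
      have := hc T (mem_filter.1 hT).2
      exact (hL2 T _ this.1).2
    · exact hcon.le
    · intro x
      rcases ((PS.filter (fun T => ¬ L T ⊆ X)).filter (fun T => c T = x)).eq_empty_or_nonempty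
        with h | ⟨T, hT⟩
      · rw [h]; simp
      · rw [mem_filter, mem_filter] at hT
        have h1 := (hc T hT.1.2).2
        rw [hT.2, hX, mem_filter] at h1
        push Not at h1
        refine le_trans ?_ (h1 (mem_univ _))
        gcongr
        intro T' hT'
        rw [mem_filter, mem_filter] at hT'
        rw [mem_filter]
        refine ⟨hT'.1.1, ?_⟩
        rw [← hT'.2]
        exact (hc T' hT'.1.2).1
  have part2 : 2 * N * (PS.filter (fun T => L T ⊆ X ∧ t < (L T).card)).card ≤ n ^ (b+2) := by
    have h1 : PS.filter (fun T => L T ⊆ X ∧ t < (L T).card) ⊆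
        (X.powerset.filter (fun Y => t < Y.card)).biUnion
          (fun Y => PS.filter (fun T => L T = Y)) := by
      intro T hT
      rw [mem_filter] at hT
      rw [mem_biUnion]
      exact ⟨L T, by simp [hT.2.1, hT.2.2], by simp [hT.1]⟩
    have h2 : ∀ Y ∈ X.powerset.filter (fun Y => t < Y.card),
        (PS.filter (fun T => L T = Y)).card ≤ r * n ^ (b+1) := by
      intro Y hY
      rw [mem_filter] at hY
      by_contra hcon
      push Not at hcon
      obtain ⟨T0, hT0⟩ : (PS.filter (fun T => L T = Y)).Nonempty := by
        rw [← card_pos]; omega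
      rw [mem_filter] at hT0
      obtain ⟨x', hx'⟩ : Y.Nonempty := by rw [← card_pos]; omega
      obtain ⟨S, hSY, hSc⟩ := exists_subset_card_eq
        (by rw [card_erase_of_mem hx']; omega : t ≤ (Y.erase x').card)
      obtain ⟨x0, hx0⟩ : S.Nonempty := by rw [← card_pos]; omega
      have hSL : ∀ T, L T = Y → Disjoint T S := by
        intro T hT
        rw [disjoint_right]
        intro z hz
        have : z ∈ L T := by rw [hT]; exact mem_of_mem_erase (hSY hz)
        exact (hL2 T z this).2.1
      have hx'S : x' ∉ S := fun h => by simpa using hSY h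
      apply hp
      refine lemB hF S hSc (PS.filter (fun T => L T = Y)) ?_ hcon (insert x' T0)
        (hL2 T0 x' (by rw [hT0.2]; exact hx')).2.2 ?_ T0 (hPSc _ hT0.1) (hSL _ hT0.2) x0 hx0
        (hL2 T0 x0 (by rw [hT0.2]; exact mem_of_mem_erase (hSY hx0))).2.2 ?_
      · intro T hT
        rw [mem_filter] at hT
        refine ⟨hPSc _ hT.1, hSL _ hT.2, fun x hx => ?_⟩
        exact (hL2 T x (by rw [hT.2]; exact mem_of_mem_erase (hSY hx))).2.2
      · rw [disjoint_insert_left]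
        exact ⟨hx'S, hSL _ hT0.2⟩
      · rw [disjoint_insert_left]
        rintro ⟨_, h⟩
        rw [disjoint_self, bot_eq_empty] at h
        have := hPSc _ hT0.1
        rw [h] at this; simp at this
    have h3 : (X.powerset.filter (fun Y => t < Y.card)).card ≤ 2 ^ (E * q) := by
      refine (card_le_card (filter_subset _ _)).trans ?_
      rw [card_powerset]
      exact Nat.pow_le_pow_right (by norm_num) hXc
    calc 2 * N * (PS.filter (fun T => L T ⊆ X ∧ t < (L T).card)).card
        ≤ 2 * N * (2 ^ (E * q) * (r * n ^ (b+1))) := by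
          gcongr
          refine (card_le_card h1).trans ((card_biUnion_le_card_mul _ _ _ h2).trans ?_)
          gcongr
      _ = (2 * N * (2 ^ (E * q) * r)) * n ^ (b+1) := by ring
      _ ≤ n * n ^ (b+1) := by
          apply Nat.mul_le_mul_right; omega
      _ = n ^ (b+2) := by ring
  have hsub : PS.filter (fun T => ¬ (L T ⊆ X ∧ (L T).card ≤ t)) ⊆
      PS.filter (fun T => ¬ L T ⊆ X) ∪ PS.filter (fun T => L T ⊆ X ∧ t < (L T).card) := by
    intro T hT
    rw [mem_filter] at hT
    rw [mem_union, mem_filter, mem_filter]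
    by_cases h : L T ⊆ X
    · right
      refine ⟨hT.1, h, ?_⟩
      by_contra h'; exact hT.2 ⟨h, by omega⟩
    · left; exact ⟨hT.1, h⟩
  have h9 := (card_le_card hsub).trans (card_union_le _ _)
  have h10 := Nat.mul_le_mul_left (2 * N) h9
  rw [mul_add] at h10
  have h11 : 2 * (N * (PS.filter (fun T => ¬ (L T ⊆ X ∧ (L T).card ≤ t))).card)
    ≤ 2 * n ^ (b+2) := by
    rw [← mul_assoc]; omega
  omega

lemma choose_sum_star (k n : ℕ) : ∀ t, t ≤ n →
    (∑ i ∈ Finset.Icc 1 t, (n - i).choose k) + (n - t).choose (k + 1) = n.choose (k + 1) := by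
  intro t
  induction t with
  | zero => intro _; simp
  | succ t ih =>
    intro h
    rw [sum_Icc_succ_top (by omega), ← ih (by omega)]
    have : n - t = (n - (t+1)) + 1 := by omega
    rw [this, Nat.choose_succ_succ']
    omega

lemma star_card {n : ℕ} (k : ℕ) (S : Finset (Fin n)) :
    ((powersetCard (k + 1) univ).filter (fun A => (A ∩ S).Nonempty)).card =
      ∑ i ∈ Finset.Icc 1 S.card, (n - i).choose k := by
  have h1 := choose_sum_star k n S.card (by simpa using card_le_univ S)
  have h2 := card_filter_add_card_filter_not (s := powersetCard (k+1) (univ : Finset (Fin n)))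
    (fun A => (A ∩ S).Nonempty)
  have h3 : (powersetCard (k+1) (univ : Finset (Fin n))).filter (fun A => ¬ (A ∩ S).Nonempty)
      = powersetCard (k+1) Sᶜ := by
    ext A
    rw [mem_filter, mem_powersetCard, mem_powersetCard, not_nonempty_iff_eq_empty,
      ← disjoint_iff_inter_eq_empty, ← le_compl_iff_disjoint_right]
    simp [and_comm]
  rw [h3, card_powersetCard, card_powersetCard, card_compl, card_univ, Fintype.card_fin] at h2
  omega

lemma insimg {n : ℕ} (S : Finset (Fin n)) (UU : Finset (Finset (Fin n)))
    (h : ∀ T ∈ UU, Disjoint T S) :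
    ((S ×ˢ UU).image (fun p => insert p.1 p.2)).card = S.card * UU.card := by
  rw [card_image_of_injOn, card_product]
  rintro ⟨x, T⟩ hx ⟨y, T'⟩ hy he
  rw [mem_coe, mem_product] at hx hy
  simp only at hx hy he
  have hxy : x = y := by
    have : x ∈ insert y T' := by rw [← he]; simp
    rw [mem_insert] at this
    rcases this with h1 | h1
    · exact h1
    · exact absurd hx.1 (disjoint_left.1 (h T' hy.2) h1)
  subst hxy
  have h1 : x ∉ T := fun hh => disjoint_left.1 (h T hx.2) hh hx.1
  have h2 : x ∉ T' := fun hh => disjoint_left.1 (h T' hy.2) hh hx.1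
  rw [← erase_insert h1, he, erase_insert h2]

lemma choose_lower (a n : ℕ) (h : 2 * a ≤ n) : n ^ a ≤ (a.factorial * 2 ^ a) * n.choose a := by
  have h1 : (n + 1 - a) ^ a ≤ a.factorial * n.choose a := by
    rw [← Nat.descFactorial_eq_factorial_mul_choose]
    exact Nat.pow_sub_le_descFactorial n a
  calc n ^ a ≤ (2 * (n + 1 - a)) ^ a := by gcongr; omega
    _ = 2 ^ a * (n+1-a) ^ a := by rw [mul_pow]
    _ ≤ 2 ^ a * (a.factorial * n.choose a) := by gcongr
    _ = _ := by ring

lemma sum_lower (a n t : ℕ) (h : t ≤ n) : t * n.choose (a + 1) ≤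
    (∑ i ∈ Finset.Icc 1 t, (n - i).choose (a + 1)) + t * t * n ^ a := by
  have h1 : ∀ i, i ≤ n → n.choose (a+1) ≤ (n - i).choose (a+1) + i * n ^ a := by
    intro i
    induction i with
    | zero => simp
    | succ i ih =>
      intro hi
      have h2 := ih (by omega)
      have h3 : n - i = (n - (i+1)) + 1 := by omega
      rw [h3, Nat.choose_succ_succ'] at h2
      have h4 : (n - (i+1)).choose a ≤ n ^ a :=
        (Nat.choose_le_pow _ _).trans (by gcongr; omega)
      have h5 : (i+1) * n ^ a = i * n ^ a + n ^ a := by ring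
      omega
  calc t * n.choose (a+1) = ∑ i ∈ Finset.Icc 1 t, n.choose (a+1) := by simp
    _ ≤ ∑ i ∈ Finset.Icc 1 t, ((n - i).choose (a+1) + t * n ^ a) := by
      apply sum_le_sum
      intro i hi
      rw [Finset.mem_Icc] at hi
      refine (h1 i (by omega)).trans ?_
      gcongr
      exact hi.2
    _ = _ := by rw [sum_add_distrib]; simp; ring

lemma popular (b t : ℕ) (ht : 1 ≤ t) : ∃ Γ n₀ : ℕ, 1 ≤ Γ ∧ ∀ n, n₀ ≤ n →
    ∀ F : Finset (Finset (Fin n)), (∀ A ∈ F, A.card = b + 3) → ¬ HasPath F (2 * t + 1) →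
    ∑ i ∈ Finset.Icc 1 t, (n - i).choose (b + 2) ≤ F.card →
    ∃ S : Finset (Fin n), S.card = t ∧ ∃ TT : Finset (Finset (Fin n)),
      (∀ T ∈ TT, T.card = b + 2 ∧ Disjoint T S ∧ ∀ x ∈ S, insert x T ∈ F) ∧
      n ^ (b + 2) ≤ Γ * TT.card := by
  set q := (2 * t + 1) * (b + 3) with hq
  set c := (b+2).factorial * 2 ^ (b+2) with hc
  have hc0 : 0 < c := by rw [hc]; positivity
  have hq0 : 0 < q := by rw [hq]; positivity
  obtain ⟨K, n₁, hA⟩ := lemA b t (4 * c * q) ht (Nat.mul_pos (by omega) hq0)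
  refine ⟨2 * c * 2 ^ K, n₁ + 2 * (b+2) + t + 4 * c * (t * t) + 1,
    Nat.mul_pos (by omega) (by positivity), ?_⟩
  intro n hn F hF hp hcard
  obtain ⟨L, hL1, hL2, hL3⟩ := decomp (ℓ := 2 * t + 1) (a := b + 2) (by omega) _ F rfl hF hp
  obtain ⟨X, hX, hbad⟩ := hA n (by omega) F hF hp L hL1 hL2
  set PS := powersetCard (b+2) (univ : Finset (Fin n)) with hPS
  have hPSn : PS.card = n.choose (b+2) := by
    rw [hPS, card_powersetCard, card_univ, Fintype.card_fin]
  set G := PS.filter (fun T => L T ⊆ X ∧ (L T).card = t) with hG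
  set bad := PS.filter (fun T => ¬ (L T ⊆ X ∧ (L T).card ≤ t)) with hbaddef
  have hn0 : 0 < n := by omega
  have h1 : F.card ≤ q * bad.card + (t - 1) * PS.card + G.card := by
    refine hL3.trans ?_
    calc ∑ T ∈ PS, (L T).card
        ≤ ∑ T ∈ PS, ((if ¬ (L T ⊆ X ∧ (L T).card ≤ t) then q else 0) + (t - 1) +
          (if (L T ⊆ X ∧ (L T).card = t) then 1 else 0)) := by
          apply sum_le_sum
          intro T _
          have : (L T).card ≤ q := hL1 T
          by_cases h1 : L T ⊆ X ∧ (L T).card ≤ t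
          · by_cases h2 : (L T).card = t
            · have h3 : L T ⊆ X ∧ (L T).card = t := ⟨h1.1, h2⟩
              rw [if_pos h3]; omega
            · have := h1.2; omega
          · rw [if_pos h1]; omega
      _ = _ := by
        rw [sum_add_distrib, sum_add_distrib, ← card_filter, sum_ite, sum_const_zero, sum_const,
          sum_const]
        simp only [smul_eq_mul, add_zero]
        rw [hG, hbaddef]
        ring
  have h2 := sum_lower (b+1) n t (by omega)
  have h3 : n ^ (b+2) ≤ 2 * c * G.card := by
    have h4 := choose_lower (b+2) n (by omega)
    rw [← hc, ← hPSn] at h4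
    have e1 : b + 1 + 1 = b + 2 := rfl
    rw [e1, ← hPSn] at h2
    have h5 : PS.card ≤ q * bad.card + G.card + t * t * n ^ (b+1) := by
      obtain ⟨s, rfl⟩ : ∃ s, t = s + 1 := ⟨t - 1, by omega⟩
      have : (s+1) * PS.card = s * PS.card + PS.card := by ring
      simp only [Nat.add_sub_cancel] at h1
      omega
    have h6 : 4 * c * (t * t) * n ^ (b+1) ≤ n ^ (b+2) := by
      calc 4 * c * (t * t) * n ^ (b+1) ≤ n * n ^ (b+1) := by
            apply Nat.mul_le_mul_right; omega
        _ = _ := by ring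
    have h7 : 4 * n ^ (b+2) ≤ 4 * c * q * bad.card + 4 * (c * G.card)
        + 4 * c * (t * t) * n ^ (b+1) := by
      calc 4 * n ^ (b+2) ≤ 4 * (c * PS.card) := by gcongr
        _ ≤ 4 * (c * (q * bad.card + G.card + t * t * n ^ (b+1))) := by gcongr
        _ = _ := by ring
    have h8 : 2 * c * G.card = 2 * (c * G.card) := by ring
    omega
  have hGpos : 0 < G.card := by
    by_contra h
    have h0 : G.card = 0 := by omega
    rw [h0] at h3
    have : 0 < n ^ (b+2) := by positivity
    omega
  have h4 : ∃ S ∈ powersetCard t X, G.card ≤ 2 ^ K * (PS.filter (fun T => L T = S)).card := by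
    by_contra hcon
    push Not at hcon
    have hsub : G ⊆ (powersetCard t X).biUnion (fun S => PS.filter (fun T => L T = S)) := by
      intro T hT
      rw [hG, mem_filter] at hT
      rw [mem_biUnion]
      exact ⟨L T, mem_powersetCard.2 hT.2, by simp [hT.1]⟩
    have h5 : G.card ≤ ∑ S ∈ powersetCard t X, (PS.filter (fun T => L T = S)).card :=
      (card_le_card hsub).trans card_biUnion_le
    have h6 : (powersetCard t X).card ≤ 2 ^ K := by
      calc (powersetCard t X).card ≤ X.powerset.card :=
            card_le_card (fun S hS => mem_powerset.2 (mem_powersetCard.1 hS).1)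
        _ = 2 ^ X.card := card_powerset _
        _ ≤ 2 ^ K := Nat.pow_le_pow_right (by norm_num) hX
    have h7 : 2 ^ K * G.card ≤ 2 ^ K * (G.card - 1) := by
      calc 2 ^ K * G.card ≤ 2 ^ K * ∑ S ∈ powersetCard t X, (PS.filter (fun T => L T = S)).card := by
            gcongr
        _ = ∑ S ∈ powersetCard t X, 2 ^ K * (PS.filter (fun T => L T = S)).card := by rw [mul_sum]
        _ ≤ ∑ S ∈ powersetCard t X, (G.card - 1) := by
          apply sum_le_sum
          intro S hS
          have := hcon S hS
          omega
        _ = (powersetCard t X).card * (G.card - 1) := by simp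
        _ ≤ _ := by gcongr
    have := Nat.le_of_mul_le_mul_left h7 (by positivity)
    omega
  obtain ⟨S, hS, hGS⟩ := h4
  rw [mem_powersetCard] at hS
  refine ⟨S, hS.2, PS.filter (fun T => L T = S), ?_, ?_⟩
  · intro T hT
    rw [mem_filter] at hT
    refine ⟨(mem_powersetCard.1 hT.1).2, ?_, ?_⟩
    · rw [disjoint_right]
      intro z hz
      rw [← hT.2] at hz
      exact (hL2 T z hz).2.1
    · intro x hx
      rw [← hT.2] at hx
      exact (hL2 T x hx).2.2
  · calc n ^ (b+2) ≤ 2 * c * G.card := h3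
      _ ≤ 2 * c * (2 ^ K * (PS.filter (fun T => L T = S)).card) := by gcongr
      _ = _ := by ring

lemma key (b t : ℕ) (ht : 1 ≤ t) : ∃ n₀ : ℕ, ∀ n, n₀ ≤ n →
    ∀ F : Finset (Finset (Fin n)), (∀ A ∈ F, A.card = b + 3) → ¬ HasPath F (2 * t + 1) →
    ∑ i ∈ Finset.Icc 1 t, (n - i).choose (b + 2) ≤ F.card →
    ∃ S : Finset (Fin n), S.card = t ∧ ∀ A ∈ F, (A ∩ S).Nonempty := by
  obtain ⟨Γ, n₁, hΓ, hpop⟩ := popular b t ht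
  set q := (2 * t + 1) * (b + 3) with hq
  have hq0 : 0 < q := by rw [hq]; positivity
  set Q := Γ ^ (b+1) * ((b+1).factorial * 2 ^ (b+1)) with hQ
  have hQ0 : 0 < Q := by rw [hQ]; positivity
  obtain ⟨K, n₂, hA⟩ := lemA b t (2 * (Q * q * Q * q)) ht
    (Nat.mul_pos (by omega) (by positivity))
  set r0 := 2 * (b + 3) + t * (b + 2) with hr0
  refine ⟨n₁ + n₂ + Γ * (r0 + 1) + Γ * (2 * (b+1)) + 1, ?_⟩
  intro n hn F hF hp hcard
  have hn0 : 0 < n := by omega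
  obtain ⟨S, hS, TT, hTT, hTTc⟩ := hpop n (by omega) F hF hp hcard
  refine ⟨S, hS, ?_⟩
  by_contra hcon
  push Not at hcon
  obtain ⟨A₀, hA₀, hA₀S⟩ := hcon
  have hbig : r0 * n ^ (b+1) < TT.card := by
    have h1 : Γ * ((r0 + 1) * n ^ (b+1)) ≤ Γ * TT.card := by
      calc Γ * ((r0 + 1) * n ^ (b+1)) = (Γ * (r0+1)) * n ^ (b+1) := by ring
        _ ≤ n * n ^ (b+1) := by apply Nat.mul_le_mul_right; omega
        _ = n ^ (b+2) := by ring
        _ ≤ _ := hTTc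
    have h2 := Nat.le_of_mul_le_mul_left h1 hΓ
    have h3 : 0 < n ^ (b+1) := by positivity
    nlinarith
  set B := F.filter (fun A => Disjoint A S) with hB
  have hBF : B ⊆ F := filter_subset _ _
  set U := B.biUnion id with hU
  have hA₀B : A₀ ∈ B := by
    rw [hB, mem_filter]
    exact ⟨hA₀, disjoint_iff_inter_eq_empty.2 hA₀S⟩
  have hUS : Disjoint U S := by
    rw [hU, disjoint_biUnion_left]
    intro A hA
    exact (mem_filter.1 hA).2
  have hU0 : 0 < U.card := by
    have h1 : A₀ ⊆ U := subset_biUnion_of_mem id hA₀B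
    have h2 := card_le_card h1
    rw [hF _ hA₀] at h2
    omega
  -- edges with exactly one vertex in S avoid U
  have havoid : ∀ T : Finset (Fin n), T.card = b + 2 → Disjoint T S → ∀ x ∈ S,
      insert x T ∈ F → Disjoint T U := by
    intro T hT hTS x hx hxF
    rw [hU, disjoint_biUnion_right]
    intro A hA
    by_contra hd
    rw [hB, mem_filter] at hA
    exact hp (lemB hF S hS TT hTT hbig A hA.1 hA.2 T hT hTS x hx hxF
      (fun h => hd h.symm))
  set Z := (S ∪ U)ᶜ with hZ
  have hZn : Z.card ≤ n := by simpa using card_le_univ Z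
  have hUn : U.card ≤ n := by simpa using card_le_univ U
  obtain ⟨x₀, hx₀⟩ : S.Nonempty := by rw [← card_pos]; omega
  have hTTZ : TT.card ≤ Z.card * n ^ (b+1) := by
    have h1 : TT ⊆ powersetCard (b+2) Z := by
      intro T hT
      obtain ⟨h1, h2, h3⟩ := hTT T hT
      rw [mem_powersetCard]
      refine ⟨?_, h1⟩
      have h4 := havoid T h1 h2 x₀ hx₀ (h3 _ hx₀)
      intro z hz
      rw [hZ, mem_compl, mem_union]
      rintro (h | h)
      · exact disjoint_left.1 h2 hz h
      · exact disjoint_left.1 h4 hz h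
    refine (card_le_card h1).trans ?_
    rw [card_powersetCard]
    calc Z.card.choose (b+2) ≤ Z.card ^ (b+2) := Nat.choose_le_pow _ _
      _ = Z.card * Z.card ^ (b+1) := by ring
      _ ≤ _ := by gcongr
  have hnZ : n ≤ Γ * Z.card := by
    have : n * n ^ (b+1) ≤ (Γ * Z.card) * n ^ (b+1) := by
      calc n * n ^ (b+1) = n ^ (b+2) := by ring
        _ ≤ Γ * TT.card := hTTc
        _ ≤ Γ * (Z.card * n ^ (b+1)) := by gcongr
        _ = _ := by ring
    exact Nat.le_of_mul_le_mul_right this (by positivity)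
  have hCh : n ^ (b+1) ≤ Q * Z.card.choose (b+1) := by
    have h1 : 2 * (b+1) ≤ Z.card := by
      have : Γ * (2 * (b+1)) ≤ Γ * Z.card := by omega
      exact Nat.le_of_mul_le_mul_left this hΓ
    calc n ^ (b+1) ≤ (Γ * Z.card) ^ (b+1) := by gcongr
      _ = Γ ^ (b+1) * Z.card ^ (b+1) := by rw [mul_pow]
      _ ≤ Γ ^ (b+1) * (((b+1).factorial * 2 ^ (b+1)) * Z.card.choose (b+1)) := by
        gcongr
        exact choose_lower _ _ h1
      _ = _ := by rw [hQ]; ring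
  -- bounds on B
  have hpB : ¬ HasPath B (2 * t + 1) := fun h => hp (h.mono hBF)
  have hFB : ∀ A ∈ B, A.card = b + 3 := fun A hA => hF A (hBF hA)
  obtain ⟨L, hL1, hL2, hL3⟩ := decomp (ℓ := 2 * t + 1) (a := b + 2) (by omega) _ B rfl hFB hpB
  obtain ⟨X, hX, hbad⟩ := hA n (by omega) B hFB hpB L hL1 hL2
  have hL4 : B.card ≤ ∑ T ∈ powersetCard (b+2) U, (L T).card := by
    refine hL3.trans (le_of_eq ?_)
    symm
    apply sum_subset (powersetCard_mono (subset_univ _))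
    intro T hT hTn
    rw [card_eq_zero, eq_empty_iff_forall_notMem]
    intro x hx
    apply hTn
    obtain ⟨h1, h2, h3⟩ := hL2 T x hx
    rw [mem_powersetCard]
    exact ⟨(subset_insert x T).trans (subset_biUnion_of_mem id h3), h1⟩
  have hB1 : B.card ≤ q * U.card ^ (b+2) := by
    calc B.card ≤ ∑ T ∈ powersetCard (b+2) U, (L T).card := hL4
      _ ≤ ∑ T ∈ powersetCard (b+2) U, q := sum_le_sum fun T _ => hL1 T
      _ = U.card.choose (b+2) * q := by simp
      _ ≤ U.card ^ (b+2) * q := by gcongr; exact Nat.choose_le_pow _ _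
      _ = _ := by ring
  set bad := (powersetCard (b + 2) univ).filter (fun T => ¬ (L T ⊆ X ∧ (L T).card ≤ t)) with hbd
  have hB2 : B.card ≤ q * bad.card + t * U.card.choose (b+2) := by
    calc B.card ≤ ∑ T ∈ powersetCard (b+2) U, (L T).card := hL4
      _ ≤ ∑ T ∈ powersetCard (b+2) U,
          ((if ¬ (L T ⊆ X ∧ (L T).card ≤ t) then q else 0) + t) := by
          apply sum_le_sum
          intro T _
          have : (L T).card ≤ q := hL1 T
          by_cases h1 : L T ⊆ X ∧ (L T).card ≤ t
          · have := h1.2; omega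
          · rw [if_pos h1]; omega
      _ = ((powersetCard (b+2) U).filter (fun T => ¬ (L T ⊆ X ∧ (L T).card ≤ t))).card * q
          + U.card.choose (b+2) * t := by
          rw [sum_add_distrib, sum_ite, sum_const_zero, sum_const, sum_const, card_powersetCard]
          simp only [smul_eq_mul, add_zero]
      _ ≤ bad.card * q + U.card.choose (b+2) * t := by
          gcongr
          rw [hbd]
          exact filter_subset_filter _ (powersetCard_mono (subset_univ _))
      _ = _ := by ring
  -- missing sets
  set UU := (powersetCard (b+2) Sᶜ).filter (fun T => ¬ Disjoint T U) with hUU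
  have hUUd : ∀ T ∈ UU, T.card = b + 2 ∧ Disjoint T S ∧ ¬ Disjoint T U := by
    intro T hT
    rw [hUU, mem_filter, mem_powersetCard] at hT
    exact ⟨hT.1.2, by rw [← le_compl_iff_disjoint_right]; exact hT.1.1, hT.2⟩
  set M := (S ×ˢ UU).image (fun p => insert p.1 p.2) with hM
  have hMc : M.card = t * UU.card := by
    rw [hM, insimg S UU (fun T hT => (hUUd T hT).2.1), hS]
  set star := (powersetCard (b + 3) univ).filter (fun A => (A ∩ S).Nonempty) with hstar
  have hstarc : star.card = ∑ i ∈ Finset.Icc 1 t, (n - i).choose (b + 2) := by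
    rw [hstar, star_card (b+2) S, hS]
  have hcount : F.card + M.card ≤ B.card + star.card := by
    have h1 : (F \ B) ∪ M ⊆ star := by
      intro A hA
      rw [hstar, mem_filter, mem_powersetCard]
      rw [mem_union] at hA
      rcases hA with hA | hA
      · rw [mem_sdiff] at hA
        refine ⟨⟨subset_univ _, hF A hA.1⟩, ?_⟩
        rw [nonempty_iff_ne_empty]
        intro h
        apply hA.2
        rw [hB, mem_filter]
        exact ⟨hA.1, disjoint_iff_inter_eq_empty.2 h⟩
      · rw [hM, mem_image] at hA
        obtain ⟨⟨x, T⟩, hxT, rfl⟩ := hA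
        rw [mem_product] at hxT
        obtain ⟨h1, h2, h3⟩ := hUUd T hxT.2
        refine ⟨⟨subset_univ _, ?_⟩, x, by simp [hxT.1]⟩
        rw [card_insert_of_notMem, h1]
        exact fun h => disjoint_left.1 h2 h hxT.1
    have h2 : Disjoint (F \ B) M := by
      rw [disjoint_right]
      intro A hA hA'
      rw [hM, mem_image] at hA
      obtain ⟨⟨x, T⟩, hxT, rfl⟩ := hA
      rw [mem_product] at hxT
      obtain ⟨h1, h2, h3⟩ := hUUd T hxT.2
      exact h3 (havoid T h1 h2 x hxT.1 (mem_sdiff.1 hA').1)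
    have h3 := card_le_card h1
    rw [card_union_of_disjoint h2, card_sdiff_of_subset hBF] at h3
    omega
  have hUUc : U.card.choose (b+2) + U.card * Z.card.choose (b+1) ≤ UU.card := by
    have hZU : ∀ T ∈ powersetCard (b+1) Z, Disjoint T U := by
      intro T hT
      rw [mem_powersetCard] at hT
      rw [disjoint_left]
      intro z hz hz'
      have := hT.1 hz
      rw [hZ, mem_compl, mem_union] at this
      exact this (Or.inr hz')
    have h1 := insimg U (powersetCard (b+1) Z) hZU
    rw [card_powersetCard] at h1
    rw [← h1, ← card_powersetCard, ← card_union_of_disjoint]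
    · apply card_le_card
      intro T hT
      rw [hUU, mem_filter, mem_powersetCard]
      rw [mem_union] at hT
      rcases hT with hT | hT
      · rw [mem_powersetCard] at hT
        refine ⟨⟨?_, hT.2⟩, ?_⟩
        · intro z hz
          rw [mem_compl]
          exact disjoint_left.1 hUS (hT.1 hz)
        · intro hd
          have := disjoint_self.1 (hd.mono_right hT.1)
          rw [bot_eq_empty] at this
          rw [this] at hT
          simp at hT
      · rw [mem_image] at hT
        obtain ⟨⟨x, T⟩, hxT, rfl⟩ := hT
        rw [mem_product] at hxT
        have h2 := hZU T hxT.2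
        have h3 := mem_powersetCard.1 hxT.2
        simp only at hxT h2 h3 ⊢
        refine ⟨⟨?_, ?_⟩, ?_⟩
        · intro z hz
          rw [mem_compl]
          rw [mem_insert] at hz
          rcases hz with rfl | hz
          · exact disjoint_left.1 hUS hxT.1
          · have := h3.1 hz
            rw [hZ, mem_compl, mem_union] at this
            exact fun h => this (Or.inl h)
        · rw [card_insert_of_notMem, h3.2]
          exact fun h => disjoint_left.1 h2 h hxT.1
        · rw [not_disjoint_iff]
          exact ⟨x, by simp, hxT.1⟩
    · rw [disjoint_right]
      intro T hT hT'
      rw [mem_image] at hT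
      obtain ⟨⟨x, T⟩, hxT, rfl⟩ := hT
      rw [mem_product] at hxT
      have h2 := hZU T hxT.2
      have h3 := mem_powersetCard.1 hxT.2
      simp only at hxT h2 h3 hT'
      obtain ⟨z, hz⟩ : T.Nonempty := by rw [← card_pos, h3.2]; omega
      rw [mem_powersetCard] at hT'
      exact disjoint_left.1 h2 hz (hT'.1 (mem_insert_of_mem hz))
  -- conclusion
  have hfin : t * (U.card.choose (b+2) + U.card * Z.card.choose (b+1)) ≤ B.card := by
    have : t * (U.card.choose (b+2) + U.card * Z.card.choose (b+1)) ≤ M.card := by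
      rw [hMc]; gcongr
    omega
  rw [mul_add] at hfin
  generalize Z.card.choose (b+1) = C at *
  generalize U.card = m at *
  have hmC : m * C ≤ t * (m * C) := Nat.le_mul_of_pos_left _ ht
  have f1 : m * C ≤ q * m ^ (b+2) := by omega
  have f2 : m * C ≤ q * bad.card := by omega
  have f3 : C ≤ q * m ^ (b+1) := by
    have : m * C ≤ m * (q * m ^ (b+1)) := by
      calc m * C ≤ q * m ^ (b+2) := f1
        _ = _ := by ring
    exact Nat.le_of_mul_le_mul_left this hU0
  have f4 : n ≤ Q * q * m := by
    have : n * n ^ b ≤ (Q * q * m) * n ^ b := by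
      calc n * n ^ b = n ^ (b+1) := by ring
        _ ≤ Q * C := hCh
        _ ≤ Q * (q * m ^ (b+1)) := by gcongr
        _ = Q * q * m * m ^ b := by ring
        _ ≤ _ := by gcongr
    exact Nat.le_of_mul_le_mul_right this (by positivity)
  have f5 : n ^ (b+2) ≤ Q * q * Q * q * bad.card := by
    calc n ^ (b+2) = n * n ^ (b+1) := by ring
      _ ≤ (Q * q * m) * (Q * C) := by gcongr
      _ = Q * q * Q * (m * C) := by ring
      _ ≤ Q * q * Q * (q * bad.card) := by gcongr
      _ = _ := by ring
  have f6 : 0 < n ^ (b+2) := by positivity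
  rw [mul_assoc 2] at hbad
  omega

lemma star_free {n k t : ℕ} (S : Finset (Fin n)) (hS : S.card = t)
    (F : Finset (Finset (Fin n))) (hF : ∀ A ∈ F, (A ∩ S).Nonempty) :
    ¬ ContainsLoosePath k (2 * t + 1) F := by
  rintro ⟨P, -, h1, -, h2⟩
  have h3 : ∀ i, ∃ s, s ∈ P i ∧ s ∈ S := by
    intro i
    obtain ⟨s, hs⟩ := hF _ (h1 i)
    exact ⟨s, mem_inter.1 hs⟩
  choose s hs using h3
  obtain ⟨y, hy, hc⟩ := exists_lt_card_fiber_of_mul_lt_card_of_maps_to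
    (s := (univ : Finset (Fin (2 * t + 1)))) (t := S) (f := s) (n := 2)
    (fun i _ => (hs i).2) (by simp [hS]; omega)
  have hfib : ∀ i j : Fin (2 * t + 1), s i = y → s j = y → i < j → (i : ℕ) + 1 = j := by
    intro i j hi hj hij
    refine (h2 i j hij).1 ⟨y, mem_inter.2 ⟨?_, ?_⟩⟩
    · rw [← hi]; exact (hs i).1
    · rw [← hj]; exact (hs j).1
  rw [two_lt_card] at hc
  obtain ⟨i, hi, j, hj, l, hl, hij, hil, hjl⟩ := hc
  simp only [mem_filter, mem_univ, true_and] at hi hj hl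
  have g : ∀ i j : Fin (2 * t + 1), s i = y → s j = y → i ≠ j →
      (i : ℕ) + 1 = j ∨ (j : ℕ) + 1 = i := by
    intro i j hi hj hij
    rcases lt_or_gt_of_ne hij with h | h
    · left; exact hfib i j hi hj h
    · right; exact hfib j i hj hi h
  have := g i j hi hj hij
  have := g i l hi hl hil
  have := g j l hj hl hjl
  omega

/-- For k ≥ 3, t ≥ 1 and all sufficiently large n, the Turán number of the k-uniform loose
path of length 2t+1 is C(n-1,k-1)+⋯+C(n-t,k-1), and the unique extremal family consists of
all k-subsets of [n] meeting a fixed t-set S. -/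
theorem turan_loose_path_odd (k t : ℕ) (hk : 3 ≤ k) (ht : 1 ≤ t) :
    ∃ n₀ : ℕ, ∀ n : ℕ, n₀ ≤ n →
      IsGreatest {m : ℕ | ∃ F : Finset (Finset (Fin n)),
          (∀ A ∈ F, A.card = k) ∧ ¬ ContainsLoosePath k (2 * t + 1) F ∧ F.card = m}
        (∑ i ∈ Finset.Icc 1 t, (n - i).choose (k - 1)) ∧
      ∀ F : Finset (Finset (Fin n)),
        (∀ A ∈ F, A.card = k) → ¬ ContainsLoosePath k (2 * t + 1) F →
        (F.card = ∑ i ∈ Finset.Icc 1 t, (n - i).choose (k - 1) ↔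
          ∃ S : Finset (Fin n), S.card = t ∧
            F = (Finset.powersetCard k Finset.univ).filter (fun A => (A ∩ S).Nonempty)) := by
  obtain ⟨b, rfl⟩ : ∃ b, k = b + 3 := ⟨k - 3, by omega⟩
  obtain ⟨n₀, hkey⟩ := key b t ht
  refine ⟨n₀ + t, ?_⟩
  intro n hn
  have e : b + 3 - 1 = b + 2 := rfl
  rw [e]
  have hstar : ∀ S : Finset (Fin n), S.card = t →
      ((powersetCard (b + 3) univ).filter (fun A => (A ∩ S).Nonempty)).card =
      ∑ i ∈ Finset.Icc 1 t, (n - i).choose (b + 2) := by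
    intro S hS
    rw [star_card (b+2) S, hS]
  have hmain : ∀ F : Finset (Finset (Fin n)), (∀ A ∈ F, A.card = b + 3) →
      ¬ ContainsLoosePath (b + 3) (2 * t + 1) F →
      ∑ i ∈ Finset.Icc 1 t, (n - i).choose (b + 2) ≤ F.card →
      ∃ S : Finset (Fin n), S.card = t ∧
        F = (powersetCard (b + 3) univ).filter (fun A => (A ∩ S).Nonempty) := by
    intro F hF hp hc
    obtain ⟨S, hS, hFS⟩ := hkey n (by omega) F hF
      (fun h => hp (h.contains hF (by omega) (by omega))) hc
    refine ⟨S, hS, eq_of_subset_of_card_le ?_ ?_⟩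
    · intro A hA
      rw [mem_filter, mem_powersetCard]
      exact ⟨⟨subset_univ _, hF A hA⟩, hFS A hA⟩
    · rw [hstar S hS]; exact hc
  refine ⟨⟨?_, ?_⟩, ?_⟩
  · obtain ⟨S, -, hS⟩ := exists_subset_card_eq
      (by simp; omega : t ≤ (univ : Finset (Fin n)).card)
    refine ⟨(powersetCard (b + 3) univ).filter (fun A => (A ∩ S).Nonempty), ?_, ?_, hstar S hS⟩
    · intro A hA
      exact (mem_powersetCard.1 (mem_filter.1 hA).1).2
    · exact star_free S hS _ (fun A hA => (mem_filter.1 hA).2)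
  · rintro m ⟨F, hF, hp, rfl⟩
    by_contra hlt
    push Not at hlt
    obtain ⟨S, hS, hFS⟩ := hmain F hF hp hlt.le
    rw [hFS, hstar S hS] at hlt
    exact lt_irrefl _ hlt
  · intro F hF hp
    constructor
    · intro h
      exact hmain F hF hp h.ge
    · rintro ⟨S, hS, rfl⟩
      exact hstar S hS
end

section
/- Let k and t be positive integers with k ≥ 3. There exists n₀ = n₀(k,t) such that for all integers n ≥ n₀, the maximum number of edges in a k-uniform hypergraph on n vertices containing no k-uniform loose path of length 2t+2 equals C(n−1,k−1) + C(n−2,k−1) + … + C(n−t,k−1) + 1; moreover, a family F ⊆ binom([n],k) with no loose path of length 2t+2 attains this maximum size if and only if there exists a set S ⊆ [n] with |S| = t such that F consists of exactly all k-subsets of [n] that intersect S together with one additional k-set disjoint from S. -/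
open Finset

namespace LPaux

def un {n : ℕ} (L : List (Finset (Fin n))) : Finset (Fin n) := L.foldr (fun a b => a ∪ b) ∅

@[simp] lemma un_nil {n : ℕ} : un ([] : List (Finset (Fin n))) = ∅ := rfl
@[simp] lemma un_cons {n : ℕ} (e : Finset (Fin n)) (L : List (Finset (Fin n))) :
    un (e :: L) = e ∪ un L := rfl

lemma subset_un {n : ℕ} {L : List (Finset (Fin n))} {e : Finset (Fin n)} (h : e ∈ L) :
    e ⊆ un L := by
  induction L with
  | nil => simp at h
  | cons f L ih =>
    rcases List.mem_cons.1 h with rfl | h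
    · exact subset_union_left
    · exact (ih h).trans subset_union_right

lemma card_un {n k : ℕ} {L : List (Finset (Fin n))} (h : ∀ e ∈ L, e.card = k) :
    (un L).card ≤ k * L.length := by
  induction L with
  | nil => simp
  | cons f L ih =>
    have h1 := ih (fun e he => h e (List.mem_cons_of_mem _ he))
    have h2 := h f (List.mem_cons_self)
    have h3 := card_union_le f (un L)
    simp only [un_cons, List.length_cons]
    rw [mul_add]; omega

def LP {n : ℕ} : List (Finset (Fin n)) → Prop
  | [] => True
  | [_] => True
  | e :: f :: L => (e ∩ f).Nonempty ∧ Disjoint e (un L) ∧ LP (f :: L)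

lemma LP_get {n : ℕ} : ∀ (L : List (Finset (Fin n))), LP L → ∀ (i j : ℕ) (hj : j < L.length) (hij : i < j),
    ((L[i]'(hij.trans hj)) ∩ (L[j]'hj)).Nonempty ↔ i + 1 = j
  | [], _, i, j, hj, hij => by simp at hj
  | [e], _, i, j, hj, hij => by simp at hj; omega
  | e :: f :: L, h, i, j, hj, hij => by
    obtain ⟨h1, h2, h3⟩ := h
    have ih := LP_get (f :: L) h3
    rcases i with _ | i
    · rcases j with _ | _ | j
      · omega
      · simpa using h1
      · simp only [List.getElem_cons_zero, List.getElem_cons_succ]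
        constructor
        · intro h
          exfalso
          have hm : L[j]'(by simpa using hj) ⊆ un L := subset_un (List.getElem_mem _)
          exact h.ne_empty (disjoint_iff_inter_eq_empty.1 (h2.mono_right hm))
        · intro h; omega
    · rcases j with _ | j
      · omega
      · have := ih i j (by simpa using hj) (by omega)
        simp only [List.getElem_cons_succ]
        rw [this]; omega

lemma LP_contains {n k : ℕ} {F : Finset (Finset (Fin n))} (hk : 1 ≤ k) (hF : ∀ A ∈ F, A.card = k)
    (L : List (Finset (Fin n))) (hL : LP L) (hm : ∀ e ∈ L, e ∈ F) (h3 : 3 ≤ L.length) {l : ℕ}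
    (hl : L.length = l) : ContainsLoosePath k l F := by
  subst hl
  have key := LP_get L hL
  refine ⟨fun i => L[i.1]'i.2, ?_, fun i => hm _ (List.getElem_mem _),
    fun i => hF _ (hm _ (List.getElem_mem _)), fun i j hij => key i.1 j.1 j.2 hij⟩
  have ne : ∀ i (hi : i < L.length), (L[i]'hi).Nonempty := fun i hi => by
    rw [← card_pos, hF _ (hm _ (List.getElem_mem _))]; omega
  have main : ∀ i j (hj : j < L.length) (hij : i < j), (L[i]'(hij.trans hj)) ≠ L[j]'hj := by
    intro i j hj hij heq
    have h1 := (key i j hj hij).1 (by rw [heq, inter_self]; exact ne _ _)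
    subst h1
    by_cases h : i + 2 < L.length
    · have h2 := (key (i+1) (i+2) h (by omega)).2 rfl
      rw [← heq] at h2
      have := (key i (i+2) h (by omega)).1 h2
      omega
    · have h2 := (key (i-1) i (by omega) (by omega)).2 (by omega)
      rw [heq] at h2
      have := (key (i-1) (i+1) hj (by omega)).1 h2
      omega
  intro i j hij
  simp only at hij
  rcases lt_trichotomy i.1 j.1 with h | h | h
  · exact absurd hij (main _ _ j.2 h)
  · exact Fin.ext h
  · exact absurd hij.symm (main _ _ i.2 h)

lemma chain {n k s : ℕ} (hk : 2 ≤ k) {F G : Finset (Finset (Fin n))} (hF : ∀ A ∈ F, A.card = k)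
    (hG : ∀ T ∈ G, T.Nonempty)
    (hav : ∀ W : Finset (Fin n), W.card ≤ s → ∃ T ∈ G, Disjoint T W)
    (W : Finset (Fin n)) :
    ∀ (vs : List (Fin n)) (v : Fin n) (e : Finset (Fin n)) (L : List (Finset (Fin n))),
    (v :: vs).Nodup → (∀ u ∈ v :: vs, ∀ T ∈ G, insert u T ∈ F) → LP (e :: L) →
    (∀ f ∈ e :: L, f ∈ F) → v ∈ e → v ∉ un L → (∀ u ∈ vs, u ∉ un (e :: L)) →
    (∀ u ∈ v :: vs, u ∉ W) → Disjoint (un (e :: L)) W →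
    k * (L.length + 1 + 2 * vs.length) + W.card + vs.length + 1 ≤ s →
    ∃ v' ∈ v :: vs, ∃ e' L', LP (e' :: L') ∧ (∀ f ∈ e' :: L', f ∈ F) ∧ v' ∈ e' ∧ v' ∉ un L' ∧
      Disjoint (un (e' :: L')) W ∧ L'.length = L.length + 2 * vs.length := by
  intro vs
  induction vs with
  | nil =>
    intro v e L hnd hin hLP hmem hve hvL hvs hvW hW hs
    exact ⟨v, by simp, e, L, hLP, hmem, hve, hvL, hW, by simp⟩
  | cons v2 vs ih =>
    intro v e L hnd hin hLP hmem hve hvL hvs hvW hW hs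
    obtain ⟨T, hTG, hT⟩ := hav (un (e :: L) ∪ W ∪ (v :: v2 :: vs).toFinset) (by
      have h1 := card_un (k := k) (L := e :: L) (fun f hf => hF f (hmem f hf))
      have h2 := card_union_le (un (e :: L) ∪ W) (v :: v2 :: vs).toFinset
      have h3 := card_union_le (un (e :: L)) W
      have h4 := List.toFinset_card_le (v :: v2 :: vs)
      simp only [List.length_cons] at h1 h4 hs
      have h5 : k * (L.length + 1 + 2 * (vs.length + 1)) = k * (L.length + 1) + 2 * k * (vs.length+1) := by ring
      have h6 : vs.length + 1 ≤ 2 * k * (vs.length + 1) := Nat.le_mul_of_pos_left _ (by omega)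
      omega)
    rw [disjoint_union_right, disjoint_union_right] at hT
    obtain ⟨⟨hT1, hT2⟩, hT3⟩ := hT
    have hvT : ∀ u ∈ v :: v2 :: vs, u ∉ T := fun u hu huT =>
      (disjoint_left.1 hT3 huT) (by simpa using hu)
    have hv2 : v2 ≠ v := by
      rintro rfl; simp at hnd
    have hv2e : v2 ∉ un (e :: L) := hvs v2 (by simp)
    have hT1' := hT1
    rw [un_cons, disjoint_union_right] at hT1'
    obtain ⟨v', hv', e', L', h1, h2, h3, h4, h5, h6⟩ := ih v2 (insert v2 T) (insert v T :: e :: L)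
      (by simp at hnd ⊢; tauto) (fun u hu => hin u (List.mem_cons_of_mem _ hu))
      (by
        refine ⟨?_, ?_, ?_, ?_, hLP⟩
        · obtain ⟨x, hx⟩ := hG T hTG
          exact ⟨x, by simp [hx]⟩
        · rw [disjoint_insert_left]; exact ⟨hv2e, hT1⟩
        · exact ⟨v, by simp [hve]⟩
        · rw [disjoint_insert_left]; exact ⟨hvL, hT1'.2⟩)
      (by
        intro f hf
        simp only [List.mem_cons] at hf
        rcases hf with rfl | rfl | hf
        · exact hin v2 (by simp) T hTG
        · exact hin v (by simp) T hTG
        · exact hmem f (by simpa using hf))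
      (by simp)
      (by
        rw [un_cons]
        simp only [mem_union, mem_insert, not_or]
        exact ⟨⟨hv2, hvT v2 (by simp)⟩, hv2e⟩)
      (by
        intro u hu
        have hu1 : u ≠ v := by rintro rfl; simp at hnd; tauto
        have hu2 : u ≠ v2 := by rintro rfl; simp at hnd; tauto
        have hu3 := hvT u (by simp [hu])
        have hu4 := hvs u (by simp [hu])
        rw [un_cons, un_cons]
        simp only [mem_union, mem_insert, not_or]
        exact ⟨⟨hu2, hu3⟩, ⟨hu1, hu3⟩, hu4⟩)
      (fun u hu => hvW u (List.mem_cons_of_mem _ hu))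
      (by
        rw [un_cons, un_cons, disjoint_union_left, disjoint_union_left, disjoint_insert_left,
          disjoint_insert_left]
        exact ⟨⟨hvW v2 (by simp), hT2⟩, ⟨hvW v (by simp), hT2⟩, hW⟩)
      (by
        simp only [List.length_cons] at hs ⊢
        have : L.length + 1 + 1 + 1 + 2 * vs.length = L.length + 1 + 2 * (vs.length + 1) := by ring
        rw [this]; omega)
    exact ⟨v', List.mem_cons_of_mem _ hv', e', L', h1, h2, h3, h4, h5, by
      simp only [List.length_cons] at h6 ⊢; omega⟩


def proj {n k : ℕ} (col : Fin n → Fin k) (e : Finset (Fin n)) (A : Finset (Fin k)) : Finset (Fin n) :=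
  e.filter (fun v => col v ∈ A)

def Fat {n : ℕ} (s : ℕ) (F : Finset (Finset (Fin n))) (p : Finset (Fin n)) : Prop :=
  ∀ W : Finset (Fin n), W.card ≤ s → ∃ f ∈ F, p ⊆ f ∧ Disjoint (f \ p) W

lemma peel {n k : ℕ} (s : ℕ) (col : Fin n → Fin k) (J : Finset (Finset (Fin k))) :
    ∀ (m : ℕ) (F : Finset (Finset (Fin n))), F.card = m →
    ∃ R ⊆ F, ∃ B : Finset (Fin k) → Finset (Finset (Fin n)), (∀ A, B A ⊆ F) ∧
      F ⊆ R ∪ J.biUnion B ∧ (∀ A ∈ J, ∀ e ∈ R, Fat s R (proj col e A)) ∧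
      (∀ A, ∀ p, ∃ W : Finset (Fin n), W.card ≤ s ∧ ∀ e ∈ B A, proj col e A = p → ¬ Disjoint (e \ p) W) := by
  intro m
  induction m with
  | zero =>
    intro F hF
    rw [card_eq_zero] at hF
    subst hF
    exact ⟨∅, by simp, fun _ => ∅, by simp, by simp, by simp, fun A p => ⟨∅, by simp, by simp⟩⟩
  | succ m ih =>
    intro F hF
    by_cases hst : ∀ A ∈ J, ∀ e ∈ F, Fat s F (proj col e A)
    · exact ⟨F, Subset.rfl, fun _ => ∅, by simp, subset_union_left, hst,
        fun A p => ⟨∅, by simp, by simp⟩⟩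
    · push Not at hst
      obtain ⟨A0, hA0, e0, he0, hnf⟩ := hst
      obtain ⟨R, hR, B, hB, hc, hfat, hthin⟩ := ih (F.erase e0) (by rw [card_erase_of_mem he0, hF]; rfl)
      refine ⟨R, hR.trans (erase_subset _ _), fun A => if A = A0 then insert e0 (B A) else B A, ?_, ?_, hfat, ?_⟩
      · intro A
        simp only
        split_ifs
        · rw [insert_subset_iff]; exact ⟨he0, (hB A).trans (erase_subset _ _)⟩
        · exact (hB A).trans (erase_subset _ _)
      · intro e he
        by_cases h : e = e0
        · subst h
          rw [mem_union, mem_biUnion]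
          exact Or.inr ⟨A0, hA0, by simp⟩
        · have := hc (mem_erase.2 ⟨h, he⟩)
          rw [mem_union, mem_biUnion] at this ⊢
          rcases this with h | ⟨A, hA, h⟩
          · exact Or.inl h
          · refine Or.inr ⟨A, hA, ?_⟩
            split_ifs <;> simp [h]
      · intro A p
        by_cases hA : A = A0
        · subst hA
          simp only [if_true]
          by_cases hp : proj col e0 A = p
          · unfold Fat at hnf
            push Not at hnf
            obtain ⟨W, hW, hW2⟩ := hnf
            refine ⟨W, hW, fun e he hep => ?_⟩
            have heF : e ∈ F := by
              rcases mem_insert.1 he with rfl | h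
              · exact he0
              · exact erase_subset _ _ (hB _ h)
            rw [hp] at hW2
            exact hW2 e heF (by rw [← hep]; exact filter_subset _ _)
          · obtain ⟨W, hW, hW2⟩ := hthin A p
            refine ⟨W, hW, fun e he hep => ?_⟩
            rcases mem_insert.1 he with rfl | h
            · exact absurd hep hp
            · exact hW2 e h hep
        · simp only [if_neg hA]
          exact hthin A p

lemma thin_sub {n k : ℕ} (s : ℕ) (col : Fin n → Fin k) (A : Finset (Fin k))
    (B : Finset (Finset (Fin n)))
    (h : ∀ p, ∃ W : Finset (Fin n), W.card ≤ s ∧ ∀ e ∈ B, proj col e A = p → ¬ Disjoint (e \ p) W) :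
    ∃ B' ⊆ B, B.card ≤ s * B'.card ∧
      ∀ e ∈ B', ∀ f ∈ B', proj col e A = proj col f A → e ∩ f ≠ proj col e A := by
  have key : ∀ p, ∃ Q ⊆ B.filter (fun e => proj col e A = p),
      (B.filter (fun e => proj col e A = p)).card ≤ s * Q.card ∧
      ∀ e ∈ Q, ∀ f ∈ Q, e ∩ f ≠ p := by
    intro p
    obtain ⟨W, hW, hW2⟩ := h p
    set Bp := B.filter (fun e => proj col e A = p) with hBp
    by_cases hne : Bp = ∅
    · exact ⟨∅, by simp, by simp [hne], by simp⟩
    have hsub : Bp ⊆ W.biUnion (fun w => Bp.filter (fun e => w ∈ e \ p)) := by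
      intro e he
      have he' := mem_filter.1 he
      have := hW2 e he'.1 he'.2
      rw [not_disjoint_iff] at this
      obtain ⟨w, hw1, hw2⟩ := this
      exact mem_biUnion.2 ⟨w, hw2, mem_filter.2 ⟨he, hw1⟩⟩
    have hWne : W.Nonempty := by
      by_contra hW0
      rw [not_nonempty_iff_eq_empty] at hW0
      subst hW0
      exact hne (by simpa using hsub)
    obtain ⟨w, hw, hmax⟩ := exists_max_image W (fun w => (Bp.filter (fun e => w ∈ e \ p)).card) hWne
    refine ⟨Bp.filter (fun e => w ∈ e \ p), filter_subset _ _, ?_, ?_⟩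
    · calc Bp.card ≤ _ := card_le_card hsub
        _ ≤ W.card * _ := card_biUnion_le_card_mul _ _ _ hmax
        _ ≤ _ := Nat.mul_le_mul_right _ hW
    · intro e he f hf hef
      have h1 := mem_sdiff.1 (mem_filter.1 he).2
      have h2 := mem_sdiff.1 (mem_filter.1 hf).2
      apply h1.2
      rw [← hef]
      exact mem_inter.2 ⟨h1.1, h2.1⟩
  choose Q hQ1 hQ2 hQ3 using key
  have hmemQ : ∀ p e, e ∈ Q p → e ∈ B ∧ proj col e A = p := fun p e he => mem_filter.1 (hQ1 p he)
  refine ⟨(B.image (fun e => proj col e A)).biUnion Q, ?_, ?_, ?_⟩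
  · intro e he
    obtain ⟨p, _, hp⟩ := mem_biUnion.1 he
    exact (hmemQ p e hp).1
  · rw [card_biUnion]
    · rw [card_eq_sum_card_image (fun e => proj col e A) B, mul_sum]
      exact sum_le_sum (fun p _ => hQ2 p)
    · intro p _ q _ hpq
      rw [Function.onFun, disjoint_left]
      intro e he he'
      exact hpq ((hmemQ p e he).2.symm.trans (hmemQ q e he').2)
  · intro e he f hf hef
    obtain ⟨p, _, hp⟩ := mem_biUnion.1 he
    obtain ⟨q, _, hq⟩ := mem_biUnion.1 hf
    have h1 := (hmemQ p e hp).2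
    have h2 := (hmemQ q f hq).2
    have : p = q := by rw [← h1, ← h2, hef]
    subst this
    rw [h1]
    exact hQ3 p e hp f hq

lemma inter_eq_proj {n k : ℕ} (col : Fin n → Fin k) (e f : Finset (Fin n)) (he : Set.InjOn col e)
    (A : Finset (Fin k)) (h : (e ∩ f).image col = A) : e ∩ f = proj col e A := by
  subst h
  ext v
  simp only [proj, mem_filter, mem_inter, mem_image]
  constructor
  · intro hv; exact ⟨hv.1, v, hv, rfl⟩
  · rintro ⟨hv, w, hw, hwv⟩
    have := he hw.1 hv hwv
    subst this
    exact hw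

lemma homog {n k : ℕ} (s : ℕ) (hs : 1 ≤ s) (col : Fin n → Fin k) :
    ∀ (j : ℕ) (J : Finset (Finset (Fin k))), J.card = j → ∀ (F : Finset (Finset (Fin n))),
    (∀ e ∈ F, Set.InjOn col e) → (∀ e ∈ F, ∀ f ∈ F, e ≠ f → (e ∩ f).image col ∈ J) →
    ∃ F' ⊆ F, ∃ J' ⊆ J, F.card ≤ 2 * (2 * 2 ^ k * s) ^ j * F'.card ∧
      (∀ e ∈ F', ∀ f ∈ F', e ≠ f → (e ∩ f).image col ∈ J') ∧
      (∀ A ∈ J', ∀ e ∈ F', Fat s F' (proj col e A)) := by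
  intro j
  induction j with
  | zero =>
    intro J hJ F hF hT
    rw [card_eq_zero] at hJ
    subst hJ
    exact ⟨F, Subset.rfl, ∅, Subset.rfl, by simp; omega, hT, by simp⟩
  | succ j ih =>
    intro J hJ F hF hT
    obtain ⟨R, hR, B, hB, hc, hfat, hthin⟩ := peel s col J F.card F rfl
    have hC : 1 ≤ 2 * 2 ^ k * s := Nat.mul_pos (by positivity) hs
    by_cases hcase : F.card ≤ 2 * R.card
    · refine ⟨R, hR, J, Subset.rfl, ?_, fun e he f hf => hT e (hR he) f (hR hf), hfat⟩
      calc F.card ≤ 2 * R.card := hcase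
        _ ≤ 2 * (2 * 2 ^ k * s) ^ (j+1) * R.card := by
          apply Nat.mul_le_mul_right
          exact Nat.le_mul_of_pos_right _ (Nat.pow_pos hC)
    · push Not at hcase
      have h1 : F.card ≤ 2 * ∑ A ∈ J, (B A).card := by
        have h2 := card_le_card hc
        have h3 := card_union_le R (J.biUnion B)
        have h4 : (J.biUnion B).card ≤ ∑ A ∈ J, (B A).card := card_biUnion_le
        omega
      have hJne : J.Nonempty := by rw [← card_pos]; omega
      obtain ⟨A, hA, hmax⟩ := exists_max_image J (fun A => (B A).card) hJne
      have h5 : ∑ A ∈ J, (B A).card ≤ J.card * (B A).card := by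
        rw [← smul_eq_mul]; exact sum_le_card_nsmul _ _ _ hmax
      have h6 : J.card ≤ 2 ^ k := by
        calc J.card ≤ _ := card_le_univ J
          _ = _ := by simp
      obtain ⟨B', hB', hB'c, hB'd⟩ := thin_sub s col A (B A) (hthin A)
      have hB'F : B' ⊆ F := hB'.trans (hB A)
      obtain ⟨F', hF', J', hJ', h7, h8, h9⟩ := ih (J.erase A) (by rw [card_erase_of_mem hA, hJ]; rfl) B'
        (fun e he => hF e (hB'F he)) (by
          intro e he f hf hef
          refine mem_erase.2 ⟨?_, hT e (hB'F he) f (hB'F hf) hef⟩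
          intro hh
          have q1 := inter_eq_proj col e f (hF e (hB'F he)) A hh
          have q2 := inter_eq_proj col f e (hF f (hB'F hf)) A (by rw [inter_comm]; exact hh)
          exact hB'd e he f hf (by rw [← q1, ← q2, inter_comm]) q1)
      refine ⟨F', hF'.trans hB'F, J', hJ'.trans (erase_subset _ _), ?_, h8, h9⟩
      calc F.card ≤ 2 * (2 ^ k * (s * (2 * (2 * 2 ^ k * s) ^ j * F'.card))) := by
            refine h1.trans (Nat.mul_le_mul_left _ (h5.trans (Nat.mul_le_mul h6 (hB'c.trans ?_))))
            exact Nat.mul_le_mul_left _ h7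
        _ = _ := by ring

lemma fat_path {n k s : ℕ} (col : Fin n → Fin k) (F : Finset (Finset (Fin n)))
    (hk : ∀ e ∈ F, e.card = k) (hr : ∀ e ∈ F, e.image col = univ)
    (A B : Finset (Fin k)) (hA : A.Nonempty) (hB : B.Nonempty) (hAB : Disjoint A B)
    (hfA : ∀ e ∈ F, Fat s F (proj col e A)) (hfB : ∀ e ∈ F, Fat s F (proj col e B))
    (hne : F.Nonempty) : ∀ m, k * m ≤ s → ∃ e L, LP (e :: L) ∧ L.length = m ∧ (∀ f ∈ e :: L, f ∈ F) ∧
      (Disjoint (proj col e A) (un L) ∨ Disjoint (proj col e B) (un L)) := by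
  have step : ∀ (A B : Finset (Fin k)) (hA : A.Nonempty) (hAB : Disjoint A B)
      (hfA : ∀ e ∈ F, Fat s F (proj col e A)) e L, LP (e :: L) → (∀ f ∈ e :: L, f ∈ F) →
      (un (e :: L)).card ≤ s → Disjoint (proj col e A) (un L) →
      ∃ f ∈ F, LP (f :: e :: L) ∧ Disjoint (proj col f B) (un (e :: L)) := by
    intro A B hA hAB hfA e L hL hm hc hd
    obtain ⟨f, hf, hf1, hf2⟩ := hfA e (hm e (by simp)) _ hc
    refine ⟨f, hf, ⟨?_, ?_, hL⟩, ?_⟩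
    · obtain ⟨a, ha⟩ := hA
      have : a ∈ e.image col := by rw [hr e (hm e (by simp))]; simp
      obtain ⟨v, hv, rfl⟩ := mem_image.1 this
      have hv' : v ∈ proj col e A := mem_filter.2 ⟨hv, ha⟩
      exact ⟨v, mem_inter.2 ⟨hf1 hv', hv⟩⟩
    · rw [disjoint_left]
      intro x hx hxL
      by_cases hxp : x ∈ proj col e A
      · exact disjoint_left.1 hd hxp hxL
      · exact disjoint_left.1 hf2 (mem_sdiff.2 ⟨hx, hxp⟩) (by simp [hxL])
    · rw [disjoint_left]
      intro x hx hxL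
      have hx' := mem_filter.1 hx
      by_cases hxp : x ∈ proj col e A
      · exact disjoint_left.1 hAB (mem_filter.1 hxp).2 hx'.2
      · exact disjoint_left.1 hf2 (mem_sdiff.2 ⟨hx'.1, hxp⟩) hxL
  intro m
  induction m with
  | zero =>
    intro _
    obtain ⟨e, he⟩ := hne
    exact ⟨e, [], trivial, rfl, by simpa using he, by simp⟩
  | succ m ih =>
    intro hm
    obtain ⟨e, L, h1, h2, h3, h4⟩ := ih (le_trans (Nat.mul_le_mul_left _ (by omega)) hm)
    have hc : (un (e :: L)).card ≤ s := by
      refine (card_un (k := k) (fun f hf => hk f (h3 f hf))).trans ?_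
      simpa [h2] using hm
    rcases h4 with h4 | h4
    · obtain ⟨f, hf, q1, q2⟩ := step A B hA hAB hfA e L h1 h3 hc h4
      exact ⟨f, e :: L, q1, by simp [h2], by
        intro g hg
        rcases List.mem_cons.1 hg with rfl | hg
        · exact hf
        · exact h3 g hg, Or.inr q2⟩
    · obtain ⟨f, hf, q1, q2⟩ := step B A hB hAB.symm hfB e L h1 h3 hc h4
      exact ⟨f, e :: L, q1, by simp [h2], by
        intro g hg
        rcases List.mem_cons.1 hg with rfl | hg
        · exact hf
        · exact h3 g hg, Or.inl q2⟩

lemma fat_closed {n k s : ℕ} (hs : 2 * k ≤ s) (col : Fin n → Fin k) (F : Finset (Finset (Fin n)))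
    (hk : ∀ e ∈ F, e.card = k) (hr : ∀ e ∈ F, e.image col = univ)
    (J : Finset (Finset (Fin k)))
    (hJ : ∀ e ∈ F, ∀ f ∈ F, e ≠ f → (e ∩ f).image col ∈ J)
    (hfat : ∀ A ∈ J, ∀ e ∈ F, Fat s F (proj col e A)) (hne : F.Nonempty)
    (A B : Finset (Fin k)) (hA : A ∈ J) (hB : B ∈ J) : A ∩ B ∈ J := by
  obtain ⟨e, he⟩ := hne
  obtain ⟨f, hf, hf1, hf2⟩ := hfat A hA e he e (by rw [hk e he]; omega)
  obtain ⟨g, hg, hg1, hg2⟩ := hfat B hB e he (e ∪ f) (by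
    have := card_union_le e f
    rw [hk e he, hk f hf] at this; omega)
  have hfg : f ∩ g = proj col e (A ∩ B) := by
    ext x
    simp only [proj, mem_inter, mem_filter]
    constructor
    · rintro ⟨hxf, hxg⟩
      have hxB : x ∈ proj col e B := by
        by_contra h
        exact disjoint_left.1 hg2 (mem_sdiff.2 ⟨hxg, h⟩) (by simp [hxf])
      have hxe := (mem_filter.1 hxB)
      have hxA : x ∈ proj col e A := by
        by_contra h
        exact disjoint_left.1 hf2 (mem_sdiff.2 ⟨hxf, h⟩) hxe.1
      exact ⟨hxe.1, (mem_filter.1 hxA).2, hxe.2⟩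
    · rintro ⟨h1, h2, h3⟩
      exact ⟨hf1 (mem_filter.2 ⟨h1, h2⟩), hg1 (mem_filter.2 ⟨h1, h3⟩)⟩
  have himg : (f ∩ g).image col = A ∩ B := by
    rw [hfg]
    ext a
    simp only [proj, mem_image, mem_filter]
    constructor
    · rintro ⟨v, ⟨_, h⟩, rfl⟩; exact h
    · intro ha
      have : a ∈ e.image col := by rw [hr e he]; simp
      obtain ⟨v, hv, rfl⟩ := mem_image.1 this
      exact ⟨v, ⟨hv, ha⟩, rfl⟩
  by_cases hfg' : f = g
  · subst hfg'
    rw [inter_self, hr f hf] at himg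
    have : A = univ := by
      rw [eq_univ_iff_forall]; intro x
      have : x ∈ A ∩ B := by rw [← himg]; simp
      exact (mem_inter.1 this).1
    rw [this, univ_inter]; exact hB
  · rw [← himg]; exact hJ f hf g hg hfg'

lemma col_count {n k : ℕ} (e : Finset (Fin n)) (he : e.card = k) :
    k ^ n ≤ k ^ k * ((univ : Finset (Fin n → Fin k)).filter (fun c => Set.InjOn c e)).card := by
  classical
  let σ : e ≃ Fin k := e.equivFinOfCardEq he
  have : (univ : Finset (Fin n → Fin k)).card ≤ ((univ : Finset (Fin k → Fin k)) ×ˢ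
      ((univ : Finset (Fin n → Fin k)).filter (fun c => Set.InjOn c e))).card := by
    apply card_le_card_of_injOn
      (fun c => (fun i => c (σ.symm i), fun v => if h : v ∈ e then σ ⟨v, h⟩ else c v))
    · intro c _
      simp only [coe_product, coe_univ, coe_filter, mem_univ, true_and, Set.mem_prod, Set.mem_univ,
        Set.mem_ofPred_eq]
      intro v hv w hw hvw
      have hv' : v ∈ e := hv
      have hw' : w ∈ e := hw
      simp only [hv', hw', dif_pos] at hvw
      simpa using σ.injective hvw
    · intro c _ d _ hcd
      simp only [Prod.mk.injEq] at hcd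
      funext v
      by_cases hv : v ∈ e
      · have := congrFun hcd.1 (σ ⟨v, hv⟩)
        simpa using this
      · have := congrFun hcd.2 v
        simpa [hv] using this
  simpa [card_product] using this

lemma exists_col {n k : ℕ} (hk : 1 ≤ k) (F : Finset (Finset (Fin n))) (hF : ∀ e ∈ F, e.card = k) :
    ∃ col : Fin n → Fin k, ∃ F1 ⊆ F, (∀ e ∈ F1, Set.InjOn col (e : Set (Fin n))) ∧
      F.card ≤ k ^ k * F1.card := by
  classical
  have : Nonempty (Fin k) := ⟨⟨0, hk⟩⟩
  have h1 : ∑ c : Fin n → Fin k, F.card ≤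
      ∑ c : Fin n → Fin k, k ^ k * (F.filter (fun e : Finset (Fin n) => Set.InjOn c (e : Set (Fin n)))).card := by
    rw [← mul_sum]
    have : ∑ c : Fin n → Fin k, (F.filter (fun e : Finset (Fin n) => Set.InjOn c (e : Set (Fin n)))).card =
        ∑ e ∈ F, ((univ : Finset (Fin n → Fin k)).filter (fun c => Set.InjOn c e)).card := by
      simp only [card_filter]
      rw [sum_comm]
    rw [this, mul_sum]
    calc _ = ∑ e ∈ F, k ^ n := by simp [mul_comm]
      _ ≤ _ := sum_le_sum (fun e he => col_count e (hF e he))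
  obtain ⟨c, _, hc⟩ := exists_le_of_sum_le (univ_nonempty) h1
  exact ⟨c, _, filter_subset _ _, fun e he => (mem_filter.1 he).2, hc⟩

lemma star_sub (k l : ℕ) (hk : 1 ≤ k) (hl : 3 ≤ l) : ∃ c : ℕ, 1 ≤ c ∧ ∀ (n : ℕ)
    (F : Finset (Finset (Fin n))), (∀ e ∈ F, e.card = k) → ¬ ContainsLoosePath k l F →
    ∃ F' ⊆ F, F.card ≤ c * F'.card ∧ ∃ X : Finset (Fin n), (∀ e ∈ F', (e ∩ X).card = 1) ∧
      ∀ e ∈ F', ∀ f ∈ F', (e ∩ f).Nonempty → e ∩ X = f ∩ X := by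
  classical
  set s := k * l with hs
  have hs1 : 1 ≤ s := Nat.mul_pos hk (by omega)
  refine ⟨k ^ k * (2 * (2 * 2 ^ k * s) ^ (2 ^ k)), by
    apply Nat.mul_pos (Nat.pow_pos hk)
    apply Nat.mul_pos (by norm_num)
    apply Nat.pow_pos
    exact Nat.mul_pos (by positivity) hs1, ?_⟩
  intro n F hF hP
  obtain ⟨col, F1, hF1, hF1i, hcol⟩ := exists_col hk F hF
  obtain ⟨F', hF', J, -, h1, h2, h3⟩ := homog s hs1 col (2 ^ k) univ (by simp) F1
    hF1i (by simp)
  have hF'F : F' ⊆ F := hF'.trans hF1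
  have hk' : ∀ e ∈ F', e.card = k := fun e he => hF e (hF'F he)
  have hinj : ∀ e ∈ F', Set.InjOn col (e : Set (Fin n)) := fun e he => hF1i e (hF' he)
  have hr : ∀ e ∈ F', e.image col = univ := by
    intro e he
    apply eq_univ_of_card
    rw [card_image_of_injOn (hinj e he), hk' e he, Fintype.card_fin]
  refine ⟨F', hF'F, hcol.trans (by rw [mul_assoc]; exact Nat.mul_le_mul_left _ h1), ?_⟩
  by_cases hne : F'.Nonempty
  swap
  · rw [not_nonempty_iff_eq_empty] at hne
    exact ⟨∅, by simp [hne], by simp [hne]⟩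
  have hx : ∃ x : Fin k, ∀ A ∈ J, A.Nonempty → x ∈ A := by
    by_cases hJ : (J.filter (fun A => A.Nonempty)).Nonempty
    · obtain ⟨A, hA, hmin⟩ := exists_min_image _ (fun A => A.card) hJ
      obtain ⟨hAJ, hA0⟩ := mem_filter.1 hA
      obtain ⟨x, hx⟩ := hA0
      refine ⟨x, fun B hB hB0 => ?_⟩
      by_cases hd : Disjoint A B
      · exfalso
        obtain ⟨e, L, q1, q2, q3, -⟩ := fat_path col F' hk' hr A B ⟨x, hx⟩ hB0 hd (h3 A hAJ) (h3 B hB) hne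
          (l - 1) (Nat.mul_le_mul_left _ (by omega))
        exact hP (LP_contains hk hF (e :: L) q1 (fun f hf => hF'F (q3 f hf)) (by simp; omega)
          (by simp; omega))
      · rw [not_disjoint_iff_nonempty_inter] at hd
        have hcl := fat_closed (s := s) (by rw [hs, mul_comm]; exact Nat.mul_le_mul_left _ (by omega))
          col F' hk' hr J h2 h3 hne A B hAJ hB
        have := hmin (A ∩ B) (mem_filter.2 ⟨hcl, hd⟩)
        have heq := eq_of_subset_of_card_le (inter_subset_left) this
        rw [← heq] at hx
        exact (mem_inter.1 hx).2
    · refine ⟨⟨0, hk⟩, fun A hA hA0 => (hJ ⟨A, mem_filter.2 ⟨hA, hA0⟩⟩).elim⟩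
  obtain ⟨x, hx⟩ := hx
  have huniq : ∀ e ∈ F', ∃ v ∈ e, col v = x ∧ e ∩ (univ.filter (fun v => col v = x)) = {v} := by
    intro e he
    have : x ∈ e.image col := by rw [hr e he]; simp
    obtain ⟨v, hv, hvx⟩ := mem_image.1 this
    refine ⟨v, hv, hvx, ?_⟩
    ext w
    simp only [mem_inter, mem_filter, mem_univ, true_and, mem_singleton]
    constructor
    · rintro ⟨hw, hwx⟩; exact hinj e he hw hv (hwx.trans hvx.symm)
    · rintro rfl; exact ⟨hv, hvx⟩
  refine ⟨univ.filter (fun v => col v = x), ?_, ?_⟩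
  · intro e he
    obtain ⟨v, _, _, h⟩ := huniq e he
    rw [h, card_singleton]
  · intro e he f hf hef
    by_cases heq : e = f
    · rw [heq]
    have hxm := hx _ (h2 e he f hf heq) (hef.image _)
    obtain ⟨w, hw, hwx⟩ := mem_image.1 hxm
    rw [mem_inter] at hw
    obtain ⟨v, hv, hvx, h⟩ := huniq e he
    obtain ⟨v', hv', hvx', h'⟩ := huniq f hf
    rw [h, h']
    have e1 : w = v := hinj e he hw.1 hv (hwx.trans hvx.symm)
    have e2 : w = v' := hinj f hf hw.2 hv' (hwx.trans hvx'.symm)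
    rw [← e1, ← e2]


lemma deg_bound (k l : ℕ) (hk : 3 ≤ k) (hl : 3 ≤ l) : ∃ c : ℕ, 1 ≤ c ∧ ∀ (n : ℕ)
    (F : Finset (Finset (Fin n))) (V : Finset (Fin n)), (∀ e ∈ F, e.card = k) →
    ¬ ContainsLoosePath k l F → (∀ e ∈ F, e ⊆ V) → F.Nonempty →
    ∃ v, F.card ^ 2 ≤ c * (F.filter (fun e => v ∈ e)).card * V.card ^ (k - 1) := by
  obtain ⟨c, hc, H⟩ := star_sub k l (by omega) hl
  refine ⟨c ^ 2, Nat.pow_pos hc, ?_⟩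
  intro n F V hF hP hV hne
  obtain ⟨F', hF', hcard, X, hX1, hX2⟩ := H n F hF hP
  have hF'0 : 0 < F'.card := by
    rcases Nat.eq_zero_or_pos F'.card with h | h
    · rw [h] at hcard; have := card_pos.2 hne; omega
    · exact h
  set Fv : Fin n → Finset (Finset (Fin n)) := fun v => F'.filter (fun e => v ∈ e) with hFv
  set Uv : Fin n → Finset (Fin n) := fun v => (Fv v).biUnion id with hUv
  have hsum : ∑ v ∈ X, (Fv v).card = F'.card := by
    simp only [hFv, card_filter]
    rw [sum_comm, card_eq_sum_ones]
    refine sum_congr rfl (fun e he => ?_)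
    rw [← card_filter, ← hX1 e he]
    congr 1
    ext v; simp [and_comm]
  set X' := X.filter (fun v => (Fv v).Nonempty) with hX'
  have hsum' : ∑ v ∈ X', (Fv v).card = F'.card := by
    rw [← hsum]
    apply sum_subset (filter_subset _ _)
    intro v hv hv'
    by_contra h
    exact hv' (mem_filter.2 ⟨hv, card_pos.1 (Nat.pos_of_ne_zero h)⟩)
  have hUsum : ∑ v ∈ X', (Uv v).card ≤ V.card := by
    rw [← card_biUnion]
    · apply card_le_card
      intro y hy
      simp only [mem_biUnion, hUv, hFv, mem_filter, id] at hy
      obtain ⟨v, _, e, ⟨he, _⟩, hy⟩ := hy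
      exact hV e (hF' he) hy
    · intro v hv w hw hvw
      rw [Function.onFun, disjoint_left]
      intro y hy1 hy2
      simp only [mem_biUnion, hUv, hFv, mem_filter, id] at hy1 hy2
      obtain ⟨e, ⟨he, hve⟩, hye⟩ := hy1
      obtain ⟨f, ⟨hf, hwf⟩, hyf⟩ := hy2
      have h := hX2 e he f hf ⟨y, mem_inter.2 ⟨hye, hyf⟩⟩
      have h1 := card_eq_one.1 (hX1 e he)
      obtain ⟨a, ha⟩ := h1
      have hv' : v ∈ e ∩ X := mem_inter.2 ⟨hve, (mem_filter.1 hv).1⟩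
      have hw' : w ∈ e ∩ X := by rw [h]; exact mem_inter.2 ⟨hwf, (mem_filter.1 hw).1⟩
      rw [ha, mem_singleton] at hv' hw'
      exact hvw (hv'.trans hw'.symm)
  have hX'ne : X'.Nonempty := by
    by_contra h
    rw [not_nonempty_iff_eq_empty] at h
    rw [h] at hsum'; simp at hsum'; omega
  obtain ⟨v, hv, hle⟩ : ∃ v ∈ X', F'.card * (Uv v).card ≤ (Fv v).card * V.card := by
    apply exists_le_of_sum_le hX'ne
    rw [← mul_sum, ← sum_mul, hsum']
    exact Nat.mul_le_mul_left _ hUsum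
  have hpos : 0 < (Fv v).card := card_pos.2 (mem_filter.1 hv).2
  have hUV : (Uv v).card ≤ V.card := by
    apply card_le_card
    intro y hy
    simp only [mem_biUnion, hUv, hFv, mem_filter, id] at hy
    obtain ⟨e, ⟨he, _⟩, hy⟩ := hy
    exact hV e (hF' he) hy
  have hb : (Fv v).card ≤ (Uv v).card ^ 2 * V.card ^ (k - 3) := by
    have h1 : (Fv v).card ≤ (powersetCard (k-1) (Uv v)).card := by
      apply card_le_card_of_injOn (fun e => e.erase v)
      · intro e he
        have he' := mem_filter.1 he
        rw [mem_coe, mem_powersetCard]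
        refine ⟨?_, by rw [card_erase_of_mem he'.2, hF e (hF' he'.1)]⟩
        intro y hy
        exact mem_biUnion.2 ⟨e, he, mem_of_mem_erase hy⟩
      · intro e he f hf hef
        have he' := mem_filter.1 he
        have hf' := mem_filter.1 hf
        simp only at hef
        rw [← insert_erase he'.2, ← insert_erase hf'.2, hef]
    rw [card_powersetCard] at h1
    refine h1.trans ((Nat.choose_le_pow _ _).trans ?_)
    have : k - 1 = 2 + (k - 3) := by omega
    rw [this, pow_add]
    exact Nat.mul_le_mul_left _ (Nat.pow_le_pow_left hUV _)
  have hmain : F'.card ^ 2 ≤ (Fv v).card * V.card ^ (k - 1) := by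
    apply Nat.le_of_mul_le_mul_right _ hpos
    calc F'.card ^ 2 * (Fv v).card ≤ F'.card ^ 2 * ((Uv v).card ^ 2 * V.card ^ (k - 3)) :=
          Nat.mul_le_mul_left _ hb
      _ = (F'.card * (Uv v).card) ^ 2 * V.card ^ (k-3) := by ring
      _ ≤ ((Fv v).card * V.card) ^ 2 * V.card ^ (k-3) :=
          Nat.mul_le_mul_right _ (Nat.pow_le_pow_left hle _)
      _ = (Fv v).card * (V.card ^ (2 + (k-3))) * (Fv v).card := by ring
      _ = _ := by
        have : k - 1 = 2 + (k - 3) := by omega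
        rw [this]
  refine ⟨v, ?_⟩
  calc F.card ^ 2 ≤ (c * F'.card) ^ 2 := Nat.pow_le_pow_left hcard _
    _ = c ^ 2 * F'.card ^ 2 := by ring
    _ ≤ c ^ 2 * ((Fv v).card * V.card ^ (k - 1)) := Nat.mul_le_mul_left _ hmain
    _ = c ^ 2 * (Fv v).card * V.card ^ (k - 1) := by ring
    _ ≤ _ := by
      apply Nat.mul_le_mul_right
      apply Nat.mul_le_mul_left
      exact card_le_card (filter_subset_filter _ hF')

lemma sub_path {n k l : ℕ} {F F' : Finset (Finset (Fin n))} (h : F' ⊆ F)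
    (hP : ¬ ContainsLoosePath k l F) : ¬ ContainsLoosePath k l F' := by
  rintro ⟨P, h1, h2, h3, h4⟩
  exact hP ⟨P, h1, fun i => h (h2 i), h3, h4⟩

/-- consequences: crude bound, and heavy set -/
lemma heavy (k l : ℕ) (hk : 3 ≤ k) (hl : 3 ≤ l) : ∃ c : ℕ, 1 ≤ c ∧
    (∀ (n : ℕ) (F : Finset (Finset (Fin n))) (V : Finset (Fin n)), (∀ e ∈ F, e.card = k) →
      ¬ ContainsLoosePath k l F → (∀ e ∈ F, e ⊆ V) → F.card ≤ c * V.card ^ (k - 1)) ∧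
    ∀ K : ℕ, ∃ B : ℕ, ∀ (n : ℕ), 1 ≤ n → ∀ (F : Finset (Finset (Fin n))), (∀ e ∈ F, e.card = k) →
      ¬ ContainsLoosePath k l F → ∃ S : Finset (Fin n), S.card ≤ B ∧
        K * (F.filter (fun e => Disjoint e S)).card ≤ n ^ (k - 1) := by
  obtain ⟨c, hc, H⟩ := deg_bound k l hk hl
  have crude : (∀ (n : ℕ) (F : Finset (Finset (Fin n))) (V : Finset (Fin n)), (∀ e ∈ F, e.card = k) →
      ¬ ContainsLoosePath k l F → (∀ e ∈ F, e ⊆ V) → F.card ≤ c * V.card ^ (k - 1)) := by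
    intro n F V hF hP hV
    by_cases hne : F.Nonempty
    · obtain ⟨v, hv⟩ := H n F V hF hP hV hne
      apply Nat.le_of_mul_le_mul_right _ (card_pos.2 hne)
      calc F.card * F.card = F.card ^ 2 := by ring
        _ ≤ _ := hv
        _ ≤ c * F.card * V.card ^ (k-1) := by
          apply Nat.mul_le_mul_right
          apply Nat.mul_le_mul_left
          exact card_le_card (filter_subset _ _)
        _ = _ := by ring
    · rw [not_nonempty_iff_eq_empty] at hne
      simp [hne]
  refine ⟨c, hc, crude, fun K => ?_⟩
  refine ⟨c * K ^ 2 * k * c, ?_⟩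
  intro n hn F hF hP
  have hnp : 0 < n ^ (k - 1) := Nat.pow_pos hn
  set S : Finset (Fin n) := univ.filter (fun v => n ^ (k-1) ≤ c * K ^ 2 * (F.filter (fun e => v ∈ e)).card) with hS
  refine ⟨S, ?_, ?_⟩
  · apply Nat.le_of_mul_le_mul_right _ hnp
    have h1 : ∑ v : Fin n, (F.filter (fun e => v ∈ e)).card = k * F.card := by
      simp only [card_filter]
      rw [sum_comm]
      rw [mul_comm, ← smul_eq_mul, ← sum_const]
      refine sum_congr rfl (fun e he => ?_)
      rw [← card_filter, ← hF e he]
      congr 1; ext v; simp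
    calc S.card * n ^ (k-1) = ∑ v ∈ S, n ^ (k-1) := by simp
      _ ≤ ∑ v ∈ S, c * K ^ 2 * (F.filter (fun e => v ∈ e)).card :=
        sum_le_sum (fun v hv => (mem_filter.1 hv).2)
      _ ≤ ∑ v : Fin n, c * K ^ 2 * (F.filter (fun e => v ∈ e)).card :=
        sum_le_sum_of_subset (subset_univ _)
      _ = c * K ^ 2 * (k * F.card) := by rw [← mul_sum, h1]
      _ ≤ c * K ^ 2 * (k * (c * n ^ (k-1))) := by
        apply Nat.mul_le_mul_left
        apply Nat.mul_le_mul_left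
        have := crude n F univ hF hP (fun e _ => subset_univ e)
        simpa using this
      _ = _ := by ring
  · by_contra hlt
    push Not at hlt
    set F' := F.filter (fun e => Disjoint e S) with hF'
    have hsub : F' ⊆ F := filter_subset _ _
    have hne : F'.Nonempty := by
      rw [← card_pos]
      rcases Nat.eq_zero_or_pos F'.card with h | h
      · rw [h] at hlt; omega
      · exact h
    obtain ⟨v, hv⟩ := H n F' univ (fun e he => hF e (hsub he)) (sub_path hsub hP)
      (fun e _ => subset_univ e) hne
    rw [card_univ, Fintype.card_fin] at hv
    have h1 : n ^ (k-1) < c * K ^ 2 * (F'.filter (fun e => v ∈ e)).card := by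
      apply Nat.lt_of_mul_lt_mul_right (a := n ^ (k-1))
      calc n ^ (k-1) * n ^ (k-1) < (K * F'.card) * (K * F'.card) := Nat.mul_lt_mul'' hlt hlt
        _ = K ^ 2 * F'.card ^ 2 := by ring
        _ ≤ K ^ 2 * _ := Nat.mul_le_mul_left _ hv
        _ = _ := by ring
    have h2 : 0 < (F'.filter (fun e => v ∈ e)).card := by
      rcases Nat.eq_zero_or_pos (F'.filter (fun e => v ∈ e)).card with h | h
      · rw [h] at h1; omega
      · exact h
    obtain ⟨e, he⟩ := card_pos.1 h2
    have he' := mem_filter.1 he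
    have hvS : v ∈ S := by
      rw [hS, mem_filter]
      refine ⟨mem_univ _, h1.le.trans ?_⟩
      apply Nat.mul_le_mul_left
      exact card_le_card (filter_subset_filter _ hsub)
    exact disjoint_left.1 (mem_filter.1 he'.1).2 he'.2 hvS


def Av {n : ℕ} (s : ℕ) (G : Finset (Finset (Fin n))) : Prop :=
  ∀ W : Finset (Fin n), W.card ≤ s → ∃ T ∈ G, Disjoint T W

def Nice {n : ℕ} (s : ℕ) (F : Finset (Finset (Fin n))) (S : Finset (Fin n)) (b : Fin n) : Prop :=
  ∀ v ∈ S, ∀ W : Finset (Fin n), W.card ≤ s → b ∉ W → ∃ T, b ∈ T ∧ Disjoint T W ∧ insert v T ∈ F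

def sz (k t : ℕ) : ℕ := k * (2 * t + 10) + t + 10

lemma list_of {n t : ℕ} (S : Finset (Fin n)) (h : S.card = t + 1) :
    ∃ v vs, (v :: vs).Nodup ∧ (∀ u, u ∈ v :: vs ↔ u ∈ S) ∧ vs.length = t := by
  have h1 : S.toList.length = t + 1 := by rw [length_toList, h]
  match hL : S.toList, h1 with
  | v :: vs, h1 =>
    refine ⟨v, vs, ?_, ?_, by simpa using h1⟩
    · rw [← hL]; exact nodup_toList S
    · intro u; rw [← hL]; exact mem_toList

lemma path_common {n k t : ℕ} (hk : 2 ≤ k) {F G : Finset (Finset (Fin n))} (hF : ∀ A ∈ F, A.card = k)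
    (hG : ∀ T ∈ G, T.Nonempty) (hav : Av (sz k t) G) (S : Finset (Fin n)) (hS : S.card = t + 1)
    (ht : 1 ≤ t)
    (hin : ∀ u ∈ S, ∀ T ∈ G, insert u T ∈ F) :
    ContainsLoosePath k (2 * t + 2) F := by
  obtain ⟨v, vs, hnd, hmem, hlen⟩ := list_of S hS
  have hmem' : ∀ u ∈ vs, u ∈ S := fun u hu => (hmem u).1 (by simp [hu])
  obtain ⟨T1, hT1, hd1⟩ := hav S (by unfold sz; omega)
  obtain ⟨v', hv', e', L', q1, q2, q3, q4, q5, q6⟩ := chain (s := sz k t) hk hF hG hav ∅ vs v (insert v T1) []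
    hnd (fun u hu => hin u ((hmem u).1 hu)) trivial
    (by simpa using hin v ((hmem v).1 (by simp)) T1 hT1) (by simp) (by simp)
    (by
      intro u hu
      have h1 : u ≠ v := by rintro rfl; simp at hnd; tauto
      have h2 : u ∉ T1 := fun h => disjoint_left.1 hd1 h (hmem' u hu)
      simp [h1, h2])
    (by simp) (by simp)
    (by
      simp only [List.length_nil, card_empty, hlen, sz]
      have : k * (0 + 1 + 2 * t) ≤ k * (2 * t + 10) := Nat.mul_le_mul_left _ (by omega)
      omega)
  obtain ⟨T, hT, hd⟩ := hav (un (e' :: L')) (by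
    refine (card_un (k := k) (fun f hf => hF f (q2 f hf))).trans ?_
    simp only [List.length_cons, q6, hlen, List.length_nil, sz]
    have : k * (0 + 2 * t + 1) ≤ k * (2 * t + 10) := Nat.mul_le_mul_left _ (by omega)
    omega)
  rw [un_cons, disjoint_union_right] at hd
  refine LP_contains (by omega) hF (insert v' T :: e' :: L') ⟨⟨v', by simp [q3]⟩, ?_, q1⟩ ?_ ?_ ?_
  · rw [disjoint_insert_left]; exact ⟨q4, hd.2⟩
  · intro f hf
    rcases List.mem_cons.1 hf with rfl | hf
    · exact hin v' ((hmem v').1 hv') T hT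
    · exact q2 f hf
  · simp [q6, hlen]; omega
  · simp [q6, hlen]

lemma path_two {n k t : ℕ} (hk : 2 ≤ k) {F G G' : Finset (Finset (Fin n))} (hF : ∀ A ∈ F, A.card = k)
    (hG : ∀ T ∈ G, T.Nonempty)
    (hav : Av (sz k t) G) (hav' : Av (sz k t) G') (S S' : Finset (Fin n)) (hS : S.card = t) (hS' : S'.card = t)
    (ht : 1 ≤ t) (hne : S ≠ S')
    (hin : ∀ u ∈ S, ∀ T ∈ G, insert u T ∈ F) (hin' : ∀ u ∈ S', ∀ T ∈ G', insert u T ∈ F)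
    (T U : Finset (Fin n)) (hT : T ∈ G) (hU : U ∈ G') (hTS : Disjoint T (S ∪ S')) (hUS : Disjoint U (S ∪ S'))
    (hTU : (T ∩ U).Nonempty) (hTk : T.card + 1 = k) (hUk : U.card + 1 = k) :
    ContainsLoosePath k (2 * t + 2) F := by
  obtain ⟨w, hw, hwS⟩ : ∃ w ∈ S', w ∉ S := by
    by_contra h
    push Not at h
    exact hne (eq_of_subset_of_card_le h (by omega)).symm
  obtain ⟨t, rfl⟩ : ∃ t', t = t' + 1 := ⟨t - 1, by omega⟩
  obtain ⟨v, vs, hnd, hmem, hlen⟩ := list_of S hS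
  have hmem' : ∀ u ∈ vs, u ∈ S := fun u hu => (hmem u).1 (by simp [hu])
  set W := insert w (T ∪ U) with hW
  have hWc : W.card ≤ 2 * k := by
    rw [hW]
    have h1 := card_insert_le w (T ∪ U)
    have h2 := card_union_le T U
    omega
  have hSW : ∀ u ∈ S, u ∉ W := by
    intro u hu h
    rw [hW, mem_insert, mem_union] at h
    rcases h with rfl | h | h
    · exact hwS hu
    · exact disjoint_left.1 hTS h (by simp [hu])
    · exact disjoint_left.1 hUS h (by simp [hu])
  have hsz : k * (2 * t) + 12 * k + t + 11 ≤ sz k (t+1) := by unfold sz; nlinarith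
  obtain ⟨T1, hT1, hd1⟩ := hav (S ∪ W) (by
    have := card_union_le S W
    nlinarith)
  rw [disjoint_union_right] at hd1
  obtain ⟨v', hv', e', L', q1, q2, q3, q4, q5, q6⟩ := chain (s := sz k (t+1)) hk hF hG hav W vs v (insert v T1) []
    hnd (fun u hu => hin u ((hmem u).1 hu)) trivial
    (by simpa using hin v ((hmem v).1 (by simp)) T1 hT1) (by simp) (by simp)
    (by
      intro u hu
      have h1 : u ≠ v := by rintro rfl; simp at hnd; tauto
      have h2 : u ∉ T1 := fun h => disjoint_left.1 hd1.1 h (hmem' u hu)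
      simp [h1, h2])
    (fun u hu => hSW u ((hmem u).1 hu))
    (by
      simp only [un_cons, un_nil, union_empty, disjoint_insert_left]
      exact ⟨hSW v ((hmem v).1 (by simp)), hd1.2⟩)
    (by
      simp only [List.length_nil, hlen]
      nlinarith)
  have hcu := card_un (k := k) (L := e' :: L') (fun f hf => hF f (q2 f hf))
  have hv'S := (hmem v').1 hv'
  simp only [List.length_cons, q6, hlen, List.length_nil] at hcu
  obtain ⟨U', hU', hd⟩ := hav' (un (insert v' T :: e' :: L')) (by
    rw [un_cons]
    have h1 := card_union_le (insert v' T) (un (e' :: L'))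
    have h2 := card_insert_le v' T
    nlinarith)
  have hwu : w ∉ un (e' :: L') := fun h => disjoint_left.1 q5 h (by simp [hW])
  have hTu : Disjoint T (un (e' :: L')) := by
    refine (q5.mono_right ?_).symm
    intro x hx; simp [hW, hx]
  have hUu : Disjoint U (un (e' :: L')) := by
    refine (q5.mono_right ?_).symm
    intro x hx; simp [hW, hx]
  have hTu' := hTu
  rw [un_cons, disjoint_union_right] at hTu'
  refine LP_contains (by omega) hF (insert w U' :: insert w U :: insert v' T :: e' :: L')
    ⟨⟨w, by simp⟩, ?_, ?_, ?_, ⟨v', by simp [q3]⟩, ?_, q1⟩ ?_ ?_ ?_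
  · rw [disjoint_insert_left]
    refine ⟨?_, hd⟩
    rw [un_cons, mem_union, mem_insert]
    rintro ((rfl | h) | h)
    · exact hwS hv'S
    · exact disjoint_left.1 hTS h (by simp [hw])
    · exact hwu h
  · obtain ⟨x, hx⟩ := hTU
    rw [mem_inter] at hx
    exact ⟨x, by simp [hx]⟩
  · rw [disjoint_insert_left]
    exact ⟨hwu, hUu⟩
  · rw [disjoint_insert_left]
    exact ⟨q4, hTu'.2⟩
  · intro f hf
    simp only [List.mem_cons] at hf
    rcases hf with rfl | rfl | rfl | hf
    · exact hin' w hw U' hU'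
    · exact hin' w hw U hU
    · exact hin v' hv'S T hT
    · exact q2 f (by simpa using hf)
  · simp
  · simp [q6, hlen]; ring

lemma path_meet {n k t : ℕ} (hk : 2 ≤ k) {F G : Finset (Finset (Fin n))} (hF : ∀ A ∈ F, A.card = k)
    (hG : ∀ T ∈ G, T.Nonempty) (hav : Av (sz k t) G) (S : Finset (Fin n)) (hS : S.card = t)
    (ht : 1 ≤ t)
    (hin : ∀ u ∈ S, ∀ T ∈ G, insert u T ∈ F) (A B : Finset (Fin n)) (hA : A ∈ F) (hB : B ∈ F)
    (hAS : Disjoint A S) (hBS : Disjoint B S) (hAB : (B ∩ A).Nonempty) (b : Fin n) (hbB : b ∈ B) (hbA : b ∉ A)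
    (hb : Nice (sz k t) F S b) :
    ContainsLoosePath k (2 * t + 2) F := by
  obtain ⟨t, rfl⟩ : ∃ t', t = t' + 1 := ⟨t - 1, by omega⟩
  obtain ⟨v, vs, hnd, hmem, hlen⟩ := list_of S hS
  have hmem' : ∀ u ∈ vs, u ∈ S := fun u hu => (hmem u).1 (by simp [hu])
  have hvS := (hmem v).1 (by simp)
  have hsz : k * (2 * t) + 12 * k + t + 11 ≤ sz k (t+1) := by unfold sz; nlinarith
  obtain ⟨T1, hbT, hd1, hT1⟩ := hb v hvS (S ∪ A) (by
    have := card_union_le S A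
    have := hF A hA
    nlinarith) (by
    rw [mem_union]
    rintro (h | h)
    · exact disjoint_left.1 hBS hbB h
    · exact hbA h)
  rw [disjoint_union_right] at hd1
  have hSA : ∀ u ∈ S, u ∉ A := fun u hu h => disjoint_left.1 hAS h hu
  have hSB : ∀ u ∈ S, u ∉ B := fun u hu h => disjoint_left.1 hBS h hu
  obtain ⟨v', hv', e', L', q1, q2, q3, q4, q5, q6⟩ := chain (s := sz k (t+1)) hk hF hG hav ∅ vs v (insert v T1) [B, A]
    hnd (fun u hu => hin u ((hmem u).1 hu))
    (by
      refine ⟨⟨b, by simp [hbB, hbT]⟩, ?_, hAB, by simp, trivial⟩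
      simp only [un_cons, un_nil, union_empty, disjoint_insert_left]
      exact ⟨hSA v hvS, hd1.2⟩)
    (by simp [hT1, hA, hB]) (by simp) (by simp [hSA v hvS, hSB v hvS])
    (by
      intro u hu
      have h1 : u ≠ v := by rintro rfl; simp at hnd; tauto
      have h2 : u ∉ T1 := fun h => disjoint_left.1 hd1.1 h (hmem' u hu)
      simp [h1, h2, hSA u (hmem' u hu), hSB u (hmem' u hu)])
    (by simp) (by simp)
    (by
      simp only [List.length_nil, List.length_cons, card_empty, hlen]
      nlinarith)
  have hcu := card_un (k := k) (L := e' :: L') (fun f hf => hF f (q2 f hf))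
  simp only [List.length_cons, q6, hlen, List.length_nil] at hcu
  obtain ⟨T, hT, hd⟩ := hav (un (e' :: L')) (by nlinarith)
  rw [un_cons, disjoint_union_right] at hd
  refine LP_contains (by omega) hF (insert v' T :: e' :: L') ⟨⟨v', by simp [q3]⟩, ?_, q1⟩ ?_ ?_ ?_
  · rw [disjoint_insert_left]; exact ⟨q4, hd.2⟩
  · intro f hf
    rcases List.mem_cons.1 hf with rfl | hf
    · exact hin v' ((hmem v').1 hv') T hT
    · exact q2 f hf
  · simp [q6, hlen]; omega
  · simp [q6, hlen]; ring

lemma path_disj {n k t : ℕ} (hk : 2 ≤ k) {F G : Finset (Finset (Fin n))} (hF : ∀ A ∈ F, A.card = k)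
    (hG : ∀ T ∈ G, T.Nonempty) (hav : Av (sz k t) G) (S : Finset (Fin n)) (hS : S.card = t)
    (ht : 1 ≤ t)
    (hin : ∀ u ∈ S, ∀ T ∈ G, insert u T ∈ F) (A B : Finset (Fin n)) (hA : A ∈ F) (hB : B ∈ F)
    (hAS : Disjoint A S) (hBS : Disjoint B S) (hAB : Disjoint A B) (a b : Fin n) (haA : a ∈ A) (hbB : b ∈ B)
    (ha : Nice (sz k t) F S a) (hb : Nice (sz k t) F S b) :
    ContainsLoosePath k (2 * t + 2) F := by
  obtain ⟨t, rfl⟩ : ∃ t', t = t' + 1 := ⟨t - 1, by omega⟩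
  obtain ⟨v, vs, hnd, hmem, hlen⟩ := list_of S hS
  have hmem' : ∀ u ∈ vs, u ∈ S := fun u hu => (hmem u).1 (by simp [hu])
  have hvS := (hmem v).1 (by simp)
  have hsz : k * (2 * t) + 12 * k + t + 11 ≤ sz k (t+1) := by unfold sz; nlinarith
  have hBk := hF B hB
  obtain ⟨T1, haT, hd1, hT1⟩ := ha v hvS (S ∪ B) (by
    have := card_union_le S B
    nlinarith) (by
    rw [mem_union]
    rintro (h | h)
    · exact disjoint_left.1 hAS haA h
    · exact disjoint_left.1 hAB haA h)
  rw [disjoint_union_right] at hd1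
  have hSA : ∀ u ∈ S, u ∉ A := fun u hu h => disjoint_left.1 hAS h hu
  have hSB : ∀ u ∈ S, u ∉ B := fun u hu h => disjoint_left.1 hBS h hu
  obtain ⟨v', hv', e', L', q1, q2, q3, q4, q5, q6⟩ := chain (s := sz k (t+1)) hk hF hG hav B vs v (insert v T1) [A]
    hnd (fun u hu => hin u ((hmem u).1 hu))
    (by
      exact ⟨⟨a, by simp [haA, haT]⟩, by simp, trivial⟩)
    (by simp [hT1, hA]) (by simp) (by simp [hSA v hvS])
    (by
      intro u hu
      have h1 : u ≠ v := by rintro rfl; simp at hnd; tauto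
      have h2 : u ∉ T1 := fun h => disjoint_left.1 hd1.1 h (hmem' u hu)
      simp [h1, h2, hSA u (hmem' u hu)])
    (fun u hu => hSB u ((hmem u).1 hu))
    (by
      simp only [un_cons, un_nil, union_empty, disjoint_insert_left, disjoint_union_left]
      exact ⟨⟨hSB v hvS, hd1.2⟩, hAB⟩)
    (by
      simp only [List.length_nil, List.length_cons, hlen]
      nlinarith)
  have hcu := card_un (k := k) (L := e' :: L') (fun f hf => hF f (q2 f hf))
  simp only [List.length_cons, q6, hlen, List.length_nil] at hcu
  obtain ⟨T, hbT, hd, hT⟩ := hb v' ((hmem v').1 hv') (un (e' :: L')) (by nlinarith)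
    (fun h => disjoint_left.1 q5 h hbB)
  rw [un_cons, disjoint_union_right] at hd
  refine LP_contains (by omega) hF (B :: insert v' T :: e' :: L') ⟨⟨b, by simp [hbB, hbT]⟩, q5.symm,
    ⟨v', by simp [q3]⟩, ?_, q1⟩ ?_ ?_ ?_
  · rw [disjoint_insert_left]; exact ⟨q4, hd.2⟩
  · intro f hf
    simp only [List.mem_cons] at hf
    rcases hf with rfl | rfl | hf
    · exact hB
    · exact hT
    · exact q2 f (by simpa using hf)
  · simp
  · simp [q6, hlen]; ring

lemma count_hit {n : ℕ} (r : ℕ) (hr : 1 ≤ r) (W : Finset (Fin n)) (G : Finset (Finset (Fin n)))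
    (hG : ∀ T ∈ G, T.card = r ∧ ¬ Disjoint T W) : G.card ≤ W.card * n ^ (r - 1) := by
  have hsub : G ⊆ W.biUnion (fun w => (powersetCard (r-1) (univ : Finset (Fin n))).image (insert w)) := by
    intro T hT
    obtain ⟨h1, h2⟩ := hG T hT
    rw [not_disjoint_iff] at h2
    obtain ⟨w, hwT, hwW⟩ := h2
    refine mem_biUnion.2 ⟨w, hwW, mem_image.2 ⟨T.erase w, ?_, insert_erase hwT⟩⟩
    rw [mem_powersetCard, card_erase_of_mem hwT, h1]
    exact ⟨subset_univ _, rfl⟩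
  refine (card_le_card hsub).trans (card_biUnion_le_card_mul _ _ _ (fun w _ => ?_))
  refine card_image_le.trans ?_
  rw [card_powersetCard, card_univ, Fintype.card_fin]
  exact Nat.choose_le_pow _ _

lemma av_of_card {n r s : ℕ} (hr : 1 ≤ r) (G : Finset (Finset (Fin n))) (hG : ∀ T ∈ G, T.card = r)
    (h : s * n ^ (r - 1) < G.card) : Av s G := by
  intro W hW
  by_contra hc
  push Not at hc
  have := count_hit r hr W G (fun T hT => ⟨hG T hT, hc T hT⟩)
  have := Nat.mul_le_mul_right (n ^ (r-1)) hW
  omega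

lemma pow_le_choose {k r a n : ℕ} (hr : r ≤ k) (hn : 2 * (a + r) ≤ n) :
    n ^ r ≤ 2 ^ k * k.factorial * (n - a).choose r := by
  have h1 := Nat.pow_sub_le_descFactorial (n - a) r
  rw [Nat.descFactorial_eq_factorial_mul_choose] at h1
  have h2 : n ≤ 2 * (n - a + 1 - r) := by omega
  calc n ^ r ≤ (2 * (n - a + 1 - r)) ^ r := Nat.pow_le_pow_left h2 _
    _ = 2 ^ r * (n - a + 1 - r) ^ r := by rw [mul_pow]
    _ ≤ 2 ^ k * (k.factorial * (n-a).choose r) := by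
      apply Nat.mul_le_mul (Nat.pow_le_pow_right (by norm_num) hr)
      exact h1.trans (Nat.mul_le_mul_right _ (Nat.factorial_le hr))
    _ = _ := by ring

lemma choose_shift {n r : ℕ} (hr : 1 ≤ r) : ∀ a, a ≤ n →
    n.choose r ≤ (n - a).choose r + a * n ^ (r - 1) := by
  intro a
  induction a with
  | zero => intro _; simp
  | succ a ih =>
    intro ha
    have h1 := ih (by omega)
    obtain ⟨m, hm⟩ : ∃ m, n - a = m + 1 := ⟨n - a - 1, by omega⟩
    obtain ⟨r, rfl⟩ : ∃ r', r = r' + 1 := ⟨r - 1, by omega⟩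
    have h2 : n - (a + 1) = m := by omega
    rw [hm, Nat.choose_succ_succ'] at h1
    rw [h2]
    have h3 : m.choose r ≤ n ^ r := (Nat.choose_le_pow _ _).trans (Nat.pow_le_pow_left (by omega) _)
    have e : (r + 1 - 1) = r := by omega
    rw [e] at h1 ⊢
    rw [add_mul, one_mul]
    linarith


lemma edge_count {n k : ℕ} (hk : 2 ≤ k) (F : Finset (Finset (Fin n))) (hF : ∀ A ∈ F, A.card = k)
    (S : Finset (Fin n)) :
    F.card ≤ (F.filter (fun e => Disjoint e S)).card +
      (∑ T ∈ powersetCard (k-1) (univ \ S), (S.filter (fun v => insert v T ∈ F)).card) +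
      S.card ^ 2 * n ^ (k-2) := by
  set X1 := (powersetCard (k-1) (univ \ S)).sigma (fun T => S.filter (fun v => insert v T ∈ F)) with hX1
  have hsub : F ⊆ (F.filter (fun e => Disjoint e S)) ∪
      X1.image (fun p => insert p.2 p.1) ∪
      (S ×ˢ S).biUnion (fun p => (powersetCard (k-2) (univ : Finset (Fin n))).image
        (fun Q => insert p.1 (insert p.2 Q))) := by
    intro e he
    have hek := hF e he
    by_cases h1 : Disjoint e S
    · simp [he, h1]
    rw [not_disjoint_iff] at h1
    obtain ⟨v, hv, hvS⟩ := h1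
    by_cases h2 : Disjoint (e.erase v) S
    · refine mem_union_left _ (mem_union_right _ (mem_image.2 ⟨⟨e.erase v, v⟩, ?_, insert_erase hv⟩))
      rw [hX1, mem_sigma, mem_powersetCard, mem_filter]
      simp only [insert_erase hv, card_erase_of_mem hv]
      refine ⟨⟨?_, by omega⟩, hvS, he⟩
      intro x hx
      simp only [mem_sdiff, mem_univ, true_and]
      exact disjoint_left.1 h2 hx
    · rw [not_disjoint_iff] at h2
      obtain ⟨w, hw, hwS⟩ := h2
      refine mem_union_right _ (mem_biUnion.2 ⟨(v, w), by simp [hvS, hwS], mem_image.2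
        ⟨(e.erase v).erase w, ?_, ?_⟩⟩)
      · rw [mem_powersetCard, card_erase_of_mem hw, card_erase_of_mem hv]
        exact ⟨subset_univ _, by omega⟩
      · simp only [insert_erase hw, insert_erase hv]
  refine (card_le_card hsub).trans ((card_union_le _ _).trans ?_)
  refine Nat.add_le_add ((card_union_le _ _).trans (Nat.add_le_add le_rfl (card_image_le.trans ?_))) ?_
  · rw [hX1, card_sigma]
  · refine (card_biUnion_le_card_mul _ _ (n ^ (k-2)) ?_).trans ?_
    · intro p _
      refine card_image_le.trans ?_
      rw [card_powersetCard, card_univ, Fintype.card_fin]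
      exact Nat.choose_le_pow _ _
    · rw [card_product, sq]

lemma big_nb {n k t : ℕ} (hk : 3 ≤ k) (ht : 1 ≤ t) (F : Finset (Finset (Fin n))) (hF : ∀ A ∈ F, A.card = k)
    (hP : ¬ ContainsLoosePath k (2 * t + 2) F) (S : Finset (Fin n)) :
    ((powersetCard (k-1) (univ \ S)).filter
      (fun T => t < (S.filter (fun v => insert v T ∈ F)).card)).card ≤ 2 ^ S.card * (sz k t * n ^ (k-2)) := by
  have hsub : ((powersetCard (k-1) (univ \ S)).filter
      (fun T => t < (S.filter (fun v => insert v T ∈ F)).card)) ⊆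
      (powersetCard (t+1) S).biUnion (fun S' => (powersetCard (k-1) (univ \ S)).filter
        (fun T => ∀ v ∈ S', insert v T ∈ F)) := by
    intro T hT
    rw [mem_filter] at hT
    obtain ⟨S', h1, h2⟩ := exists_subset_card_eq (Nat.succ_le_of_lt hT.2)
    refine mem_biUnion.2 ⟨S', ?_, ?_⟩
    · rw [mem_powersetCard]; exact ⟨h1.trans (filter_subset _ _), h2⟩
    · rw [mem_filter]; exact ⟨hT.1, fun v hv => (mem_filter.1 (h1 hv)).2⟩
  refine (card_le_card hsub).trans ((card_biUnion_le_card_mul _ _ (sz k t * n ^ (k-2)) ?_).trans ?_)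
  · intro S' hS'
    by_contra hc
    push Not at hc
    have hcard : ∀ T ∈ (powersetCard (k-1) (univ \ S)).filter
        (fun T => ∀ v ∈ S', insert v T ∈ F), T.card = k-1 := by
      intro T hT
      exact (mem_powersetCard.1 (mem_filter.1 hT).1).2
    apply hP
    refine path_common (by omega) hF (fun T hT => ?_) (av_of_card (r := k-1) (by omega) _ hcard ?_) S'
      (mem_powersetCard.1 hS').2 ht (fun u hu T hT => (mem_filter.1 hT).2 u hu)
    · rw [← card_pos, hcard T hT]; omega
    · rwa [show k - 1 - 1 = k - 2 by omega]
  · refine Nat.mul_le_mul_right _ ?_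
    rw [card_powersetCard]
    exact Nat.choose_le_two_pow _ _

lemma small_class {n r s : ℕ} {P : Finset (Finset (Fin n))} (S : Finset (Fin n)) (f : Finset (Fin n) → Finset (Fin n))
    (hf : ∀ T, f T ⊆ S) :
    (P.filter (fun T => (P.filter (fun U => f U = f T)).card ≤ s * n ^ r)).card ≤ 2 ^ S.card * (s * n ^ r) := by
  rw [← card_powerset, mul_comm S.powerset.card]
  refine card_le_mul_card_image_of_maps_to (f := f) (fun T _ => mem_powerset.2 (hf T)) _ ?_
  intro S' _
  by_cases h : ∃ T ∈ P.filter (fun T => (P.filter (fun U => f U = f T)).card ≤ s * n ^ r), f T = S'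
  · obtain ⟨T, hT, rfl⟩ := h
    refine (card_le_card ?_).trans (mem_filter.1 hT).2
    intro U hU
    rw [mem_filter, mem_filter] at hU
    rw [mem_filter]
    exact ⟨hU.1.1, hU.2⟩
  · rw [filter_eq_empty_iff.2]
    · simp
    · intro T hT hT'
      exact h ⟨T, hT, hT'⟩

lemma conn {n r : ℕ} (k : ℕ) (hr : 2 ≤ r) (hrk : r ≤ k) (S : Finset (Fin n)) (hn : 2 * (S.card + 2 + r) ≤ n)
    (Exc : Finset (Finset (Fin n))) (hE : Exc ⊆ powersetCard r (univ \ S))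
    (hEc : 8 * (2 ^ k * k.factorial) * r ^ 2 * Exc.card ≤ n ^ r)
    (f : Finset (Fin n) → Finset (Fin n))
    (hf : ∀ T ∈ powersetCard r (univ \ S) \ Exc, ∀ U ∈ powersetCard r (univ \ S) \ Exc, (T ∩ U).Nonempty → f T = f U) :
    ∃ T0 ∈ powersetCard r (univ \ S) \ Exc,
      ((powersetCard r (univ \ S) \ Exc).filter (fun T => f T ≠ f T0)).card ≤
        2 * (2 ^ k * k.factorial) * r ^ 2 * Exc.card := by
  set q := 2 ^ k * k.factorial with hq
  set V := (univ : Finset (Fin n)) \ S with hV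
  have hVc : V.card = n - S.card := by
    rw [hV, card_sdiff_of_subset (subset_univ _), card_univ, Fintype.card_fin]
  have hVne : V.Nonempty := by rw [← card_pos]; omega
  obtain ⟨x, hxV, hx⟩ := exists_min_image V (fun x => (Exc.filter (fun T => x ∈ T)).card) hVne
  set Ex := Exc.filter (fun T => x ∈ T) with hEx
  have h1 : V.card * Ex.card ≤ Exc.card * r := by
    refine card_mul_le_card_mul (fun x T => x ∈ T) (fun y hy => hx y hy) ?_
    intro T hT
    refine (card_le_card (t := T) ?_).trans (mem_powersetCard.1 (hE hT)).2.le
    intro y hy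
    simpa [bipartiteBelow] using (mem_filter.1 hy).2
  set Y := (V.erase x).filter (fun y => ∀ T ∈ powersetCard r V \ Exc, x ∈ T → y ∉ T) with hY
  have h2 : Y.card * (n - (S.card + 2)).choose (r - 2) ≤ Ex.card * r := by
    refine card_mul_le_card_mul (fun y T => y ∈ T) (fun y hy => ?_) ?_
    · rw [hY, mem_filter, mem_erase] at hy
      have hc : ((V.erase x).erase y).card = n - (S.card + 2) := by
        rw [card_erase_of_mem (by simp [hy.1]), card_erase_of_mem hxV]; omega
      rw [← hc, ← card_powersetCard]
      refine card_le_card_of_injOn (fun Q => insert x (insert y Q)) ?_ ?_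
      · intro Q hQ
        rw [mem_coe, mem_powersetCard] at hQ
        have hyQ : y ∉ Q := fun h => by simpa using hQ.1 h
        have hxQ : x ∉ insert y Q := by
          rw [mem_insert]
          rintro (h | h)
          · exact hy.1.1 h.symm
          · simpa using hQ.1 h
        have hmem : insert x (insert y Q) ∈ powersetCard r V := by
          rw [mem_powersetCard, card_insert_of_notMem hxQ, card_insert_of_notMem hyQ]
          refine ⟨?_, by omega⟩
          intro z hz
          rw [mem_insert, mem_insert] at hz
          rcases hz with rfl | rfl | h
          · exact hxV
          · exact hy.1.2
          · exact mem_of_mem_erase (mem_of_mem_erase (hQ.1 h))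
        have hexc : insert x (insert y Q) ∈ Exc := by
          by_contra hc
          exact hy.2 _ (mem_sdiff.2 ⟨hmem, hc⟩) (by simp) (by simp)
        simp [bipartiteAbove, hEx, hexc]
      · intro Q hQ Q' hQ' h
        rw [mem_coe, mem_powersetCard] at hQ hQ'
        have key : ∀ R ∈ [Q, Q'], ((insert x (insert y R)).erase x).erase y = R := by
          intro R hR
          have hRs : R ⊆ (V.erase x).erase y := by
            simp only [List.mem_cons, List.not_mem_nil, or_false] at hR
            rcases hR with rfl | rfl
            · exact hQ.1
            · exact hQ'.1
          have hyQ : y ∉ R := fun h => by simpa using hRs h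
          have hxQ : x ∉ insert y R := by
            rw [mem_insert]
            rintro (h | h)
            · exact hy.1.1 h.symm
            · simpa using hRs h
          rw [erase_insert hxQ, erase_insert hyQ]
        rw [← key Q (by simp), ← key Q' (by simp)]
        simp only at h
        rw [h]
    · intro T hT
      refine (card_le_card (t := T) ?_).trans (mem_powersetCard.1 (hE (mem_filter.1 hT).1)).2.le
      intro y hy
      simpa [bipartiteBelow] using (mem_filter.1 hy).2
  have h3 : Y.card * n ^ (r-1) ≤ 2 * q * r ^ 2 * Exc.card := by
    have h4 := pow_le_choose (k := k) (r := r - 2) (a := S.card + 2) (n := n) (by omega) (by omega)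
    have h5 : n ≤ 2 * V.card := by omega
    calc Y.card * n ^ (r-1) = Y.card * n ^ (r-2) * n := by
          rw [mul_assoc, ← pow_succ]; congr 2; omega
      _ ≤ Y.card * (q * (n - (S.card + 2)).choose (r - 2)) * (2 * V.card) := by gcongr
      _ = (Y.card * (n - (S.card + 2)).choose (r - 2)) * (2 * q * V.card) := by ring
      _ ≤ (Ex.card * r) * (2 * q * V.card) := by gcongr
      _ = (V.card * Ex.card) * (2 * q * r) := by ring
      _ ≤ (Exc.card * r) * (2 * q * r) := by gcongr
      _ = _ := by ring
  have hYn : 4 * Y.card ≤ n := by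
    have : 4 * Y.card * n ^ (r-1) ≤ n * n ^ (r-1) := by
      have e : n * n ^ (r-1) = n ^ r := by rw [← pow_succ']; congr 1; omega
      rw [e]; nlinarith
    exact Nat.le_of_mul_le_mul_right this (pow_pos (by omega) _)
  obtain ⟨y, hyV, hyY⟩ : ∃ y ∈ V.erase x, y ∉ Y := by
    by_contra hc
    push Not at hc
    have := card_le_card hc
    rw [card_erase_of_mem hxV] at this
    omega
  have hyY2 : ∃ T ∈ powersetCard r V \ Exc, x ∈ T ∧ y ∈ T := by
    by_contra hc
    push Not at hc
    exact hyY (mem_filter.2 ⟨hyV, hc⟩)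
  obtain ⟨T0, hT0, hxT0, -⟩ := hyY2
  refine ⟨T0, hT0, ?_⟩
  refine (count_hit r (by omega) Y _ ?_).trans h3
  intro T hT
  rw [mem_filter] at hT
  have hTP := mem_powersetCard.1 (mem_sdiff.1 hT.1).1
  refine ⟨hTP.2, fun hd => ?_⟩
  obtain ⟨z, hz⟩ : T.Nonempty := by rw [← card_pos]; omega
  by_cases hzx : z = x
  · subst hzx
    exact hT.2 (hf T hT.1 T0 hT0 ⟨z, by simp [hz, hxT0]⟩)
  · have hzY := disjoint_left.1 hd hz
    have : ∃ U ∈ powersetCard r V \ Exc, x ∈ U ∧ z ∈ U := by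
      by_contra hc
      push Not at hc
      exact hzY (mem_filter.2 ⟨mem_erase.2 ⟨hzx, hTP.1 hz⟩, hc⟩)
    obtain ⟨U, hU, hxU, hzU⟩ := this
    apply hT.2
    rw [hf T hT.1 U hU ⟨z, by simp [hz, hzU]⟩, hf U hU T0 hT0 ⟨x, by simp [hxU, hxT0]⟩]

lemma sum_Icc_ge (n k t : ℕ) :
    t * (n - t).choose (k - 1) ≤ ∑ i ∈ Icc 1 t, (n - i).choose (k - 1) := by
  have := card_nsmul_le_sum (Icc 1 t) (fun i => (n - i).choose (k - 1)) ((n - t).choose (k-1)) (by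
    intro i hi
    rw [mem_Icc] at hi
    exact Nat.choose_le_choose _ (by omega))
  simpa using this

lemma exc_bound {n k t B K1 : ℕ} (hk : 3 ≤ k) (ht : 1 ≤ t) (htn : t ≤ n) (F : Finset (Finset (Fin n)))
    (hF : ∀ A ∈ F, A.card = k)
    (hP : ¬ ContainsLoosePath k (2 * t + 2) F) (S : Finset (Fin n)) (hS : S.card ≤ B)
    (hc : ∑ i ∈ Icc 1 t, (n - i).choose (k - 1) ≤ F.card)
    (hd : K1 * (F.filter (fun e => Disjoint e S)).card ≤ n ^ (k-1))
    (hn : K1 * (B * (2 ^ B * sz k t) + B ^ 2 + t ^ 2 + 2 * (2 ^ B * sz k t)) ≤ n)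
    (P : Finset (Finset (Fin n))) (hPd : P = powersetCard (k-1) (univ \ S))
    (f : Finset (Fin n) → Finset (Fin n)) (hf : ∀ T, f T = S.filter (fun v => insert v T ∈ F)) :
    K1 * (P.filter (fun T => ¬ ((f T).card = t ∧
      sz k t * n ^ (k-2) < (P.filter (fun U => f U = f T)).card))).card ≤ 2 * n ^ (k-1) := by
  set N := n ^ (k-2) with hN
  set lt := P.filter (fun T => (f T).card < t) with hlt
  set gt := P.filter (fun T => t < (f T).card) with hgt
  set sm := P.filter (fun T => (P.filter (fun U => f U = f T)).card ≤ sz k t * N) with hsm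
  have hfS : ∀ T, f T ⊆ S := fun T => by rw [hf]; exact filter_subset _ _
  have h2B : 2 ^ S.card * (sz k t * N) ≤ 2 ^ B * sz k t * N := by
    rw [mul_assoc]
    exact Nat.mul_le_mul_right _ (Nat.pow_le_pow_right (by norm_num) hS)
  have hgtc : gt.card ≤ 2 ^ B * sz k t * N := by
    refine le_trans ?_ h2B
    have := big_nb hk ht F hF hP S
    rw [hgt, hPd]
    simp only [hf]
    exact this
  have hsmc : sm.card ≤ 2 ^ B * sz k t * N := (small_class S f hfS).trans h2B
  have hexc : (P.filter (fun T => ¬ ((f T).card = t ∧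
      sz k t * N < (P.filter (fun U => f U = f T)).card))).card ≤ lt.card + gt.card + sm.card := by
    refine le_trans (card_le_card (t := lt ∪ gt ∪ sm) ?_)
      ((card_union_le _ _).trans (Nat.add_le_add_right (card_union_le _ _) _))
    intro T hT
    rw [mem_filter] at hT
    simp only [hlt, hgt, hsm, mem_union, mem_filter, hT.1, true_and]
    by_contra hcon
    push Not at hcon
    exact hT.2 ⟨by omega, hcon.2⟩
  have hsum : (∑ T ∈ P, (f T).card) + lt.card ≤ t * P.card + B * gt.card := by
    rw [hlt, hgt, card_filter, card_filter, mul_sum, ← sum_add_distrib, mul_comm t, ← smul_eq_mul, ← sum_const,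
      ← sum_add_distrib]
    refine sum_le_sum (fun T _ => ?_)
    have := card_le_card (hfS T)
    split_ifs <;> omega
  have hec := edge_count (by omega) F hF S
  rw [← hPd] at hec
  simp only [← hf, ← hN] at hec
  have hPc : P.card ≤ (n - t).choose (k-1) + t * N := by
    rw [hPd, card_powersetCard]
    refine le_trans (Nat.choose_le_choose _ (b := n) ?_) ?_
    · exact (card_le_univ _).trans (by simp)
    · have := choose_shift (n := n) (r := k-1) (by omega) t htn
      rwa [show k - 1 - 1 = k - 2 by omega] at this
  have hs := sum_Icc_ge n k t
  have hS2 : S.card ^ 2 * N ≤ B ^ 2 * N := Nat.mul_le_mul_right _ (Nat.pow_le_pow_left hS 2)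
  have hmain : lt.card ≤ (F.filter (fun e => Disjoint e S)).card + B * (2 ^ B * sz k t * N) + B ^ 2 * N + t ^ 2 * N := by
    have a1 := Nat.mul_le_mul_left t hPc
    have a2 := Nat.mul_le_mul_left B hgtc
    have a3 : t * ((n - t).choose (k-1) + t * N) = t * (n - t).choose (k-1) + t ^ 2 * N := by ring
    omega
  have hNn : n ^ (k-1) = n * N := by rw [hN, ← pow_succ']; congr 1; omega
  calc K1 * _ ≤ K1 * (lt.card + gt.card + sm.card) := Nat.mul_le_mul_left _ hexc
    _ ≤ K1 * ((F.filter (fun e => Disjoint e S)).card + B * (2 ^ B * sz k t * N) + B ^ 2 * N + t ^ 2 * N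
        + 2 ^ B * sz k t * N + 2 ^ B * sz k t * N) := by
        apply Nat.mul_le_mul_left; omega
    _ = K1 * (F.filter (fun e => Disjoint e S)).card +
        (K1 * (B * (2 ^ B * sz k t) + B ^ 2 + t ^ 2 + 2 * (2 ^ B * sz k t))) * N := by ring
    _ ≤ n ^ (k-1) + n * N := Nat.add_le_add hd (Nat.mul_le_mul_right _ hn)
    _ = _ := by rw [hNn]; ring

lemma stability (k t K : ℕ) (hk : 3 ≤ k) (ht : 1 ≤ t) : ∃ n0, ∀ n, n0 ≤ n → ∀ F : Finset (Finset (Fin n)),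
    (∀ A ∈ F, A.card = k) → ¬ ContainsLoosePath k (2 * t + 2) F →
    ∑ i ∈ Icc 1 t, (n - i).choose (k - 1) ≤ F.card →
    ∃ S0 : Finset (Fin n), S0.card = t ∧
      K * ((powersetCard (k-1) (univ \ S0)).filter (fun T => ∃ v ∈ S0, insert v T ∉ F)).card ≤ n ^ (k-1) := by
  set q := 2 ^ k * k.factorial with hq
  set K1 := 4 * (K + 1) * (1 + 8 * q * (k-1) ^ 2) with hK1
  obtain ⟨c, -, -, hh⟩ := heavy k (2 * t + 2) hk (by omega)
  obtain ⟨B, hB⟩ := hh K1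
  refine ⟨K1 * (B * (2 ^ B * sz k t) + B ^ 2 + t ^ 2 + 2 * (2 ^ B * sz k t)) + 2 * K * B + 2 * (B + 2 + k) + t, ?_⟩
  intro n hn F hF hP hc
  obtain ⟨S, hS, hSd⟩ := hB n (by omega) F hF hP
  set P := powersetCard (k-1) (univ \ S) with hPd
  set f : Finset (Fin n) → Finset (Fin n) := fun T => S.filter (fun v => insert v T ∈ F) with hf
  set Exc := P.filter (fun T => ¬ ((f T).card = t ∧
      sz k t * n ^ (k-2) < (P.filter (fun U => f U = f T)).card)) with hExc
  have hE : K1 * Exc.card ≤ 2 * n ^ (k-1) :=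
    exc_bound hk ht (by omega) F hF hP S hS hc hSd (by omega) P hPd f (fun T => rfl)
  have hE2 : 2 * (K + 1) * (1 + 8 * q * (k-1) ^ 2) * Exc.card ≤ n ^ (k-1) := by
    rw [hK1] at hE
    nlinarith
  have hfS : ∀ T, f T ⊆ S := fun T => filter_subset _ _
  have hPS : ∀ T ∈ P, Disjoint T S ∧ T.card = k - 1 := by
    intro T hT
    have := mem_powersetCard.1 hT
    refine ⟨?_, this.2⟩
    rw [disjoint_left]
    intro x hx
    exact (mem_sdiff.1 (this.1 hx)).2
  have hgood : ∀ T ∈ P \ Exc, T ∈ P ∧ (f T).card = t ∧ sz k t * n ^ (k-2) < (P.filter (fun U => f U = f T)).card := by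
    intro T hT
    rw [mem_sdiff, hExc, mem_filter] at hT
    have := hT.2
    push Not at this
    by_contra hcon
    exact hT.2 ⟨hT.1, fun h => hcon ⟨hT.1, h⟩⟩
  have hcl : ∀ T ∈ P \ Exc, Av (sz k t) (P.filter (fun U => f U = f T)) := by
    intro T hT
    refine av_of_card (r := k-1) (by omega) _ (fun U hU => (hPS U (mem_filter.1 hU).1).2) ?_
    rw [show k - 1 - 1 = k - 2 by omega]
    exact (hgood T hT).2.2
  obtain ⟨T0, hT0, hT0c⟩ := conn (r := k-1) k (by omega) (by omega) S (by omega) Exc (filter_subset _ _)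
    (by rw [← hq]; nlinarith [Nat.zero_le (K * (8 * q * (k-1)^2 * Exc.card)), Nat.zero_le (8 * q * (k-1)^2 * Exc.card), Nat.zero_le (K * Exc.card)]) f (by
      intro T hT U hU hTU
      by_contra hne
      apply hP
      have hT' := hgood T hT
      have hU' := hgood U hU
      have hsubS : f T ∪ f U ⊆ S := union_subset (hfS T) (hfS U)
      refine path_two (by omega) hF (fun X hX => ?_) (hcl T hT) (hcl U hU) (f T) (f U) hT'.2.1 hU'.2.1 ht hne
        ?_ ?_ T U (mem_filter.2 ⟨hT'.1, rfl⟩) (mem_filter.2 ⟨hU'.1, rfl⟩)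
        ((hPS T hT'.1).1.mono_right hsubS) ((hPS U hU'.1).1.mono_right hsubS) hTU
        (by have := (hPS T hT'.1).2; omega) (by have := (hPS U hU'.1).2; omega)
      · rw [← card_pos, (hPS X (mem_filter.1 hX).1).2]; omega
      · intro u hu X hX
        rw [← (mem_filter.1 hX).2] at hu
        exact (mem_filter.1 hu).2
      · intro u hu X hX
        rw [← (mem_filter.1 hX).2] at hu
        exact (mem_filter.1 hu).2)
  refine ⟨f T0, (hgood T0 hT0).2.1, ?_⟩
  set D1 := ((powersetCard (k-1) (univ \ f T0)).filter (fun T => ∃ v ∈ f T0, insert v T ∉ F)) with hD1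
  have hcount : D1.card ≤ B * n ^ (k-2) + Exc.card + 2 * q * (k-1) ^ 2 * Exc.card := by
    have hsub : D1 ⊆ D1.filter (fun T => ¬ Disjoint T S) ∪ Exc ∪ (P \ Exc).filter (fun T => f T ≠ f T0) := by
      intro T hT
      by_cases h1 : Disjoint T S
      · by_cases h2 : T ∈ Exc
        · simp [h2]
        · apply mem_union_right
          rw [hD1, mem_filter, mem_powersetCard] at hT
          rw [mem_filter, mem_sdiff, hPd, mem_powersetCard]
          refine ⟨⟨⟨?_, hT.1.2⟩, h2⟩, ?_⟩
          · intro x hx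
            simp only [mem_sdiff, mem_univ, true_and]
            exact disjoint_left.1 h1 hx
          · intro heq
            obtain ⟨v, hv, hvF⟩ := hT.2
            rw [← heq] at hv
            exact hvF (mem_filter.1 hv).2
      · apply mem_union_left
        apply mem_union_left
        rw [mem_filter]
        exact ⟨hT, h1⟩
    refine (card_le_card hsub).trans ((card_union_le _ _).trans (Nat.add_le_add ((card_union_le _ _).trans
      (Nat.add_le_add_right ?_ _)) hT0c))
    have := count_hit (k-1) (by omega) S (D1.filter (fun T => ¬ Disjoint T S)) (by
      intro T hT
      rw [mem_filter] at hT
      exact ⟨(mem_powersetCard.1 (mem_filter.1 hT.1).1).2, hT.2⟩)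
    rw [show k - 1 - 1 = k - 2 by omega] at this
    exact this.trans (Nat.mul_le_mul_right _ hS)
  have hNn : n ^ (k-1) = n * n ^ (k-2) := by rw [← pow_succ']; congr 1; omega
  have hnB : 2 * K * B * n ^ (k-2) ≤ n ^ (k-1) := by
    rw [hNn]; exact Nat.mul_le_mul_right _ (by omega)
  have h5 := Nat.mul_le_mul_left (2 * K) hcount
  nlinarith [Nat.zero_le (K * (q * (k-1)^2 * Exc.card)), Nat.zero_le (q * (k-1)^2 * Exc.card), Nat.zero_le (K * Exc.card)]

lemma choose_sum (n k : ℕ) (hk : 1 ≤ k) : ∀ t, t ≤ n →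
    n.choose k = (n - t).choose k + ∑ i ∈ Icc 1 t, (n - i).choose (k - 1) := by
  intro t
  induction t with
  | zero => intro _; simp
  | succ t ih =>
    intro ht
    have h1 := ih (by omega)
    rw [← insert_Icc_right_eq_Icc_add_one (by omega), sum_insert (by simp)]
    obtain ⟨m, hm⟩ : ∃ m, n - t = m + 1 := ⟨n - t - 1, by omega⟩
    obtain ⟨k, rfl⟩ : ∃ k', k = k' + 1 := ⟨k - 1, by omega⟩
    have h2 : n - (t + 1) = m := by omega
    rw [hm, Nat.choose_succ_succ'] at h1
    rw [h2]
    simp only [Nat.add_sub_cancel] at h1 ⊢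
    omega

lemma meet_card {n k t : ℕ} (hk : 1 ≤ k) (S : Finset (Fin n)) (hS : S.card = t) :
    ((powersetCard k univ).filter (fun A => (A ∩ S).Nonempty)).card =
      ∑ i ∈ Icc 1 t, (n - i).choose (k - 1) := by
  have htn : t ≤ n := by
    rw [← hS]; exact (card_le_univ _).trans (by simp)
  have h1 := card_filter_add_card_filter_not (s := powersetCard k (univ : Finset (Fin n))) (fun A => (A ∩ S).Nonempty)
  have h2 : (powersetCard k (univ : Finset (Fin n))).filter (fun A => ¬ (A ∩ S).Nonempty) = powersetCard k (univ \ S) := by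
    ext A
    simp only [mem_filter, mem_powersetCard, subset_univ, true_and, not_nonempty_iff_eq_empty,
      ← disjoint_iff_inter_eq_empty, subset_sdiff]
    tauto
  rw [h2, card_powersetCard, card_powersetCard, card_sdiff_of_subset (subset_univ _), card_univ, Fintype.card_fin, hS,
    choose_sum n k hk t htn] at h1
  omega

lemma free_ext {n k t : ℕ} (S E : Finset (Fin n)) (hS : S.card = t) :
    ¬ ContainsLoosePath k (2 * t + 2)
      (insert E ((powersetCard k univ).filter (fun A => (A ∩ S).Nonempty))) := by
  rintro ⟨P, hinj, hin, -, hadj⟩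
  set I := (univ : Finset (Fin (2 * t + 2))).filter (fun i => P i ≠ E) with hI
  have h0 : 2 * t + 1 ≤ I.card := by
    have h1 := card_filter_add_card_filter_not (s := (univ : Finset (Fin (2 * t + 2)))) (fun i => P i = E)
    have h2 : ((univ : Finset (Fin (2 * t + 2))).filter (fun i => P i = E)).card ≤ 1 := by
      rw [card_le_one]
      intro a ha b hb
      rw [mem_filter] at ha hb
      exact hinj (ha.2.trans hb.2.symm)
    rw [card_univ, Fintype.card_fin] at h1
    have : I.card = ((univ : Finset (Fin (2 * t + 2))).filter (fun i => ¬ P i = E)).card := rfl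
    omega
  have hne : ∀ i ∈ I, (P i ∩ S).Nonempty := by
    intro i hi
    have := (mem_filter.1 hi).2
    have h2 := hin i
    rw [mem_insert, mem_filter] at h2
    rcases h2 with h2 | h2
    · exact absurd h2 this
    · exact h2.2
  have h2 : ∀ i ∈ I, ∃ v, v ∈ P i ∩ S := fun i hi => hne i hi
  obtain ⟨s0, -⟩ : ∃ v, v ∈ S := by
    have : 0 < I.card := by omega
    obtain ⟨i, hi⟩ := card_pos.1 this
    obtain ⟨v, hv⟩ := h2 i hi
    exact ⟨v, (mem_inter.1 hv).2⟩
  classical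
  set g : Fin (2 * t + 2) → Fin n := fun i => if h : (P i ∩ S).Nonempty then h.choose else s0 with hg
  have hgm : ∀ i ∈ I, g i ∈ P i ∩ S := by
    intro i hi
    rw [hg]
    simp only [hne i hi, dif_pos]
    exact (hne i hi).choose_spec
  have h3 : I.card ≤ 2 * S.card := by
    refine card_le_mul_card_image_of_maps_to (f := g) (fun i hi => (mem_inter.1 (hgm i hi)).2) 2 ?_
    intro v _
    by_contra hc
    push Not at hc
    rw [two_lt_card] at hc
    obtain ⟨a, ha, b, hb, c, hc, hab, hac, hbc⟩ := hc
    have hv : ∀ i ∈ I.filter (fun i => g i = v), v ∈ P i := by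
      intro i hi
      rw [mem_filter] at hi
      rw [← hi.2]
      exact (mem_inter.1 (hgm i hi.1)).1
    have key : ∀ i ∈ I.filter (fun i => g i = v), ∀ j ∈ I.filter (fun i => g i = v), i ≠ j →
        (i : ℕ) + 1 = j ∨ (j : ℕ) + 1 = i := by
      intro i hi j hj hij
      rcases lt_or_gt_of_ne hij with h | h
      · left; exact (hadj i j h).1 ⟨v, mem_inter.2 ⟨hv i hi, hv j hj⟩⟩
      · right; exact (hadj j i h).1 ⟨v, mem_inter.2 ⟨hv j hj, hv i hi⟩⟩
    have k1 := key a ha b hb hab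
    have k2 := key a ha c hc hac
    have k3 := key b hb c hc hbc
    omega
  omega

lemma f0_bound {n k : ℕ} (hk : 1 ≤ k) (F0 : Finset (Finset (Fin n))) (D : Finset (Fin n)) (hD : D.Nonempty)
    (hF0 : ∀ A ∈ F0, A.card = k ∧ ¬ A ⊆ D)
    (h : ∀ A ∈ F0, ∀ B ∈ F0, A \ D = B \ D) : F0.card ≤ D.card ^ (k-1) := by
  rcases F0.eq_empty_or_nonempty with rfl | ⟨A0, hA0⟩
  · simp
  have h1 : ∀ A ∈ F0, (A ∩ D).card = (A0 ∩ D).card := by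
    intro A hA
    have e1 := card_inter_add_card_sdiff A D
    have e2 := card_inter_add_card_sdiff A0 D
    rw [h A hA A0 hA0, (hF0 A hA).1] at e1
    rw [(hF0 A0 hA0).1] at e2
    omega
  have h2 : (A0 ∩ D).card ≤ k - 1 := by
    have e2 := card_inter_add_card_sdiff A0 D
    rw [(hF0 A0 hA0).1] at e2
    have : 0 < (A0 \ D).card := by
      rw [card_pos, sdiff_nonempty]; exact (hF0 A0 hA0).2
    omega
  have h3 : F0.card ≤ (powersetCard (A0 ∩ D).card D).card := by
    refine card_le_card_of_injOn (fun A => A ∩ D) ?_ ?_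
    · intro A hA
      rw [mem_coe, mem_powersetCard]
      exact ⟨inter_subset_right, h1 A hA⟩
    · intro A hA B hB hAB
      have e := h A hA B hB
      simp only at hAB
      rw [← sdiff_union_inter A D, ← sdiff_union_inter B D, e, hAB]
  rw [card_powersetCard] at h3
  exact h3.trans ((Nat.choose_le_pow _ _).trans (Nat.pow_le_pow_right (card_pos.2 hD) h2))

lemma star_count {n r : ℕ} (hr : 1 ≤ r) (V : Finset (Fin n)) (x : Fin n) (hx : x ∈ V) :
    ((powersetCard r V).filter (fun T => x ∈ T)).card = (V.card - 1).choose (r - 1) := by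
  rw [← card_erase_of_mem hx, ← card_powersetCard]
  symm
  refine card_bij (fun Q _ => insert x Q) ?_ ?_ ?_
  · intro Q hQ
    rw [mem_powersetCard] at hQ
    have hxQ : x ∉ Q := fun h => by simpa using hQ.1 h
    rw [mem_filter, mem_powersetCard, card_insert_of_notMem hxQ]
    refine ⟨⟨insert_subset hx (hQ.1.trans (erase_subset _ _)), by omega⟩, by simp⟩
  · intro Q hQ Q' hQ' h
    rw [mem_powersetCard] at hQ hQ'
    have hxQ : x ∉ Q := fun h => by simpa using hQ.1 h
    have hxQ' : x ∉ Q' := fun h => by simpa using hQ'.1 h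
    rw [← erase_insert hxQ, ← erase_insert hxQ', h]
  · intro T hT
    rw [mem_filter, mem_powersetCard] at hT
    refine ⟨T.erase x, ?_, insert_erase hT.2⟩
    rw [mem_powersetCard, card_erase_of_mem hT.2]
    exact ⟨erase_subset_erase _ hT.1.1, by omega⟩

lemma nice_of {n k t : ℕ} (hk : 3 ≤ k) (F : Finset (Finset (Fin n)))
    (S : Finset (Fin n)) (hS : S.card = t) (hn : 2 * (t + 1 + k) + 2 * (2 ^ k * k.factorial) * sz k t < n)
    (x : Fin n) (hx : x ∉ S)
    (hxD : ∀ v ∈ S, 2 * ((powersetCard (k-1) (univ \ S)).filter (fun T => x ∈ T ∧ insert v T ∉ F)).card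
      < (n - (t + 1)).choose (k - 2)) : Nice (sz k t) F S x := by
  intro v hv W hW hxW
  by_contra hcon
  push Not at hcon
  have h1 := star_count (r := k-1) (by omega) (univ \ S) x (by simp [hx])
  rw [card_sdiff_of_subset (subset_univ _), card_univ, Fintype.card_fin, hS,
    show n - t - 1 = n - (t + 1) by omega, show k - 1 - 1 = k - 2 by omega] at h1
  have h2 := hxD v hv
  set P := powersetCard (k-1) (univ \ S) with hP
  set X := P.filter (fun T => x ∈ T ∧ insert v T ∈ F) with hX
  have h3 : (P.filter (fun T => x ∈ T)).card ≤ (P.filter (fun T => x ∈ T ∧ insert v T ∉ F)).card + X.card := by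
    refine (card_le_card ?_).trans (card_union_le _ _)
    intro T hT
    simp only [hX, mem_union, mem_filter] at hT ⊢
    tauto
  have h4 : X.card ≤ W.card * n ^ (k - 2 - 1) := by
    have h5 : X.card = (X.image (fun T => T.erase x)).card := by
      rw [card_image_of_injOn]
      intro T hT U hU h
      simp only [hX, coe_filter, Set.mem_ofPred_eq] at hT hU
      simp only at h
      rw [← insert_erase hT.2.1, ← insert_erase hU.2.1, h]
    rw [h5]
    refine count_hit (k-2) (by omega) W _ ?_
    intro Q hQ
    rw [mem_image] at hQ
    obtain ⟨T, hT, rfl⟩ := hQ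
    rw [hX, mem_filter, hP, mem_powersetCard] at hT
    refine ⟨by rw [card_erase_of_mem hT.2.1]; omega, fun hd => ?_⟩
    refine hcon T hT.2.1 ?_ hT.2.2
    rw [← insert_erase hT.2.1, disjoint_insert_left]
    exact ⟨hxW, hd⟩
  have h5 := pow_le_choose (k := k) (r := k-2) (a := t+1) (n := n) (by omega) (by omega)
  set q := 2 ^ k * k.factorial with hq
  have h6 : (n - (t+1)).choose (k-2) ≤ 2 * (sz k t * n ^ (k-2-1)) := by
    have := Nat.mul_le_mul_right (n ^ (k-2-1)) hW
    omega
  have h7 : n * n ^ (k-2-1) ≤ (2 * q * sz k t) * n ^ (k-2-1) := by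
    have e : n * n ^ (k-2-1) = n ^ (k-2) := by rw [← pow_succ']; congr 1; omega
    rw [e]
    calc _ ≤ _ := h5
      _ ≤ q * (2 * (sz k t * n ^ (k-2-1))) := Nat.mul_le_mul_left _ h6
      _ = _ := by ring
  have h8 := Nat.le_of_mul_le_mul_right h7 (pow_pos (by omega) _)
  omega

lemma missing_le {n k t : ℕ} (hk : 2 ≤ k) (F : Finset (Finset (Fin n))) (S : Finset (Fin n)) (hS : S.card = t)
    (P : Finset (Finset (Fin n))) (hP : P = powersetCard (k-1) (univ \ S))
    (Mp : Finset (Finset (Fin n) × Fin n)) (hMp : Mp = (P ×ˢ S).filter (fun p => insert p.2 p.1 ∉ F)) :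
    Mp.card ≤ (((powersetCard k univ).filter (fun A => (A ∩ S).Nonempty)) \ F).card ∧
    Mp.card ≤ t * (P.filter (fun T => ∃ v ∈ S, insert v T ∉ F)).card := by
  constructor
  · have hmem : ∀ p ∈ Mp, p.1 ⊆ univ \ S ∧ p.1.card = k-1 ∧ p.2 ∈ S ∧ insert p.2 p.1 ∉ F := by
      intro p hp
      rw [hMp, mem_filter, mem_product, hP, mem_powersetCard] at hp
      tauto
    have hinter : ∀ p ∈ Mp, insert p.2 p.1 ∩ S = {p.2} ∧ p.2 ∉ p.1 := by
      intro p hp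
      obtain ⟨h1, h2, h3, h4⟩ := hmem p hp
      have hd : ∀ x ∈ p.1, x ∉ S := fun x hx => (mem_sdiff.1 (h1 hx)).2
      refine ⟨?_, fun h => hd _ h h3⟩
      ext x
      rw [mem_inter, mem_insert, mem_singleton]
      constructor
      · rintro ⟨h | h, h'⟩
        · exact h
        · exact absurd h' (hd x h)
      · rintro rfl; exact ⟨Or.inl rfl, h3⟩
    refine card_le_card_of_injOn (fun p => insert p.2 p.1) ?_ ?_
    · intro p hp
      obtain ⟨h1, h2, h3, h4⟩ := hmem p hp
      simp only [coe_sdiff, coe_filter, Set.mem_sdiff, mem_coe, Set.mem_ofPred_eq, mem_powersetCard, subset_univ, true_and]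
      refine ⟨⟨?_, ⟨p.2, by simp [h3]⟩⟩, h4⟩
      rw [card_insert_of_notMem (hinter p hp).2]; omega
    · intro p hp p' hp' h
      have e1 := hinter p hp
      have e2 := hinter p' hp'
      simp only at h
      have e3 : p.2 = p'.2 := by
        have := e1.1
        rw [h, e2.1] at this
        exact (singleton_injective this).symm
      refine Prod.ext ?_ e3
      rw [← erase_insert e1.2, ← erase_insert e2.2, h, e3]
  · rw [← hS, mul_comm, ← card_product]
    refine card_le_card ?_
    intro p hp
    rw [hMp, mem_filter, mem_product] at hp
    rw [mem_product, mem_filter]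
    exact ⟨⟨hp.1.1, p.2, hp.1.2, hp.2⟩, hp.1.2⟩

lemma structure_thm (k t : ℕ) (hk : 3 ≤ k) (ht : 1 ≤ t) : ∃ n0, ∀ n, n0 ≤ n → ∀ F : Finset (Finset (Fin n)),
    (∀ A ∈ F, A.card = k) → ¬ ContainsLoosePath k (2 * t + 2) F →
    (∑ i ∈ Icc 1 t, (n - i).choose (k - 1)) + 1 ≤ F.card →
    ∃ (S : Finset (Fin n)) (E : Finset (Fin n)), S.card = t ∧ E.card = k ∧ E ∩ S = ∅ ∧
            F = insert E ((powersetCard k univ).filter (fun A => (A ∩ S).Nonempty)) := by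
  obtain ⟨c, -, hcr, -⟩ := heavy k (2 * t + 2) hk (by omega)
  set q := 2 ^ k * k.factorial with hq
  have hq1 : 1 ≤ q := Nat.mul_pos (by positivity) (Nat.factorial_pos _)
  set L := 2 * q * k * (c + 1) with hL
  obtain ⟨n1, hn1⟩ := stability k t (2 * q * k * t * L + 2 * q) hk ht
  refine ⟨n1 + 2 * (t + 1 + k) + 2 * q * sz k t + 1, ?_⟩
  intro n hn F hF hPF hc
  obtain ⟨S, hS, hbad⟩ := hn1 n (by omega) F hF hPF (by omega)
  set P := powersetCard (k-1) (univ \ S) with hP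
  set bad := P.filter (fun T => ∃ v ∈ S, insert v T ∉ F) with hbd
  set Mp := (P ×ˢ S).filter (fun p => insert p.2 p.1 ∉ F) with hMp
  set Me := (powersetCard k univ).filter (fun A => (A ∩ S).Nonempty) with hMe
  set F0 := F.filter (fun A => Disjoint A S) with hF0
  obtain ⟨hm1, hm2⟩ := missing_le (by omega) F S hS P hP Mp hMp
  rw [← hMe] at hm1
  have hMec : Me.card = ∑ i ∈ Icc 1 t, (n - i).choose (k - 1) := meet_card (by omega) S hS
  have hsplit : F = F0 ∪ (F ∩ Me) := by
    ext A
    simp only [hF0, hMe, mem_union, mem_filter, mem_inter, mem_powersetCard, subset_univ, true_and,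
      nonempty_iff_ne_empty, ne_eq, ← disjoint_iff_inter_eq_empty]
    have := hF A
    tauto
  have hF0c : (Me \ F).card + 1 ≤ F0.card := by
    have h1 : F.card ≤ F0.card + (F ∩ Me).card := by
      conv_lhs => rw [hsplit]
      exact card_union_le _ _
    have h2 := card_inter_add_card_sdiff Me F
    rw [inter_comm] at h2
    omega
  have hNn : n ^ (k-1) = n * n ^ (k-2) := by rw [← pow_succ']; congr 1; omega
  have hNpos : 0 < n ^ (k-2) := pow_pos (by omega) _
  -- the good sets are available
  have hGcard : ∀ T ∈ P \ bad, T.card = k - 1 := fun T hT => (mem_powersetCard.1 (mem_sdiff.1 hT).1).2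
  have hGav : Av (sz k t) (P \ bad) := by
    refine av_of_card (r := k-1) (by omega) _ hGcard ?_
    rw [show k - 1 - 1 = k - 2 by omega]
    have h1 : P.card = (n - t).choose (k-1) := by
      rw [hP, card_powersetCard, card_sdiff_of_subset (subset_univ _), card_univ, Fintype.card_fin, hS]
    have h2 := pow_le_choose (k := k) (r := k-1) (a := t) (n := n) (by omega) (by omega)
    rw [← hq, ← h1] at h2
    have h3 : (P \ bad).card + bad.card = P.card := by
      rw [card_sdiff_add_card_eq_card (filter_subset _ _)]
    have h4 : 2 * q * bad.card ≤ n ^ (k-1) := by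
      refine le_trans (Nat.mul_le_mul_right _ ?_) hbad
      omega
    have h5 : 2 * q * sz k t * n ^ (k-2) < n ^ (k-1) := by
      rw [hNn]
      exact Nat.mul_lt_mul_of_pos_right (by omega) hNpos
    rw [← h3] at h2
    by_contra hcon
    push Not at hcon
    have := Nat.mul_le_mul_left (2 * q) hcon
    nlinarith
  have hGne : ∀ T ∈ P \ bad, T.Nonempty := by
    intro T hT
    rw [← card_pos, hGcard T hT]; omega
  have hGin : ∀ u ∈ S, ∀ T ∈ P \ bad, insert u T ∈ F := by
    intro u hu T hT
    rw [mem_sdiff, hbd, mem_filter] at hT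
    by_contra hcon
    exact hT.2 ⟨hT.1, u, hu, hcon⟩
  -- the set D
  set D := (univ \ S).filter (fun x => ∃ v ∈ S, (n - (t+1)).choose (k-2) ≤
    2 * (P.filter (fun T => x ∈ T ∧ insert v T ∉ F)).card) with hD
  have hnice : ∀ x, x ∉ S → x ∉ D → Nice (sz k t) F S x := by
    intro x hxS hxD
    refine nice_of hk F S hS (by rw [← hq]; omega) x hxS ?_
    intro v hv
    by_contra hcon
    push Not at hcon
    exact hxD (mem_filter.2 ⟨by simp [hxS], v, hv, hcon⟩)
  have hF0m : ∀ A ∈ F0, A ∈ F ∧ Disjoint A S := fun A hA => mem_filter.1 hA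
  have hmeet : ∀ A ∈ F0, ∀ B ∈ F0, (B ∩ A).Nonempty → ∀ b ∈ B, b ∉ A → b ∈ D := by
    intro A hA B hB hAB b hb hbA
    by_contra hcon
    have hb' := hnice b (disjoint_left.1 (hF0m B hB).2 hb) hcon
    exact hPF (path_meet (by omega) hF hGne hGav S hS ht hGin A B (hF0m A hA).1 (hF0m B hB).1
      (hF0m A hA).2 (hF0m B hB).2 hAB b hb hbA hb')
  have hsame : ∀ A ∈ F0, ∀ B ∈ F0, ¬ A ⊆ D → ¬ B ⊆ D → A \ D = B \ D := by
    intro A hA B hB hAD hBD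
    rw [not_subset] at hAD hBD
    obtain ⟨a, ha, haD⟩ := hAD
    obtain ⟨b, hb, hbD⟩ := hBD
    by_cases hAB : Disjoint A B
    · exfalso
      exact hPF (path_disj (by omega) hF hGne hGav S hS ht hGin A B (hF0m A hA).1 (hF0m B hB).1
        (hF0m A hA).2 (hF0m B hB).2 hAB a b ha hb (hnice a (disjoint_left.1 (hF0m A hA).2 ha) haD)
        (hnice b (disjoint_left.1 (hF0m B hB).2 hb) hbD))
    · rw [disjoint_iff_inter_eq_empty, ← ne_eq, ← nonempty_iff_ne_empty] at hAB
      have hBA : (B ∩ A).Nonempty := by rwa [inter_comm]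
      ext x
      rw [mem_sdiff, mem_sdiff]
      constructor
      · rintro ⟨h1, h2⟩
        refine ⟨?_, h2⟩
        by_contra h3
        exact h2 (hmeet B hB A hA hAB x h1 h3)
      · rintro ⟨h1, h2⟩
        refine ⟨?_, h2⟩
        by_contra h3
        exact h2 (hmeet A hA B hB hBA x h1 h3)
  -- size of D
  have hDc : D.card * (((n - (t+1)).choose (k-2) + 1) / 2) ≤ Mp.card * (k-1) := by
    refine card_mul_le_card_mul (fun x p => x ∈ p.1) ?_ ?_
    · intro x hx
      rw [hD, mem_filter] at hx
      obtain ⟨-, v, hv, hxv⟩ := hx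
      have : (P.filter (fun T => x ∈ T ∧ insert v T ∉ F)).card ≤ (bipartiteAbove (fun x p => x ∈ p.1) Mp x).card := by
        refine card_le_card_of_injOn (fun T => (T, v)) ?_ ?_
        · intro T hT
          simp only [coe_filter, Set.mem_ofPred_eq] at hT
          simp [bipartiteAbove, hMp, hT, hv]
        · intro T _ U _ h
          exact (Prod.mk.inj h).1
      omega
    · intro p hp
      rw [hMp, mem_filter, mem_product, hP, mem_powersetCard] at hp
      refine (card_le_card (t := p.1) ?_).trans hp.1.1.2.le
      intro y hy
      simpa [bipartiteBelow] using (mem_filter.1 hy).2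
  have hDN : D.card * n ^ (k-2) ≤ 2 * q * k * Mp.card := by
    have h5 := pow_le_choose (k := k) (r := k-2) (a := t+1) (n := n) (by omega) (by omega)
    rw [← hq] at h5
    have h6 : (n - (t+1)).choose (k-2) ≤ 2 * (((n - (t+1)).choose (k-2) + 1) / 2) := by omega
    calc D.card * n ^ (k-2) ≤ D.card * (q * (2 * (((n - (t+1)).choose (k-2) + 1) / 2))) :=
          Nat.mul_le_mul_left _ (h5.trans (Nat.mul_le_mul_left _ h6))
      _ = (D.card * (((n - (t+1)).choose (k-2) + 1) / 2)) * (2 * q) := by ring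
      _ ≤ (Mp.card * (k-1)) * (2 * q) := Nat.mul_le_mul_right _ hDc
      _ ≤ (Mp.card * k) * (2 * q) := by gcongr; omega
      _ = _ := by ring
  have hLD : L * D.card ≤ n := by
    have h1 : (2 * q * k * t) * (L * D.card) * n ^ (k-2) ≤ (2 * q * k * t) * n * n ^ (k-2) := by
      calc _ = (2 * q * k * t * L) * (D.card * n ^ (k-2)) := by ring
        _ ≤ (2 * q * k * t * L) * (2 * q * k * (t * bad.card)) := by
          apply Nat.mul_le_mul_left
          exact hDN.trans (Nat.mul_le_mul_left _ hm2)
        _ = (2 * q * k * t) * ((2 * q * k * t * L) * bad.card) := by ring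
        _ ≤ (2 * q * k * t) * n ^ (k-1) := by
          apply Nat.mul_le_mul_left
          exact le_trans (Nat.mul_le_mul_right _ (by omega)) hbad
        _ = _ := by rw [hNn]; ring
    have h2 := Nat.le_of_mul_le_mul_right h1 hNpos
    exact Nat.le_of_mul_le_mul_left h2 (by positivity)
  have hDe : D = ∅ := by
    by_contra hne
    rw [← ne_eq, ← nonempty_iff_ne_empty] at hne
    have b1 : (F0.filter (fun A => A ⊆ D)).card ≤ c * D.card ^ (k-1) := by
      refine hcr n _ D (fun A hA => hF A (hF0m A (mem_filter.1 hA).1).1) (sub_path ?_ hPF)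
        (fun e he => (mem_filter.1 he).2)
      exact (filter_subset _ _).trans (filter_subset _ _)
    have b2 : (F0.filter (fun A => ¬ A ⊆ D)).card ≤ D.card ^ (k-1) := by
      refine f0_bound (by omega) _ D hne ?_ ?_
      · intro A hA
        rw [mem_filter] at hA
        exact ⟨hF A (hF0m A hA.1).1, hA.2⟩
      · intro A hA B hB
        rw [mem_filter] at hA hB
        exact hsame A hA.1 B hB.1 hA.2 hB.2
    have b3 := card_filter_add_card_filter_not (s := F0) (fun A => A ⊆ D)
    have b4 : F0.card ≤ (c + 1) * D.card ^ (k-1) := by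
      rw [add_mul, one_mul]; omega
    have hL1 : 1 ≤ L := by rw [hL]; exact Nat.mul_pos (by positivity) (by omega)
    have b5 : L * D.card ^ (k-2) ≤ n ^ (k-2) := by
      calc L * D.card ^ (k-2) ≤ L ^ (k-2) * D.card ^ (k-2) :=
            Nat.mul_le_mul_right _ (Nat.le_self_pow (by omega) _)
        _ = (L * D.card) ^ (k-2) := (mul_pow _ _ _).symm
        _ ≤ _ := Nat.pow_le_pow_left hLD _
    have b6 : (2 * q * k) * F0.card ≤ (2 * q * k) * Mp.card := by
      calc (2 * q * k) * F0.card ≤ (2 * q * k) * ((c + 1) * D.card ^ (k-1)) := Nat.mul_le_mul_left _ b4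
        _ = D.card * (L * D.card ^ (k-2)) := by
          rw [hL, show D.card ^ (k-1) = D.card * D.card ^ (k-2) by rw [← pow_succ']; congr 1; omega]; ring
        _ ≤ D.card * n ^ (k-2) := Nat.mul_le_mul_left _ b5
        _ ≤ _ := hDN
    have b7 := Nat.le_of_mul_le_mul_left b6 (by positivity)
    omega
  have hF01 : F0.card ≤ 1 := by
    rw [card_le_one]
    have hns : ∀ A ∈ F0, ¬ A ⊆ D := by
      intro A hA h
      rw [hDe, subset_empty] at h
      have := hF A (hF0m A hA).1
      rw [h, card_empty] at this
      omega
    intro A hA B hB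
    have := hsame A hA B hB (hns A hA) (hns B hB)
    rwa [hDe, sdiff_empty, sdiff_empty] at this
  obtain ⟨E, hE⟩ := card_eq_one.1 (show F0.card = 1 by omega)
  have hEm := hF0m E (by rw [hE]; simp)
  refine ⟨S, E, hS, hF E hEm.1, disjoint_iff_inter_eq_empty.1 hEm.2, ?_⟩
  have hMF : Me ⊆ F := by
    rw [← sdiff_eq_empty_iff_subset, ← card_eq_zero]; omega
  conv_lhs => rw [hsplit, hE, inter_eq_right.2 hMF]
  rfl

lemma ext_card {n k t : ℕ} (hk : 1 ≤ k) (S E : Finset (Fin n)) (hS : S.card = t) (hE : E ∩ S = ∅) :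
    (insert E ((powersetCard k univ).filter (fun A => (A ∩ S).Nonempty))).card =
      (∑ i ∈ Icc 1 t, (n - i).choose (k - 1)) + 1 := by
  rw [card_insert_of_notMem, meet_card hk S hS]
  rw [mem_filter, hE]
  simp

end LPaux

/-- For k ≥ 3, t ≥ 1 and all sufficiently large n, the Turán number of the k-uniform loose
path of length 2t+2 is C(n-1,k-1)+⋯+C(n-t,k-1)+1, and the unique extremal families consist
of all k-subsets of [n] meeting a fixed t-set S plus one additional k-set disjoint from S. -/
theorem turan_loose_path_even (k t : ℕ) (hk : 3 ≤ k) (ht : 1 ≤ t) :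
    ∃ n₀ : ℕ, ∀ n : ℕ, n₀ ≤ n →
      IsGreatest {m : ℕ | ∃ F : Finset (Finset (Fin n)),
          (∀ A ∈ F, A.card = k) ∧ ¬ ContainsLoosePath k (2 * t + 2) F ∧ F.card = m}
        ((∑ i ∈ Finset.Icc 1 t, (n - i).choose (k - 1)) + 1) ∧
      ∀ F : Finset (Finset (Fin n)),
        (∀ A ∈ F, A.card = k) → ¬ ContainsLoosePath k (2 * t + 2) F →
        (F.card = (∑ i ∈ Finset.Icc 1 t, (n - i).choose (k - 1)) + 1 ↔
          ∃ (S : Finset (Fin n)) (E : Finset (Fin n)), S.card = t ∧ E.card = k ∧ E ∩ S = ∅ ∧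
            F = insert E
              ((Finset.powersetCard k Finset.univ).filter (fun A => (A ∩ S).Nonempty))) := by
  obtain ⟨n1, h1⟩ := LPaux.structure_thm k t hk ht
  refine ⟨n1 + t + k, fun n hn => ⟨⟨?_, ?_⟩, ?_⟩⟩
  · obtain ⟨S, -, hS⟩ := exists_subset_card_eq (s := (univ : Finset (Fin n))) (n := t) (by simp; omega)
    obtain ⟨E, hES, hE⟩ := exists_subset_card_eq (s := (univ : Finset (Fin n)) \ S) (n := k) (by
      rw [card_sdiff_of_subset (subset_univ _), card_univ, Fintype.card_fin, hS]; omega)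
    have hES' : E ∩ S = ∅ := by
      rw [← disjoint_iff_inter_eq_empty, disjoint_left]
      intro x hx
      exact (mem_sdiff.1 (hES hx)).2
    refine ⟨_, ?_, LPaux.free_ext S E hS, LPaux.ext_card (k := k) (by omega) S E hS hES'⟩
    intro A hA
    rw [mem_insert, mem_filter, mem_powersetCard] at hA
    rcases hA with rfl | hA
    · exact hE
    · exact hA.1.2
  · rintro m ⟨F, hF, hP, rfl⟩
    by_contra hcon
    push Not at hcon
    obtain ⟨S, E, hS, hE, hES, hFe⟩ := h1 n (by omega) F hF hP hcon.le
    rw [hFe, LPaux.ext_card (by omega) S E hS hES] at hcon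
    exact lt_irrefl _ hcon
  · intro F hF hP
    constructor
    · intro h
      exact h1 n (by omega) F hF hP h.ge
    · rintro ⟨S, E, hS, hE, hES, rfl⟩
      exact LPaux.ext_card (by omega) S E hS hES
end

section
/- Let k, s be positive integers and let F* ⊆ binom([n],k) be a (k,s)-homogeneous family on n vertices with intersection pattern J. If the rank r(J) equals p, then |F*| ≤ C(n,p). -/
open Finset

/-- The finsets in `S` form an s-star (Δ-system) in `G` with kernel `A`:
`S` consists of `s` members of `G` whose pairwise intersections all equal `A`. -/
def IsStarWithKernel {α : Type*} [DecidableEq α] (G : Finset (Finset α)) (s : ℕ)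
    (A : Finset α) (S : Finset (Finset α)) : Prop :=
  S ⊆ G ∧ S.card = s ∧ ∀ E₁ ∈ S, ∀ E₂ ∈ S, E₁ ≠ E₂ → E₁ ∩ E₂ = A

/-- The pattern Π(S) of a set S relative to the partition (X_1, …, X_k):
the set of indices i with S ∩ X_i ≠ ∅. -/
def pattern {k n : ℕ} (X : Fin k → Finset (Fin n)) (S : Finset (Fin n)) : Finset (Fin k) :=
  Finset.univ.filter fun i => (S ∩ X i).Nonempty

/-- `G` is a (k,s)-homogeneous family with k-partition `X` and intersection pattern `J`:
`X` partitions the vertex set, every member of `G` is a k-set meeting each part in exactly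
one vertex, `J` is an intersection-closed family of proper subsets of [k], every member `F`
of `G` has Π(I(F,G)) = J, and every intersection `F ∩ F'` of distinct members is the kernel
of an s-star in `G` containing `F`. -/
def IsHomogeneous (k s : ℕ) {n : ℕ} (G : Finset (Finset (Fin n)))
    (X : Fin k → Finset (Fin n)) (J : Finset (Finset (Fin k))) : Prop :=
  (∀ v : Fin n, ∃! i : Fin k, v ∈ X i) ∧
  (∀ F ∈ G, F.card = k ∧ ∀ i : Fin k, (F ∩ X i).card = 1) ∧
  (∀ B ∈ J, B ≠ Finset.univ) ∧
  (∀ A ∈ J, ∀ B ∈ J, A ∩ B ∈ J) ∧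
  (∀ F ∈ G, (G.erase F).image (fun F' => pattern X (F ∩ F')) = J) ∧
  (∀ F ∈ G, ∀ F' ∈ G, F' ≠ F → ∃ S : Finset (Finset (Fin n)),
      IsStarWithKernel G s (F ∩ F') S ∧ F ∈ S)

/-- The rank of a family `L` of subsets of [k]: the minimum cardinality of a set
`D ⊆ [k]` contained in no member of `L`. -/
noncomputable def patRank (k : ℕ) (L : Finset (Finset (Fin k))) : ℕ :=
  sInf {p : ℕ | ∃ D : Finset (Fin k), D.card = p ∧ ∀ B ∈ L, ¬ D ⊆ B}

/-- A family `L` of proper subsets of [k] (of rank k-1) is of type 1 if there is an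
`x ∈ [k]` with `[k] ∖ {x} ∉ L` but `[k] ∖ {y} ∈ L` for every `y ≠ x`. -/
def IsType1 {k : ℕ} (L : Finset (Finset (Fin k))) : Prop :=
  ∃ x : Fin k, Finset.univ.erase x ∉ L ∧ ∀ y : Fin k, y ≠ x → Finset.univ.erase y ∈ L

/-- Proposition 3.4 (the rank bound): a (k,s)-homogeneous family on n vertices whose
intersection pattern has rank p has at most C(n,p) members. -/
theorem homogeneous_rank_bound (k s p n : ℕ) (hk : 1 ≤ k) (hs : 1 ≤ s)
    (G : Finset (Finset (Fin n))) (X : Fin k → Finset (Fin n)) (J : Finset (Finset (Fin k)))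
    (hG : IsHomogeneous k s G X J)
    (hrank : patRank k J = p) :
    G.card ≤ n.choose p := by
  obtain ⟨hX, hF, hJ, -, hI, -⟩ := hG
  have hne : {p : ℕ | ∃ D : Finset (Fin k), D.card = p ∧ ∀ B ∈ J, ¬ D ⊆ B}.Nonempty :=
    ⟨_, Finset.univ, rfl, fun B hB h => hJ B hB (Finset.univ_subset_iff.mp h)⟩
  obtain ⟨D, hDc, hD⟩ := Nat.sInf_mem hne
  have hDp : D.card = p := hDc.trans hrank
  have hcard : (Finset.powersetCard p (Finset.univ : Finset (Fin n))).card = n.choose p := by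
    simp
  rw [← hcard]
  apply Finset.card_le_card_of_injOn (fun F => D.biUnion fun i => F ∩ X i)
  · intro F hFG
    have hFG' : F ∈ G := hFG
    have : (D.biUnion fun i => F ∩ X i).card = p := by
      rw [Finset.card_biUnion]
      · rw [Finset.sum_congr rfl (fun i _ => (hF F hFG').2 i)]
        simpa using hDp
      · intro i _ j _ hij
        rw [Function.onFun, Finset.disjoint_left]
        intro v hv hv'
        exact hij ((hX v).unique (Finset.mem_inter.mp hv).2 (Finset.mem_inter.mp hv').2)
    simpa [Finset.mem_powersetCard] using this
  · intro F hFG F' hFG' heq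
    by_contra hne'
    have heq' : (D.biUnion fun i => F ∩ X i) = D.biUnion fun i => F' ∩ X i := heq
    have hmem : pattern X (F ∩ F') ∈ J := by
      rw [← hI F hFG]
      exact Finset.mem_image_of_mem (fun F' => pattern X (F ∩ F'))
        (Finset.mem_erase.mpr ⟨fun h => hne' h.symm, hFG'⟩)
    apply hD _ hmem
    intro i hi
    have h1 := (hF F hFG).2 i
    obtain ⟨v, hv⟩ : (F ∩ X i).Nonempty := by
      rw [← Finset.card_pos]; omega
    have hv2 : v ∈ D.biUnion fun i => F' ∩ X i := by
      rw [← heq']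
      exact Finset.mem_biUnion.mpr ⟨i, hi, hv⟩
    obtain ⟨j, _, hvj⟩ := Finset.mem_biUnion.mp hv2
    rw [Finset.mem_inter] at hv hvj
    simp only [pattern, Finset.mem_filter, Finset.mem_univ, true_and]
    exact ⟨v, by simp [hv.1, hv.2, hvj.1]⟩
end

section
/- Let k ≥ 3 be an integer and let L be a family of proper subsets of [k] that is closed under intersection. Then: (1) if L has rank k, then L consists of all proper subsets of [k]; (2) if L has rank k−1 and is of type 1, then there exists i ∈ [k] such that L contains every proper subset of [k] that contains i; (3) if k ≥ 4 and L has rank k−1 and is of type 2, then L contains at least two singletons. -/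
open Finset

theorem aux_mem {k : ℕ} (L : Finset (Finset (Fin k)))
    (hclosed : ∀ A ∈ L, ∀ B ∈ L, A ∩ B ∈ L) (B : Finset (Fin k)) (hB : B ≠ Finset.univ)
    (h : ∀ y, y ∉ B → ∃ A ∈ L, B ⊆ A ∧ y ∉ A) : B ∈ L := by
  have key : ∀ S : Finset (Fin k), S.Nonempty → (∀ y ∈ S, y ∉ B) →
      ∃ A ∈ L, B ⊆ A ∧ ∀ y ∈ S, y ∉ A := by
    intro S hS
    induction hS using Finset.Nonempty.cons_induction with
    | singleton a =>
      intro h1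
      obtain ⟨A, hA, h2, h3⟩ := h a (h1 a (by simp))
      exact ⟨A, hA, h2, by simpa using h3⟩
    | cons a s ha hs ih =>
      intro h1
      obtain ⟨A, hA, h2, h3⟩ := h a (h1 a (by simp))
      obtain ⟨A', hA', h2', h3'⟩ := ih (fun y hy => h1 y (by simp [hy]))
      refine ⟨A ∩ A', hclosed _ hA _ hA', Finset.subset_inter h2 h2', ?_⟩
      intro y hy hy'
      rw [Finset.mem_inter] at hy'
      rw [Finset.mem_cons] at hy
      rcases hy with rfl | hy
      · exact h3 hy'.1
      · exact h3' y hy hy'.2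
  have hne : (Bᶜ).Nonempty := by
    rw [Finset.nonempty_iff_ne_empty]
    intro h0
    exact hB (by simpa using h0)
  obtain ⟨A, hA, h2, h3⟩ := key Bᶜ hne (by simp)
  have : A = B := by
    apply Finset.Subset.antisymm _ h2
    intro y hy
    by_contra hn
    exact h3 y (by simpa using hn) hy
  exact this ▸ hA

theorem aux_cover {k : ℕ} (L : Finset (Finset (Fin k))) (D : Finset (Fin k))
    (h : D.card < patRank k L) : ∃ B ∈ L, D ⊆ B := by
  by_contra hn
  push Not at hn
  have : patRank k L ≤ D.card := Nat.sInf_le ⟨D, rfl, hn⟩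
  omega

theorem rank_facts (k : ℕ) (hk : 3 ≤ k) (L : Finset (Finset (Fin k)))
    (hproper : ∀ B ∈ L, B ≠ Finset.univ)
    (hclosed : ∀ A ∈ L, ∀ B ∈ L, A ∩ B ∈ L) :
    (patRank k L = k → L = Finset.univ.filter (fun B => B ≠ Finset.univ)) ∧
    (patRank k L = k - 1 → IsType1 L →
      ∃ i : Fin k, ∀ B : Finset (Fin k), B ≠ Finset.univ → i ∈ B → B ∈ L) ∧
    (4 ≤ k → patRank k L = k - 1 → ¬ IsType1 L →
      ∃ u v : Fin k, u ≠ v ∧ {u} ∈ L ∧ {v} ∈ L) := by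
  refine ⟨?_, ?_, ?_⟩
  · intro hr
    have he : ∀ x : Fin k, Finset.univ.erase x ∈ L := by
      intro x
      obtain ⟨B, hB, hs⟩ := aux_cover L (Finset.univ.erase x) (by
        rw [hr, Finset.card_erase_of_mem (Finset.mem_univ _), Finset.card_univ, Fintype.card_fin]
        omega)
      have hx : x ∉ B := by
        intro hx
        apply hproper B hB
        ext y
        by_cases hy : y = x
        · simp [hy, hx]
        · simpa using hs (by simp [hy])
      have : Finset.univ.erase x = B := by
        apply Finset.Subset.antisymm hs
        intro y hy
        simp only [Finset.mem_erase, Finset.mem_univ, and_true]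
        rintro rfl
        exact hx hy
      exact this ▸ hB
    ext B
    simp only [Finset.mem_filter, Finset.mem_univ, true_and]
    refine ⟨hproper B, fun hB => aux_mem L hclosed B hB ?_⟩
    intro y hy
    exact ⟨_, he y, by intro z hz; simp; rintro rfl; exact hy hz, by simp⟩
  · rintro - ⟨x, -, hx⟩
    refine ⟨x, fun B hB hxB => aux_mem L hclosed B hB ?_⟩
    intro y hy
    exact ⟨_, hx y (by rintro rfl; exact hy hxB),
      by intro z hz; simp; rintro rfl; exact hy hz, by simp⟩
  · intro hk4 hr ht
    have hpair : ∀ x y : Fin k, x ≠ y → Finset.univ.erase x ∉ L → Finset.univ.erase y ∉ L →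
        (Finset.univ.erase x).erase y ∈ L := by
      intro x y hxy hx hy
      obtain ⟨B, hB, hs⟩ := aux_cover L ((Finset.univ.erase x).erase y) (by
        rw [hr, Finset.card_erase_of_mem (by simp [hxy.symm]),
          Finset.card_erase_of_mem (Finset.mem_univ _), Finset.card_univ, Fintype.card_fin]
        omega)
      have hs' : ∀ z, z ≠ x → z ≠ y → z ∈ B := fun z h1 h2 => hs (by simp [h1, h2])
      by_cases h1 : x ∈ B <;> by_cases h2 : y ∈ B
      · exfalso
        apply hproper B hB
        ext z
        grind
      · exfalso
        apply hy
        have : Finset.univ.erase y = B := by ext z; simp; grind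
        exact this ▸ hB
      · exfalso
        apply hx
        have : Finset.univ.erase x = B := by ext z; simp; grind
        exact this ▸ hB
      · have : (Finset.univ.erase x).erase y = B := by ext z; simp; grind
        exact this ▸ hB
    have hsing : ∀ u : Fin k, (∀ y, y ≠ u → Finset.univ.erase y ∉ L →
        ∃ z, z ≠ y ∧ z ≠ u ∧ Finset.univ.erase z ∉ L) → {u} ∈ L := by
      intro u hu
      apply aux_mem L hclosed
      · intro h
        have := congrArg Finset.card h
        simp at this
        omega
      · intro y hy
        have hy : y ≠ u := by simpa using hy
        by_cases hyL : Finset.univ.erase y ∈ L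
        · exact ⟨_, hyL, by simp [hy.symm], by simp⟩
        · obtain ⟨z, h1, h2, h3⟩ := hu y hy hyL
          exact ⟨_, hpair y z h1.symm hyL h3, by simp [hy.symm, h2.symm], by simp⟩
    by_cases h0 : ∃ a : Fin k, Finset.univ.erase a ∉ L
    · obtain ⟨a, ha⟩ := h0
      have h1 : ∃ b, b ≠ a ∧ Finset.univ.erase b ∉ L := by
        by_contra hn
        push Not at hn
        exact ht ⟨a, ha, hn⟩
      obtain ⟨b, hba, hb⟩ := h1
      by_cases h2 : ∃ c, c ≠ a ∧ c ≠ b ∧ Finset.univ.erase c ∉ L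
      · obtain ⟨c, hca, hcb, hc⟩ := h2
        refine ⟨a, b, hba.symm, hsing a ?_, hsing b ?_⟩
        · intro y hy _
          by_cases hyb : y = b
          · exact ⟨c, by rw [hyb]; exact hcb, hca, hc⟩
          · exact ⟨b, Ne.symm hyb, hba, hb⟩
        · intro y hy _
          by_cases hya : y = a
          · exact ⟨c, by rw [hya]; exact hca, hcb, hc⟩
          · exact ⟨a, Ne.symm hya, hba.symm, ha⟩
      · push Not at h2
        have hcard : 1 < ((Finset.univ.erase a).erase b).card := by
          rw [Finset.card_erase_of_mem (by simp [hba]),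
            Finset.card_erase_of_mem (Finset.mem_univ _), Finset.card_univ, Fintype.card_fin]
          omega
        obtain ⟨u, hu, v, hv, huv⟩ := Finset.one_lt_card.mp hcard
        simp only [Finset.mem_erase, Finset.mem_univ, and_true] at hu hv
        have hw : ∀ w, w ≠ b ∧ w ≠ a → {w} ∈ L := by
          rintro w ⟨hwb, hwa⟩
          apply hsing
          intro y hy hyL
          by_cases hya : y = a
          · exact ⟨b, by rw [hya]; exact hba, hwb.symm, hb⟩
          · exact ⟨a, Ne.symm hya, hwa.symm, ha⟩
        exact ⟨u, v, huv, hw u hu, hw v hv⟩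
    · push Not at h0
      refine ⟨⟨0, by omega⟩, ⟨1, by omega⟩, by simp, hsing _ ?_, hsing _ ?_⟩ <;>
      · intro y _ hy
        exact absurd (h0 y) hy
end
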